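/- arXiv:1511.06099 — 4 statements merged into one kernel-verified Lean document; each statement's English description precedes it below -/
import Mathlib

section
/- There exists an absolute constant C > 0 such that for every integer n ≥ 2 and every ε ∈ [1/n, 1/30], there exists a randomized sketching scheme of size at most C·n·(log n)^C/ε bits for the class of weighted graphs on n vertices with integer edge weights in the range [1, n⁵], with the following 'for each' guarantee: for every such graph G and every subset S of its vertices, with probability at least 7/9 over the random seed, the estimate produced from the sketch lies in the interval [(1−Cε)·w(S,S̄), (1+Cε)·w(S,S̄)]. -/
open scoped Classical

/-- Weight of the cut `(S, S̄)` in a graph with natural-number edge weights. -/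
noncomputable def cutWn {n : ℕ} (w : Fin n → Fin n → ℕ) (S : Finset (Fin n)) : ℝ :=
  ∑ p ∈ Finset.univ.filter (fun p : Fin n × Fin n => p.1 ∈ S ∧ p.2 ∉ S),
    (w p.1 p.2 : ℝ)

/-!
Split the edges into dyadic weight classes and each class into `O(log n)` disjoint unions of
expanders: a clustering minimising (weight cut) + (entropy of the cluster volumes) / `O(log n)` has
expanding clusters and leaves at most half of the weight between clusters.

Let `T` be the set obtained from `S` by passing to the lighter side in each cluster. It has the
same cut as `S`, and by expansion `vol T ≤ O(log n) * cut`. Storing all weighted degrees gives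
`vol T` exactly, and the cut is `vol T` minus the weight inside `T`. To estimate the latter,
charge each edge to its endpoint of lower degree and store one random neighbour from each of `k`
equal blocks of the neighbours charged to a vertex. If `uv` is charged to `u`, then `deg u ^ 2 ≤
deg u * deg v`, so the variance is `O((vol T / k) ^ 2)`. Hence `k = O(log n / ε)` samples per
vertex bring the standard deviation below `ε * cut`, and Chebyshev's inequality concludes.
-/

section Probability

open Finset MeasureTheory ProbabilityTheory

theorem one_sub_sq_le_measureReal_abs_sub_integral_le {Ω : Type*} [MeasurableSpace Ω]
    {μ : Measure Ω} [IsProbabilityMeasure μ] {X : Ω → ℝ} (hX : MemLp X 2 μ) {σ c : ℝ} (hc : 0 < c)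
    (hvar : Var[X; μ] ≤ σ ^ 2 * μ[X] ^ 2) :
    1 - (σ / c) ^ 2 ≤ μ.real {ω | |X ω - μ[X]| ≤ c * |μ[X]|} := by
  set s := {ω | |X ω - μ[X]| ≤ c * |μ[X]|}
  rcases eq_or_ne μ[X] 0 with hm | hm
  · have hvar0 : Var[X; μ] = 0 := le_antisymm (by simpa [hm] using hvar) (variance_nonneg X μ)
    have hs : s =ᵐ[μ] Set.univ := by
      rw [Filter.eventuallyEq_univ]
      filter_upwards [ae_eq_integral_of_variance_eq_zero hX hvar0] with ω hω
      simp [s, hω, hm]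
    rw [measureReal_congr hs, probReal_univ]
    nlinarith [sq_nonneg (σ / c)]
  · have hpos : 0 < c * |μ[X]| := by positivity
    have hcompl : μ.real sᶜ ≤ (σ / c) ^ 2 := by
      calc μ.real sᶜ ≤ μ.real {ω | c * |μ[X]| ≤ |X ω - μ[X]|} :=
            measureReal_mono fun ω hω => (not_le.mp (show ¬ |X ω - μ[X]| ≤ c * |μ[X]| from hω)).le
        _ ≤ Var[X; μ] / (c * |μ[X]|) ^ 2 :=
            ENNReal.toReal_le_of_le_ofReal (div_nonneg (variance_nonneg X μ) (sq_nonneg _))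
              (meas_ge_le_variance_div_sq hX hpos)
        _ ≤ σ ^ 2 * μ[X] ^ 2 / (c * |μ[X]|) ^ 2 := by gcongr
        _ = (σ / c) ^ 2 := by rw [mul_pow, sq_abs]; field_simp
    have hunion := measureReal_union_le (μ := μ) s sᶜ
    rw [Set.union_compl_self, probReal_univ] at hunion
    linarith

section UniformLaw

variable {V : Type*} [MeasurableSpace V]

/-- The uniform law on `B`; the empty set gets the uniform law on all of `V`, so that the law is
always a probability measure. -/
noncomputable def uniformLaw (B : Finset V) : Measure V :=
  uniformOn (if B.Nonempty then (B : Set V) else Set.univ)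

variable [DiscreteMeasurableSpace V] [Finite V]

theorem integral_uniformLaw {B : Finset V} (hB : B.Nonempty) (f : V → ℝ) :
    ∫ v, f v ∂uniformLaw B = (#B : ℝ)⁻¹ * ∑ v ∈ B, f v := by
  rw [uniformLaw, if_pos hB, uniformOn, ProbabilityTheory.cond, integral_smul_measure,
    setIntegral_finset _ Integrable.of_finite.integrableOn]
  simp [Measure.real]

theorem card_mul_integral_uniformLaw (B : Finset V) (f : V → ℝ) :
    #B * ∫ v, f v ∂uniformLaw B = ∑ v ∈ B, f v := by
  rcases B.eq_empty_or_nonempty with rfl | hB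
  · simp
  · rw [integral_uniformLaw hB, mul_inv_cancel_left₀ (by simpa using hB.ne_empty)]

variable [Nonempty V]

instance (B : Finset V) : IsProbabilityMeasure (uniformLaw B) := by
  refine isProbabilityMeasure_uniformOn (Set.toFinite _) ?_
  split_ifs with hB
  exacts [hB, Set.univ_nonempty]

theorem variance_card_mul_uniformLaw_le (B : Finset V) {f : V → ℝ} (hf : 0 ≤ f) :
    Var[fun v => #B * f v; uniformLaw B] ≤ (#B - 1 : ℕ) * ∑ v ∈ B, f v ^ 2 := by
  rcases B.eq_empty_or_nonempty with rfl | hB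
  · simp [← Pi.zero_def]
  · have hsq : ∑ v ∈ B, f v ^ 2 ≤ (∑ v ∈ B, f v) ^ 2 :=
      sum_sq_le_sq_sum_of_nonneg fun v _ => hf v
    have hvar : #B ^ 2 * Var[f; uniformLaw B] = #B * ∑ v ∈ B, f v ^ 2 - (∑ v ∈ B, f v) ^ 2 := by
      rw [variance_eq_sub .of_discrete, ← card_mul_integral_uniformLaw B,
        ← card_mul_integral_uniformLaw B]
      simp only [Pi.pow_apply]
      ring
    rw [variance_const_mul, hvar, Nat.cast_pred hB.card_pos]
    linarith

end UniformLaw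

/-- The law of a random seed: independently for every index `i` and every set `B`, a uniformly
random element of `B`. A seed has to be drawn before the input is known, hence the coordinates for
all possible sets `B`. -/
noncomputable def seedLaw (ι V : Type*) [Fintype ι] [Fintype V] [MeasurableSpace V] :
    Measure (ι × Finset V → V) :=
  Measure.pi fun i => uniformLaw i.2

variable {V ι : Type*}

/-- The estimator of `∑ i, ∑ v ∈ B i, f i v` that reads each `f i` at a single random point
of `B i`. -/
noncomputable def sampledSum [Fintype ι] (B : ι → Finset V) (f : ι → V → ℝ)
    (ω : ι × Finset V → V) : ℝ :=
  ∑ i, #(B i) * f i (ω (i, B i))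

variable [Fintype V] [MeasurableSpace V] [DiscreteMeasurableSpace V] [Nonempty V] [Fintype ι]

instance : IsProbabilityMeasure (seedLaw ι V) := by
  unfold seedLaw
  infer_instance

variable (B : ι → Finset V) (f : ι → V → ℝ)

theorem integral_sampledSum : ∫ ω, sampledSum B f ω ∂seedLaw ι V = ∑ i, ∑ v ∈ B i, f i v := by
  unfold sampledSum seedLaw
  rw [integral_finsetSum _ fun _ _ => .of_finite]
  refine sum_congr rfl fun i _ => ?_
  rw [integral_const_mul, integral_comp_eval (μ := fun j : ι × Finset V => uniformLaw j.2)
    (i := (i, B i)) (f := f i) .of_discrete, card_mul_integral_uniformLaw]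

variable {f} in
theorem variance_sampledSum_le (hf : ∀ i, 0 ≤ f i) :
    Var[sampledSum B f; seedLaw ι V] ≤ ∑ i, (#(B i) - 1 : ℕ) * ∑ v ∈ B i, f i v ^ 2 := by
  let g : ι × Finset V → V → ℝ := fun j v => if j.2 = B j.1 then #(B j.1) * f j.1 v else 0
  have hg : sampledSum B f = ∑ j, fun ω => g j (ω j) := by
    ext ω
    simp [sampledSum, g, Fintype.sum_prod_type]
  rw [hg, seedLaw, variance_sum_pi fun _ => .of_discrete, Fintype.sum_prod_type]
  refine sum_le_sum fun i _ => ?_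
  rw [sum_eq_single (B i)]
  · simpa [g] using variance_card_mul_uniformLaw_le (B i) (hf i)
  · intro A _ hA
    simp [g, hA, ← Pi.zero_def]
  · simp

end Probability

section Encoding

open MeasureTheory

theorem exists_bit_sketch_of_card_le {Ω D I Q : Type*} [Finite Ω] [MeasurableSpace Ω]
    [MeasurableSingletonClass Ω] {μ : Measure Ω} [IsProbabilityMeasure μ] [Fintype D] [Nonempty D]
    {m : ℕ} (hD : Fintype.card D ≤ 2 ^ m) {est : Q → D → ℝ} {P : I → Prop}
    {good : I → Q → ℝ → Prop} {p : ℝ}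
    (h : ∀ w, P w → ∃ ske : Ω → D, ∀ q, p ≤ μ.real {ω | good w q (est q (ske ω))}) :
    ∃ (K : ℕ) (ρ : Fin K → ℝ) (ske : I → Fin K → Fin m → Bool)
      (est : Q → (Fin m → Bool) → Fin K → ℝ),
      (∀ r, 0 ≤ ρ r) ∧ ∑ r, ρ r = 1 ∧
      ∀ w, P w → ∀ q, p ≤ ∑ r with good w q (est q (ske w r) r), ρ r := by
  cases nonempty_fintype Ω
  obtain ⟨code⟩ : Nonempty (D ↪ (Fin m → Bool)) :=
    Function.Embedding.nonempty_of_card_le (by simpa using hD)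
  have hcode : Function.LeftInverse (Function.invFun code) code :=
    Function.leftInverse_invFun code.injective
  choose! ske hske using h
  let e := Fintype.equivFin Ω
  refine ⟨Fintype.card Ω, fun r => μ.real {e.symm r}, fun w r => code (ske w (e.symm r)),
    fun q b _ => est q (Function.invFun code b), fun _ => measureReal_nonneg, ?_,
    fun w hw q => (hske w hw q).trans_eq ?_⟩
  · rw [e.symm.sum_comp fun ω => μ.real {ω}, sum_measureReal_singleton]
    simp
  · simp only [hcode _, Finset.sum_filter]
    rw [e.symm.sum_comp fun ω => if good w q (est q (ske w ω)) then μ.real {ω} else 0,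
      ← Finset.sum_filter, sum_measureReal_singleton]
    simp

end Encoding

section CutWeight

open Finset

variable {V : Type*}

/-- The edges whose weight lies in the dyadic interval `[2 ^ i, 2 ^ (i + 1))`. -/
noncomputable def weightClass (w : V → V → ℕ) (i : ℕ) (u v : V) : ℕ :=
  if Nat.log 2 (w u v) = i then w u v else 0

theorem sum_weightClass {w : V → V → ℕ} {t : ℕ} {u v : V} (h : w u v < 2 ^ t) :
    ∑ i : Fin t, weightClass w i u v = w u v := by
  rcases eq_or_ne (w u v) 0 with hzero | hzero
  · simp [weightClass, hzero]
  · rw [sum_eq_single (⟨Nat.log 2 (w u v), Nat.log_lt_of_lt_pow hzero h⟩ : Fin t)]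
    · simp [weightClass]
    · intro i _ hi
      exact if_neg fun heq => hi (Fin.ext heq.symm)
    · simp

/-- The total weight of the ordered pairs in `S × T`. -/
def weightBetween (w : V → V → ℕ) (S T : Finset V) : ℕ :=
  ∑ u ∈ S, ∑ v ∈ T, w u v

theorem weightBetween_comm {w : V → V → ℕ} (hw : ∀ u v, w u v = w v u) (S T : Finset V) :
    weightBetween w S T = weightBetween w T S := by
  unfold weightBetween
  rw [sum_comm]
  simp only [hw]

theorem weightBetween_congr {w w' : V → V → ℕ} {S T : Finset V}
    (h : ∀ u ∈ S, ∀ v ∈ T, w u v = w' u v) : weightBetween w S T = weightBetween w' S T :=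
  sum_congr rfl fun u hu => sum_congr rfl (h u hu)

variable [Fintype V]

theorem weightBetween_eq_sum_ite (w : V → V → ℕ) (S T : Finset V) :
    weightBetween w S T = ∑ u, ∑ v, if u ∈ S ∧ v ∈ T then w u v else 0 := by
  simp only [weightBetween, ← sum_product', ← mem_product, univ_product_univ,
    sum_ite_mem, univ_inter]

/-- The weighted degree of `u`. -/
def weightedDegree (w : V → V → ℕ) (u : V) : ℕ :=
  ∑ v, w u v

/-- The volume of `S`: the sum of the weighted degrees of its vertices. -/
def weightedVol (w : V → V → ℕ) (S : Finset V) : ℕ :=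
  ∑ u ∈ S, weightedDegree w u

/-- The weight of the cut `(S, Sᶜ)`, with every edge counted once. -/
noncomputable def cutWeight (w : V → V → ℕ) (S : Finset V) : ℕ :=
  weightBetween w S Sᶜ

theorem cutWn_eq_cutWeight {n : ℕ} (w : Fin n → Fin n → ℕ) (S : Finset (Fin n)) :
    cutWn w S = cutWeight w S := by
  have hprod : ({p | p.1 ∈ S ∧ p.2 ∉ S} : Finset (Fin n × Fin n)) = S ×ˢ Sᶜ := by
    ext
    simp
  unfold cutWn cutWeight weightBetween
  rw [hprod, sum_product]
  push_cast
  congr!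

theorem cutWeight_sum {ι : Type*} (s : Finset ι) (w : ι → V → V → ℕ) (S : Finset V) :
    cutWeight (fun u v => ∑ i ∈ s, w i u v) S = ∑ i ∈ s, cutWeight (w i) S := by
  unfold cutWeight weightBetween
  rw [sum_comm (s := s)]
  exact sum_congr rfl fun _ _ => sum_comm

theorem weightedVol_eq_add_cutWeight (w : V → V → ℕ) (S : Finset V) :
    weightedVol w S = weightBetween w S S + cutWeight w S := by
  unfold weightedVol weightedDegree cutWeight weightBetween
  rw [← sum_add_distrib]
  exact sum_congr rfl fun u _ => (sum_add_sum_compl S (w u)).symm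

theorem weightedVol_mono_weight {w w' : V → V → ℕ} (h : ∀ u v, w u v ≤ w' u v) (S : Finset V) :
    weightedVol w S ≤ weightedVol w' S :=
  sum_le_sum fun u _ => sum_le_sum fun v _ => h u v

theorem weightedVol_mono_set (w : V → V → ℕ) {S T : Finset V} (h : S ⊆ T) :
    weightedVol w S ≤ weightedVol w T :=
  sum_le_sum_of_subset h

theorem weight_le_weightedVol_univ (w : V → V → ℕ) (u v : V) : w u v ≤ weightedVol w univ :=
  calc w u v ≤ weightedDegree w u :=
        single_le_sum (f := w u) (fun _ _ => Nat.zero_le _) (mem_univ v)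
    _ ≤ weightedVol w univ :=
        single_le_sum (f := weightedDegree w) (fun _ _ => Nat.zero_le _) (mem_univ u)

theorem cutWeight_eq_sum_clusters {w : V → V → ℕ} {c : V → V}
    (hloc : ∀ u v, w u v ≠ 0 → c u = c v) (S : Finset V) :
    cutWeight w S = ∑ x, weightBetween w {u ∈ S | c u = x} {u ∈ Sᶜ | c u = x} := by
  unfold cutWeight weightBetween
  rw [← sum_fiberwise S c]
  refine sum_congr rfl fun x _ => sum_congr rfl fun u hu => ?_
  obtain rfl := (mem_filter.mp hu).2
  exact (sum_filter_of_ne fun v _ hv => (hloc u v hv).symm).symm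

end CutWeight

section ExpanderDecomposition

open Finset

variable {V : Type*} [Fintype V]

/-- Every cluster `{u | c u = x}` is an expander relative to `w`-volumes, with inverse
conductance at most `β`: each way `S` of cutting it in two satisfies
`min (vol A) (vol B) ≤ β * w(A, B)`. -/
def IsExpanding (w : V → V → ℕ) (c : V → V) (β : ℝ) : Prop :=
  ∀ (S : Finset V) (x : V),
    (min (weightedVol w {u ∈ S | c u = x}) (weightedVol w {u ∈ Sᶜ | c u = x}) : ℝ) ≤
      β * weightBetween w {u ∈ S | c u = x} {u ∈ Sᶜ | c u = x}

/-- The edges inside the clusters of the colouring `c`. -/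
noncomputable def withinClusters (w : V → V → ℕ) (c : V → V) (u v : V) : ℕ :=
  if c u = c v then w u v else 0

/-- The edges joining different clusters of the colouring `c`. -/
noncomputable def acrossClusters (w : V → V → ℕ) (c : V → V) (u v : V) : ℕ :=
  if c u = c v then 0 else w u v

/-- `∑ vol K * log (vol K)` over the clusters `K` of `c`, distributed over the vertices. -/
noncomputable def clusterEntropy (w : V → V → ℕ) (c : V → V) : ℝ :=
  ∑ u, weightedDegree w u * Real.log (weightedVol w {v | c v = c u})

theorem log_natCast_mono {a b : ℕ} (h : a ≤ b) : Real.log a ≤ Real.log b := by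
  rcases a.eq_zero_or_pos with rfl | ha
  · simpa using Real.log_natCast_nonneg b
  · exact Real.log_le_log (by exact_mod_cast ha) (by exact_mod_cast h)

theorem clusterEntropy_nonneg (w : V → V → ℕ) (c : V → V) : 0 ≤ clusterEntropy w c :=
  sum_nonneg fun _ _ => mul_nonneg (Nat.cast_nonneg _) (Real.log_natCast_nonneg _)

theorem vol_acrossClusters_recolour_le {w : V → V → ℕ} (hw : ∀ u v, w u v = w v u) (c : V → V)
    (S : Finset V) (x y : V) :
    weightedVol (acrossClusters w ({u ∈ S | c u = x}.piecewise (fun _ => y) c)) univ ≤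
      weightedVol (acrossClusters w c) univ +
        2 * weightBetween w {u ∈ S | c u = x} {u ∈ Sᶜ | c u = x} := by
  set A : Finset V := {u ∈ S | c u = x} with hA
  set B : Finset V := {u ∈ Sᶜ | c u = x} with hB
  have hpair : ∀ u v, acrossClusters w (A.piecewise (fun _ => y) c) u v ≤
      acrossClusters w c u v +
        ((if u ∈ A ∧ v ∈ B then w u v else 0) + if u ∈ B ∧ v ∈ A then w u v else 0) := by
    intro u v
    simp only [acrossClusters, piecewise, hA, hB, mem_filter, mem_compl]
    grind
  calc _ ≤ _ := sum_le_sum fun u _ => sum_le_sum fun v _ => hpair u v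
    _ = weightedVol (acrossClusters w c) univ + (weightBetween w A B + weightBetween w B A) := by
      simp only [sum_add_distrib, ← weightBetween_eq_sum_ite]
      rfl
    _ = _ := by rw [weightBetween_comm hw B A, two_mul]

theorem cluster_recolour_of_mem {c : V → V} {y : V} (hy : ∀ u, c u ≠ y) {A : Finset V} {u : V}
    (hu : u ∈ A) :
    ({v | A.piecewise (fun _ => y) c v = A.piecewise (fun _ => y) c u} : Finset V) = A := by
  ext v
  by_cases hv : v ∈ A <;> simp [hu, hv, hy]

theorem cluster_recolour_subset_of_notMem {c : V → V} {y : V} (hy : ∀ u, c u ≠ y) {A : Finset V}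
    {u : V} (hu : u ∉ A) :
    ({v | A.piecewise (fun _ => y) c v = A.piecewise (fun _ => y) c u} : Finset V) ⊆
      ({v | c v = c u} : Finset V) := by
  intro v hv
  by_cases hvA : v ∈ A
  · simp [hu, hvA, (hy u).symm] at hv
  · simpa [hu, hvA] using hv

theorem clusterEntropy_recolour_le {w : V → V → ℕ} {c : V → V} {S : Finset V} {x y : V}
    (hy : ∀ u, c u ≠ y)
    (hAB : weightedVol w {u ∈ S | c u = x} ≤ weightedVol w {u ∈ Sᶜ | c u = x}) :
    clusterEntropy w ({u ∈ S | c u = x}.piecewise (fun _ => y) c) ≤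
      clusterEntropy w c - Real.log 2 * weightedVol w {u ∈ S | c u = x} := by
  set A : Finset V := {u ∈ S | c u = x} with hA
  set B : Finset V := {u ∈ Sᶜ | c u = x} with hB
  have hsplit : weightedVol w {u | c u = x} = weightedVol w A + weightedVol w B := by
    simp only [weightedVol, hA, hB, sum_filter]
    exact (sum_add_sum_compl S _).symm
  have hvertex : ∀ u, weightedDegree w u *
      Real.log (weightedVol w {v | A.piecewise (fun _ => y) c v = A.piecewise (fun _ => y) c u}) ≤
      weightedDegree w u * Real.log (weightedVol w {v | c v = c u}) -
        if u ∈ A then Real.log 2 * weightedDegree w u else 0 := by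
    intro u
    by_cases hu : u ∈ A
    · obtain hdeg | hdeg := (weightedDegree w u).eq_zero_or_pos
      · simp [hdeg]
      have hApos : 0 < weightedVol w A :=
        hdeg.trans_le (single_le_sum (f := weightedDegree w) (fun _ _ => Nat.zero_le _) hu)
      have htwo : 2 * weightedVol w A ≤ weightedVol w {v | c v = x} := by omega
      have hlog := log_natCast_mono htwo
      rw [Nat.cast_mul, Real.log_mul (by simp) (by positivity)] at hlog
      rw [cluster_recolour_of_mem hy hu, if_pos hu, (mem_filter.mp hu).2]
      push_cast at hlog
      nlinarith
    · rw [if_neg hu, sub_zero]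
      exact mul_le_mul_of_nonneg_left (log_natCast_mono
        (weightedVol_mono_set w (cluster_recolour_subset_of_notMem hy hu))) (Nat.cast_nonneg _)
  calc _ ≤ _ := sum_le_sum fun u _ => hvertex u
    _ = _ := by
      rw [sum_sub_distrib, sum_ite_mem, univ_inter, ← mul_sum, weightedVol, Nat.cast_sum]
      rfl

/-- The potential minimised by the decomposition: cutting a cluster in two pays for the edges cut
and gains in the entropy term. -/
noncomputable def clusteringPotential (w : V → V → ℕ) (M : ℝ) (c : V → V) : ℝ :=
  weightedVol (acrossClusters w c) univ + clusterEntropy w c / (2 * M)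

theorem two_mul_vol_acrossClusters_le_of_forall_potential_le {w : V → V → ℕ} {M : ℝ} (hM : 0 < M)
    (hvol : Real.log (weightedVol w univ) ≤ M) {c : V → V}
    (hmin : ∀ c', clusteringPotential w M c ≤ clusteringPotential w M c') :
    2 * weightedVol (acrossClusters w c) univ ≤ weightedVol w univ := by
  rcases isEmpty_or_nonempty V with hV | ⟨⟨v⟩⟩
  · simp [weightedVol]
  have hconst := hmin fun _ => v
  have hacross : weightedVol (acrossClusters w fun _ => v) univ = 0 := by
    simp [weightedVol, weightedDegree, acrossClusters]
  have hentropy : clusterEntropy w (fun _ => v) / (2 * M) ≤ weightedVol w univ / 2 := by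
    have : clusterEntropy w (fun _ => v) = weightedVol w univ * Real.log (weightedVol w univ) := by
      simp [clusterEntropy, weightedVol, sum_mul]
    rw [this, div_le_div_iff₀ (by positivity) (by positivity)]
    nlinarith [(Nat.cast_nonneg (weightedVol w univ) : (0 : ℝ) ≤ _)]
  have hnonneg := div_nonneg (clusterEntropy_nonneg w c) (by positivity : 0 ≤ 2 * M)
  unfold clusteringPotential at hconst
  rw [hacross, Nat.cast_zero] at hconst
  have : 2 * (weightedVol (acrossClusters w c) univ : ℝ) ≤ weightedVol w univ := by linarith
  exact_mod_cast this

theorem vol_le_of_forall_potential_le {w : V → V → ℕ} (hw : ∀ u v, w u v = w v u)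
    {M : ℝ} (hM : 0 < M) {c : V → V}
    (hmin : ∀ c', clusteringPotential w M c ≤ clusteringPotential w M c') {S : Finset V} {x y : V}
    (hy : ∀ u, c u ≠ y)
    (hAB : weightedVol w {u ∈ S | c u = x} ≤ weightedVol w {u ∈ Sᶜ | c u = x}) :
    (weightedVol w {u ∈ S | c u = x} : ℝ) ≤
      8 * M * weightBetween w {u ∈ S | c u = x} {u ∈ Sᶜ | c u = x} := by
  have hle := hmin ({u ∈ S | c u = x}.piecewise (fun _ => y) c)
  have hacross := (Nat.cast_le (α := ℝ)).mpr (vol_acrossClusters_recolour_le hw c S x y)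
  have hentropy := div_le_div_of_nonneg_right (clusterEntropy_recolour_le hy hAB)
    (by positivity : 0 ≤ 2 * M)
  rw [sub_div] at hentropy
  have hgain : Real.log 2 * weightedVol w {u ∈ S | c u = x} / (2 * M) ≤
      2 * weightBetween w {u ∈ S | c u = x} {u ∈ Sᶜ | c u = x} := by
    unfold clusteringPotential at hle
    push_cast at hacross
    linarith
  rw [div_le_iff₀ (by positivity)] at hgain
  nlinarith [Real.log_two_gt_d9,
    (Nat.cast_nonneg (weightedVol w {u ∈ S | c u = x}) : (0 : ℝ) ≤ _)]

theorem isExpanding_of_forall_potential_le {w : V → V → ℕ} (hw : ∀ u v, w u v = w v u)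
    {M : ℝ} (hM : 0 < M) {c : V → V}
    (hmin : ∀ c', clusteringPotential w M c ≤ clusteringPotential w M c') :
    IsExpanding w c (8 * M) := by
  intro S x
  set A : Finset V := {u ∈ S | c u = x}
  set B : Finset V := {u ∈ Sᶜ | c u = x}
  have hnonneg : 0 ≤ 8 * M * weightBetween w A B := by positivity
  rcases A.eq_empty_or_nonempty with hempty | ⟨a, ha⟩
  · exact min_le_of_left_le (by simpa [hempty, weightedVol] using hnonneg)
  rcases B.eq_empty_or_nonempty with hempty | ⟨b, hb⟩
  · exact min_le_of_right_le (by simpa [hempty, weightedVol] using hnonneg)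
  obtain ⟨y, hy⟩ : ∃ y, ∀ u, c u ≠ y := by
    by_contra! hsurj
    have hab : a = b := Finite.injective_iff_surjective.mpr hsurj
      ((mem_filter.mp ha).2.trans (mem_filter.mp hb).2.symm)
    exact mem_compl.mp (mem_filter.mp hb).1 (hab ▸ (mem_filter.mp ha).1)
  rcases le_total (weightedVol w A) (weightedVol w B) with hAB | hBA
  · exact min_le_of_left_le (vol_le_of_forall_potential_le hw hM hmin hy hAB)
  · have := vol_le_of_forall_potential_le hw hM hmin (S := Sᶜ) hy (by rwa [compl_compl])
    rw [compl_compl, weightBetween_comm hw] at this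
    exact min_le_of_right_le this

theorem exists_isExpanding {w : V → V → ℕ} (hw : ∀ u v, w u v = w v u) {M : ℝ} (hM : 0 < M)
    (hvol : Real.log (weightedVol w univ) ≤ M) :
    ∃ c : V → V, IsExpanding w c (8 * M) ∧
      2 * weightedVol (acrossClusters w c) univ ≤ weightedVol w univ := by
  have : Nonempty (V → V) := ⟨id⟩
  obtain ⟨c, hmin⟩ := Finite.exists_min (clusteringPotential w M)
  exact ⟨c, isExpanding_of_forall_potential_le hw hM hmin,
    two_mul_vol_acrossClusters_le_of_forall_potential_le hM hvol hmin⟩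

theorem IsExpanding.within {w : V → V → ℕ} {c : V → V} {β : ℝ} (h : IsExpanding w c β) :
    IsExpanding (withinClusters w c) c β := by
  intro S x
  have hbetween : weightBetween (withinClusters w c) {u ∈ S | c u = x} {u ∈ Sᶜ | c u = x} =
      weightBetween w {u ∈ S | c u = x} {u ∈ Sᶜ | c u = x} :=
    weightBetween_congr fun u hu v hv =>
      if_pos ((mem_filter.mp hu).2.trans (mem_filter.mp hv).2.symm)
  rw [hbetween]
  refine le_trans ?_ (h S x)
  have hle : ∀ u v, withinClusters w c u v ≤ w u v := by
    intro u v
    unfold withinClusters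
    split_ifs <;> simp
  exact min_le_min (Nat.cast_le.mpr (weightedVol_mono_weight hle _))
    (Nat.cast_le.mpr (weightedVol_mono_weight hle _))

/-- A disjoint union of expanders: no edge leaves a cluster of `c` and every cluster expands. -/
structure IsExpanderUnion (w : V → V → ℕ) (c : V → V) (β : ℝ) : Prop where
  symm : ∀ u v, w u v = w v u
  eq_of_ne_zero : ∀ u v, w u v ≠ 0 → c u = c v
  isExpanding : IsExpanding w c β

theorem IsExpanding.isExpanderUnion_within {w : V → V → ℕ} (hw : ∀ u v, w u v = w v u)
    {c : V → V} {β : ℝ} (h : IsExpanding w c β) : IsExpanderUnion (withinClusters w c) c β where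
  symm u v := by simp only [withinClusters, hw u v, eq_comm]
  eq_of_ne_zero u v huv := by_contra fun hne => huv (if_neg hne)
  isExpanding := h.within

theorem exists_expander_decomposition (s : ℕ) {L : ℕ} (hs : s ≤ L) {w : V → V → ℕ}
    (hw : ∀ u v, w u v = w v u) (hvol : weightedVol w univ < 2 ^ s) :
    ∃ (p : Fin s → V → V → ℕ) (c : Fin s → V → V),
      (∀ i, IsExpanderUnion (p i) (c i) (8 * L)) ∧
      (∀ i u v, p i u v = 0 ∨ p i u v = w u v) ∧ ∀ u v, ∑ i, p i u v = w u v := by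
  induction s generalizing w with
  | zero =>
    have hzero : ∀ u v, w u v = 0 := by
      simpa [weightedVol, weightedDegree] using hvol
    exact ⟨finZeroElim, finZeroElim, finZeroElim, finZeroElim, fun u v => by simp [hzero]⟩
  | succ s ih =>
    have hlog : Real.log (weightedVol w univ) ≤ L := by
      calc Real.log (weightedVol w univ) ≤ Real.log (2 ^ (s + 1) : ℕ) := log_natCast_mono hvol.le
        _ = (s + 1 : ℕ) * Real.log 2 := by rw [Nat.cast_pow, Real.log_pow, Nat.cast_ofNat]
        _ ≤ (s + 1 : ℕ) * 1 := by gcongr; linarith [Real.log_two_lt_d9]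
        _ ≤ L := by simpa using (Nat.cast_le (α := ℝ)).mpr hs
    obtain ⟨c₀, hexp, hhalf⟩ := exists_isExpanding hw (by positivity [show 0 < L by omega]) hlog
    obtain ⟨p, c, hp, hsub, hsum⟩ := ih (Nat.le_of_succ_le hs) (w := acrossClusters w c₀)
      (fun u v => by simp only [acrossClusters, hw u v, eq_comm]) (by rw [pow_succ] at hvol; omega)
    refine ⟨Fin.cons (withinClusters w c₀) p, Fin.cons c₀ c,
      Fin.cases (hexp.isExpanderUnion_within hw) hp, fun i u v => ?_, fun u v => ?_⟩
    · refine Fin.cases ?_ (fun i => ?_) i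
      · simp only [Fin.cons_zero, withinClusters]
        split_ifs <;> simp
      · have := hsub i u v
        simp only [Fin.cons_succ, acrossClusters] at this ⊢
        grind
    · rw [Fin.sum_univ_succ]
      simp only [Fin.cons_zero, Fin.cons_succ, hsum, withinClusters, acrossClusters]
      split_ifs <;> simp

theorem exists_dyadic_expander_decomposition {t : ℕ} {w : V → V → ℕ} (hw : ∀ u v, w u v = w v u)
    (hvol : weightedVol w univ < 2 ^ t) :
    ∃ (p : Fin t × Fin t → V → V → ℕ) (c : Fin t × Fin t → V → V),
      (∀ i, IsExpanderUnion (p i) (c i) (8 * t)) ∧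
      (∀ i u v, p i u v ≠ 0 → Nat.log 2 (p i u v) = i.1) ∧ ∀ u v, ∑ i, p i u v = w u v := by
  have hle : ∀ i u v, weightClass w i u v ≤ w u v := by
    intro i u v
    unfold weightClass
    split_ifs <;> simp
  have hclass (i : Fin t) := exists_expander_decomposition t le_rfl (w := weightClass w i)
    (fun u v => by simp only [weightClass, hw u v])
    ((weightedVol_mono_weight (hle i) univ).trans_lt hvol)
  choose p c hp hsub hsum using hclass
  refine ⟨fun i => p i.1 i.2, fun i => c i.1 i.2, fun i => hp i.1 i.2, fun i u v hne => ?_,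
    fun u v => ?_⟩
  · have hmem := (hsub i.1 i.2 u v).resolve_left hne
    have hlog : Nat.log 2 (w u v) = i.1 := by
      by_contra hlog
      exact hne (hmem.trans (if_neg hlog))
    change Nat.log 2 (p i.1 i.2 u v) = i.1
    rw [hmem, weightClass, if_pos hlog, hlog]
  · simp only [Fintype.sum_prod_type, hsum]
    exact sum_weightClass ((weight_le_weightedVol_univ w u v).trans_lt hvol)

end ExpanderDecomposition

section LightSide

open Finset

variable {V : Type*} [Fintype V]

/-- The set obtained from `S` by replacing `S` with `Sᶜ` inside each cluster of `c` where that part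
has the smaller `D`-volume. It crosses the edges inside clusters exactly as `S` does. -/
noncomputable def lightSide (c : V → V) (D : V → ℕ) (S : Finset V) : Finset V :=
  {u | u ∈ S ↔ ∑ v ∈ S with c v = c u, D v ≤ ∑ v ∈ Sᶜ with c v = c u, D v}

theorem lightSide_cluster_cases (c : V → V) (D : V → ℕ) (S : Finset V) (x : V) :
    (∑ v ∈ S with c v = x, D v ≤ ∑ v ∈ Sᶜ with c v = x, D v ∧
      ({u ∈ lightSide c D S | c u = x} : Finset V) = {u ∈ S | c u = x} ∧
      ({u ∈ (lightSide c D S)ᶜ | c u = x} : Finset V) = {u ∈ Sᶜ | c u = x}) ∨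
    (∑ v ∈ Sᶜ with c v = x, D v ≤ ∑ v ∈ S with c v = x, D v ∧
      ({u ∈ lightSide c D S | c u = x} : Finset V) = {u ∈ Sᶜ | c u = x} ∧
      ({u ∈ (lightSide c D S)ᶜ | c u = x} : Finset V) = {u ∈ S | c u = x}) := by
  by_cases hle : ∑ v ∈ S with c v = x, D v ≤ ∑ v ∈ Sᶜ with c v = x, D v
  · refine .inl ⟨hle, ?_, ?_⟩ <;>
    · ext u
      rcases eq_or_ne (c u) x with rfl | hu <;> simp [lightSide, *]
  · refine .inr ⟨(not_le.mp hle).le, ?_, ?_⟩ <;>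
    · ext u
      rcases eq_or_ne (c u) x with rfl | hu <;> simp [lightSide, *]

namespace IsExpanderUnion

variable {w : V → V → ℕ} {c : V → V} {β : ℝ}

theorem cutWeight_lightSide (h : IsExpanderUnion w c β) (D : V → ℕ) (S : Finset V) :
    cutWeight w (lightSide c D S) = cutWeight w S := by
  rw [cutWeight_eq_sum_clusters h.eq_of_ne_zero, cutWeight_eq_sum_clusters h.eq_of_ne_zero]
  refine sum_congr rfl fun x _ => ?_
  rcases lightSide_cluster_cases c D S x with ⟨-, hT, hTc⟩ | ⟨-, hT, hTc⟩
  · rw [hT, hTc]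
  · rw [hT, hTc, weightBetween_comm h.symm]

theorem weightedVol_lightSide_le (h : IsExpanderUnion w c β) (S : Finset V) :
    (weightedVol w (lightSide c (weightedDegree w) S) : ℝ) ≤ β * cutWeight w S := by
  set T := lightSide c (weightedDegree w) S
  have hcluster : ∀ x, (weightedVol w {u ∈ T | c u = x} : ℝ) ≤
      β * weightBetween w {u ∈ S | c u = x} {u ∈ Sᶜ | c u = x} := by
    intro x
    refine le_trans (le_min ?_ ?_) (h.isExpanding S x) <;> rw [Nat.cast_le] <;>
      rcases lightSide_cluster_cases c (weightedDegree w) S x with ⟨hle, hT, -⟩ | ⟨hle, hT, -⟩ <;>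
      rw [hT]
    exacts [hle, hle]
  calc (weightedVol w T : ℝ) = ∑ x, (weightedVol w {u ∈ T | c u = x} : ℝ) := by
        rw [weightedVol, ← sum_fiberwise T c, Nat.cast_sum]
        rfl
    _ ≤ ∑ x, β * weightBetween w {u ∈ S | c u = x} {u ∈ Sᶜ | c u = x} :=
        sum_le_sum fun x _ => hcluster x
    _ = β * cutWeight w S := by
        rw [cutWeight_eq_sum_clusters h.eq_of_ne_zero, Nat.cast_sum, mul_sum]

end IsExpanderUnion

end LightSide

section Charge

open Finset

theorem exists_balanced_colouring {V : Type*} {k : ℕ} (hk : 0 < k) (N : Finset V) :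
    ∃ b : V → Fin k, ∀ j, k * (#{v ∈ N | b v = j} - 1) ≤ #N := by
  induction N using Finset.induction_on with
  | empty => exact ⟨fun _ => ⟨0, hk⟩, by simp⟩
  | insert a N ha ih =>
    obtain ⟨b, hb⟩ := ih
    obtain ⟨j₀, -, hj₀⟩ : ∃ j ∈ univ, k * #{v ∈ N | b v = j} ≤ #N := by
      refine exists_le_of_sum_le ⟨⟨0, hk⟩, mem_univ _⟩ ?_
      rw [← mul_sum, sum_card_fiberwise_eq_card_filter]
      simp
    refine ⟨Function.update b a j₀, fun j => ?_⟩
    have hold : ({v ∈ N | Function.update b a j₀ v = j} : Finset V) = {v ∈ N | b v = j} :=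
      filter_congr fun v hv => by rw [Function.update_of_ne (ne_of_mem_of_not_mem hv ha)]
    rw [filter_insert, hold, card_insert_of_notMem ha, Function.update_self]
    split_ifs with hj
    · subst hj
      rw [card_insert_of_notMem (by simp [ha]), Nat.add_sub_cancel]
      omega
    · exact (hb j).trans (Nat.le_succ _)

variable {V : Type*} [Fintype V]

/-- The unweighted degree of `u`. -/
noncomputable def neighborCount (w : V → V → ℕ) (u : V) : ℕ :=
  #{v | w u v ≠ 0}

/-- The share of the edge `uv` (counted in both directions) that is charged to `u`: the endpoint
with fewer neighbours pays, and ties are split. -/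
noncomputable def charge (w : V → V → ℕ) (u v : V) : ℕ :=
  if neighborCount w u < neighborCount w v then 2 * w u v
  else if neighborCount w u = neighborCount w v then w u v else 0

theorem charge_add_charge_comm {w : V → V → ℕ} (hw : ∀ u v, w u v = w v u) (u v : V) :
    charge w u v + charge w v u = 2 * w u v := by
  unfold charge
  rw [hw v u]
  split_ifs <;> omega

theorem charge_le (w : V → V → ℕ) (u v : V) : charge w u v ≤ 2 * w u v := by
  unfold charge
  split_ifs <;> omega

theorem neighborCount_le_of_charge_ne_zero {w : V → V → ℕ} {u v : V} (h : charge w u v ≠ 0) :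
    neighborCount w u ≤ neighborCount w v := by
  unfold charge at h
  split_ifs at h <;> omega

theorem sum_charge {w : V → V → ℕ} (hw : ∀ u v, w u v = w v u) (T : Finset V) :
    ∑ u ∈ T, ∑ v ∈ T, charge w u v = weightBetween w T T := by
  have hdouble : ∑ u ∈ T, ∑ v ∈ T, charge w u v + ∑ u ∈ T, ∑ v ∈ T, charge w u v =
      2 * weightBetween w T T := by
    nth_rw 2 [sum_comm]
    simp only [← sum_add_distrib, charge_add_charge_comm hw, weightBetween, mul_sum]
  omega

/-- The neighbours `v` for which at least half of the edge `uv` is charged to `u`. -/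
noncomputable def chargedNeighbors (w : V → V → ℕ) (u : V) : Finset V :=
  {v | charge w u v ≠ 0}

theorem card_chargedNeighbors_le (w : V → V → ℕ) (u : V) :
    #(chargedNeighbors w u) ≤ neighborCount w u := by
  refine card_le_card fun v hv => ?_
  have := charge_le w u v
  simp only [chargedNeighbors, mem_filter_univ] at hv ⊢
  omega

theorem two_pow_mul_neighborCount_le {w : V → V → ℕ} {i : ℕ}
    (hi : ∀ u v, w u v ≠ 0 → Nat.log 2 (w u v) = i) (u : V) :
    2 ^ i * neighborCount w u ≤ weightedDegree w u := by
  rw [mul_comm, ← smul_eq_mul, neighborCount]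
  refine (card_nsmul_le_sum _ (w u) _ fun v hv => ?_).trans (sum_le_sum_of_subset (subset_univ _))
  have hne := (mem_filter.mp hv).2
  exact hi u v hne ▸ Nat.pow_log_le_self 2 hne

theorem neighborCount_sq_mul_charge_sq_le {w : V → V → ℕ} {i : ℕ}
    (hi : ∀ u v, w u v ≠ 0 → Nat.log 2 (w u v) = i) (u v : V) :
    neighborCount w u ^ 2 * charge w u v ^ 2 ≤ 16 * weightedDegree w u * weightedDegree w v := by
  rcases eq_or_ne (charge w u v) 0 with hzero | hne
  · simp [hzero]
  have hcharge : charge w u v ≤ 4 * 2 ^ i := by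
    have hlt := Nat.lt_pow_succ_log_self one_lt_two (w u v)
    have hle := charge_le w u v
    rw [hi u v (by omega), pow_succ] at hlt
    omega
  calc neighborCount w u ^ 2 * charge w u v ^ 2
      ≤ (neighborCount w u * neighborCount w v) * (4 * 2 ^ i) ^ 2 := by
        rw [sq (neighborCount w u)]
        gcongr
        exact neighborCount_le_of_charge_ne_zero hne
    _ = 16 * (2 ^ i * neighborCount w u) * (2 ^ i * neighborCount w v) := by ring
    _ ≤ 16 * weightedDegree w u * weightedDegree w v := by
        gcongr <;> exact two_pow_mul_neighborCount_le hi _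

/-- The `j`-th block of the neighbours charging `u`, for a colouring `b` of them. -/
noncomputable def chargeBlock {k : ℕ} (w : V → V → ℕ) (b : V → V → Fin k) (u : V) (j : Fin k) :
    Finset V :=
  {v ∈ chargedNeighbors w u | b u v = j}

/-- The charges of the edges inside `T`. -/
noncomputable def innerCharge (w : V → V → ℕ) (T : Finset V) (u v : V) : ℕ :=
  if u ∈ T ∧ v ∈ T then charge w u v else 0

theorem sum_chargeBlock {M : Type*} [AddCommMonoid M] {k : ℕ} (w : V → V → ℕ) (b : V → V → Fin k)
    (u : V) {f : V → M} (hf : ∀ v, charge w u v = 0 → f v = 0) :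
    ∑ j, ∑ v ∈ chargeBlock w b u j, f v = ∑ v, f v := by
  simp only [chargeBlock]
  rw [sum_fiberwise]
  exact sum_filter_of_ne fun v _ hv hzero => hv (hf v hzero)

theorem sum_innerCharge {k : ℕ} {w : V → V → ℕ} (hw : ∀ u v, w u v = w v u) (b : V → V → Fin k)
    (T : Finset V) :
    ∑ u, ∑ j, ∑ v ∈ chargeBlock w b u j, innerCharge w T u v = weightBetween w T T := by
  rw [← sum_charge hw T, ← weightBetween, weightBetween_eq_sum_ite]
  exact sum_congr rfl fun u _ => sum_chargeBlock w b u fun v hv => by simp [innerCharge, hv]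

theorem sq_mul_le_sq_of_mul_le {k q m : ℕ} (h : k * q ≤ m) : k ^ 2 * q ≤ m ^ 2 :=
  calc k ^ 2 * q ≤ k ^ 2 * q ^ 2 := by gcongr; exact Nat.le_self_pow two_ne_zero q
    _ = (k * q) ^ 2 := (mul_pow _ _ _).symm
    _ ≤ m ^ 2 := by gcongr

theorem sum_innerCharge_sq_le {k : ℕ} {w : V → V → ℕ} {i : ℕ}
    (hi : ∀ u v, w u v ≠ 0 → Nat.log 2 (w u v) = i) {b : V → V → Fin k}
    (hb : ∀ u j, k * (#(chargeBlock w b u j) - 1) ≤ #(chargedNeighbors w u)) (T : Finset V) :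
    k ^ 2 * ∑ u, ∑ j, (#(chargeBlock w b u j) - 1) *
      ∑ v ∈ chargeBlock w b u j, innerCharge w T u v ^ 2 ≤ 16 * weightedVol w T ^ 2 := by
  have hterm : ∀ u v, neighborCount w u ^ 2 * innerCharge w T u v ^ 2 ≤
      if u ∈ T ∧ v ∈ T then 16 * weightedDegree w u * weightedDegree w v else 0 := by
    intro u v
    unfold innerCharge
    split_ifs
    · exact neighborCount_sq_mul_charge_sq_le hi u v
    · simp
  calc _ = ∑ u, ∑ j, k ^ 2 * (#(chargeBlock w b u j) - 1) *
        ∑ v ∈ chargeBlock w b u j, innerCharge w T u v ^ 2 := by simp only [mul_sum, mul_assoc]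
    _ ≤ ∑ u, ∑ j, neighborCount w u ^ 2 * ∑ v ∈ chargeBlock w b u j, innerCharge w T u v ^ 2 := by
        gcongr with u _ j _
        exact sq_mul_le_sq_of_mul_le ((hb u j).trans (card_chargedNeighbors_le w u))
    _ = ∑ u, ∑ v, neighborCount w u ^ 2 * innerCharge w T u v ^ 2 := by
        simp only [← mul_sum]
        refine sum_congr rfl fun u _ => ?_
        rw [sum_chargeBlock w b u fun v hv => by simp [innerCharge, hv]]
    _ ≤ ∑ u, ∑ v, if u ∈ T ∧ v ∈ T then 16 * weightedDegree w u * weightedDegree w v else 0 :=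
        sum_le_sum fun u _ => sum_le_sum fun v _ => hterm u v
    _ = 16 * weightedVol w T ^ 2 := by
        rw [← weightBetween_eq_sum_ite, weightBetween, sq, weightedVol, sum_mul_sum]
        simp only [mul_sum, mul_assoc]

end Charge

section Estimate

open Finset MeasureTheory ProbabilityTheory

variable {V : Type*} [Fintype V] {k : ℕ}

/-- The cut estimate computed from what is stored about one piece: its clusters `c`, its weighted
degrees `D`, and for every vertex `u` and block `j` a neighbour `(s u j).1` with a rescaled charge
`(s u j).2`. The volume of the light side `T` is exact, and the weight inside `T` is estimated by
the samples that hit `T`. -/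
noncomputable def pieceEstimate (c : V → V) (D : V → ℕ) (s : V → Fin k → V × ℕ) (S : Finset V) :
    ℝ :=
  ∑ u ∈ lightSide c D S, (D u : ℝ) -
    ∑ u ∈ lightSide c D S, ∑ j, if (s u j).1 ∈ lightSide c D S then ((s u j).2 : ℝ) else 0

/-- The neighbour in the `j`-th block of `u` picked by the seed `ω`, and its charge scaled up by
the size of the block. -/
noncomputable def chargeSample (w : V → V → ℕ) (b : V → V → Fin k) (ω : V → Fin k → Finset V → V)
    (u : V) (j : Fin k) : V × ℕ :=
  (ω u j (chargeBlock w b u j),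
    #(chargeBlock w b u j) * charge w u (ω u j (chargeBlock w b u j)))

variable {P : Type*} [Fintype P] (p : P → V → V → ℕ) (c : P → V → V) (b : P → V → V → Fin k)

/-- The estimate of the cut weight of the sum of the pieces `p i` from the seed `ω`. -/
noncomputable def sketchEstimate (S : Finset V) (ω : (P × V × Fin k) × Finset V → V) : ℝ :=
  ∑ i, pieceEstimate (c i) (weightedDegree (p i))
    (chargeSample (p i) (b i) fun u j B => ω ((i, u, j), B)) S

theorem sketchEstimate_eq (S : Finset V) (ω : (P × V × Fin k) × Finset V → V) :
    sketchEstimate p c b S ω =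
      ∑ i, (weightedVol (p i) (lightSide (c i) (weightedDegree (p i)) S) : ℝ) -
        sampledSum (fun l => chargeBlock (p l.1) (b l.1) l.2.1 l.2.2)
          (fun l v => innerCharge (p l.1) (lightSide (c l.1) (weightedDegree (p l.1)) S) l.2.1 v)
          ω := by
  simp only [sketchEstimate, pieceEstimate, sampledSum, Fintype.sum_prod_type, sum_sub_distrib,
    weightedVol, Nat.cast_sum, chargeSample, innerCharge]
  congr 1
  refine sum_congr rfl fun i _ => sum_subset_zero_on_sdiff (subset_univ _)
    (fun u hu => ?_) fun u hu => ?_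
  · simp [(mem_sdiff.mp hu).2]
  · simp [hu]

variable {p c b}

theorem integral_sketchEstimate [Nonempty V] [MeasurableSpace V] [DiscreteMeasurableSpace V]
    {β : ℝ} (hp : ∀ i, IsExpanderUnion (p i) (c i) β) (S : Finset V) :
    ∫ ω, sketchEstimate p c b S ω ∂seedLaw (P × V × Fin k) V = ∑ i, cutWeight (p i) S := by
  simp only [sketchEstimate_eq]
  rw [integral_sub (integrable_const _) .of_finite, integral_sampledSum, integral_const,
    probReal_univ, one_smul]
  simp only [Fintype.sum_prod_type, ← Nat.cast_sum]
  rw [sub_eq_iff_eq_add]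
  norm_cast
  rw [← sum_add_distrib]
  refine sum_congr rfl fun i _ => ?_
  rw [sum_innerCharge (hp i).symm, weightedVol_eq_add_cutWeight, (hp i).cutWeight_lightSide,
    add_comm]

theorem variance_sketchEstimate_le [Nonempty V] [MeasurableSpace V] [DiscreteMeasurableSpace V]
    {β : ℝ} (hp : ∀ i, IsExpanderUnion (p i) (c i) β) {e : P → ℕ}
    (he : ∀ i u v, p i u v ≠ 0 → Nat.log 2 (p i u v) = e i) (hk : 0 < k)
    (hb : ∀ i u j, k * (#(chargeBlock (p i) (b i) u j) - 1) ≤ #(chargedNeighbors (p i) u))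
    (S : Finset V) :
    Var[sketchEstimate p c b S; seedLaw (P × V × Fin k) V] ≤
      (4 * β / k) ^ 2 * (∑ i, cutWeight (p i) S : ℕ) ^ 2 := by
  have hpiece : ∀ i, ((∑ u, ∑ j, (#(chargeBlock (p i) (b i) u j) - 1) *
      ∑ v ∈ chargeBlock (p i) (b i) u j,
        innerCharge (p i) (lightSide (c i) (weightedDegree (p i)) S) u v ^ 2 : ℕ) : ℝ) ≤
      (4 * β / k * cutWeight (p i) S) ^ 2 := by
    intro i
    have hle := (Nat.cast_le (α := ℝ)).mpr (sum_innerCharge_sq_le (he i) (hb i)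
      (lightSide (c i) (weightedDegree (p i)) S))
    rw [Nat.cast_mul, Nat.cast_mul, Nat.cast_pow, Nat.cast_pow,
      ← le_div_iff₀' (by positivity)] at hle
    refine hle.trans ?_
    calc _ ≤ ((16 : ℕ) : ℝ) * (β * cutWeight (p i) S) ^ 2 / k ^ 2 := by
          gcongr
          exact (hp i).weightedVol_lightSide_le S
      _ = _ := by push_cast; ring
  have hsum : sketchEstimate p c b S = fun ω => _ - sampledSum _ _ ω :=
    funext (sketchEstimate_eq p c b S)
  rw [hsum, variance_const_sub AEStronglyMeasurable.of_discrete]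
  calc _ ≤ _ := variance_sampledSum_le _ fun _ _ => Nat.cast_nonneg _
    _ ≤ ∑ i, (4 * β / k * cutWeight (p i) S) ^ 2 := by
      rw [Fintype.sum_prod_type]
      refine sum_le_sum fun i _ => le_of_eq_of_le ?_ (hpiece i)
      rw [Fintype.sum_prod_type]
      push_cast
      rfl
    _ ≤ _ := by
      simp only [mul_pow, ← mul_sum, Nat.cast_sum]
      gcongr
      exact sum_sq_le_sq_sum_of_nonneg fun _ _ => Nat.cast_nonneg _

end Estimate

section Sketch

open Finset

variable {V : Type*} [Fintype V]

theorem exists_sketchEstimate_concentrated [Nonempty V] [MeasurableSpace V]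
    [DiscreteMeasurableSpace V] {t k : ℕ} (hk : 0 < k) {δ : ℝ} (hδ : 0 < δ) {w : V → V → ℕ}
    (hw : ∀ u v, w u v = w v u) (hvol : weightedVol w univ < 2 ^ t) :
    ∃ (p : Fin t × Fin t → V → V → ℕ) (c : Fin t × Fin t → V → V)
      (b : Fin t × Fin t → V → V → Fin k), (∀ i u v, p i u v ≤ w u v) ∧
      ∀ S, 1 - (32 * t / (k * δ)) ^ 2 ≤ (seedLaw ((Fin t × Fin t) × V × Fin k) V).real
        {ω | |sketchEstimate p c b S ω - cutWeight w S| ≤ δ * cutWeight w S} := by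
  obtain ⟨p, c, hp, hlog, hsum⟩ := exists_dyadic_expander_decomposition hw hvol
  choose b hb using fun i u => exists_balanced_colouring hk (chargedNeighbors (p i) u)
  refine ⟨p, c, b, fun i u v => ?_, fun S => ?_⟩
  · rw [← hsum]
    exact single_le_sum (f := fun i => p i u v) (fun _ _ => Nat.zero_le _) (mem_univ i)
  have hcut : ∑ i, cutWeight (p i) S = cutWeight w S := by
    rw [← cutWeight_sum]
    simp only [hsum]
  have hmean := integral_sketchEstimate (b := b) hp S
  have hvar := variance_sketchEstimate_le hp hlog hk hb S
  rw [hcut] at hmean hvar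
  have hcheb := one_sub_sq_le_measureReal_abs_sub_integral_le (.of_discrete) hδ
    (hvar.trans_eq (by rw [hmean]))
  rw [hmean, abs_of_nonneg (Nat.cast_nonneg _)] at hcheb
  convert hcheb using 3
  ring

/-- What is stored about one piece, all numbers being below `N`: the clusters, the weighted degrees,
and one sample per vertex and block (see `pieceEstimate`). -/
abbrev PieceSketch (V : Type*) (k N : ℕ) : Type _ :=
  (V → V) × (V → Fin N) × (V → Fin k → V × Fin N)

theorem card_pieceSketch_family_le {k t : ℕ} (hk : 0 < k) (hV : Fintype.card V ≤ 2 ^ t) :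
    Fintype.card (Fin t × Fin t → PieceSketch V k (2 ^ t)) ≤
      2 ^ (4 * Fintype.card V * k * t ^ 3) := by
  simp only [Fintype.card_fun, Fintype.card_prod, Fintype.card_fin]
  set n := Fintype.card V
  calc (n ^ n * ((2 ^ t) ^ n * ((n * 2 ^ t) ^ k) ^ n)) ^ (t * t)
      ≤ ((2 ^ t) ^ n * ((2 ^ t) ^ n * ((2 ^ t * 2 ^ t) ^ k) ^ n)) ^ (t * t) := by gcongr
    _ = 2 ^ ((2 * n + 2 * n * k) * t ^ 3) := by ring
    _ ≤ 2 ^ (4 * n * k * t ^ 3) := by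
      gcongr
      · norm_num
      · nlinarith [Nat.le_mul_of_pos_right n hk]

variable {P : Type*} [Fintype P] {k N : ℕ}

/-- The estimate of the cut weight of `S` read off the stored data alone. -/
noncomputable def decodedEstimate (S : Finset V) (d : P → PieceSketch V k N) : ℝ :=
  ∑ i, pieceEstimate (d i).1 (fun u => (d i).2.1 u)
    (fun u j => (((d i).2.2 u j).1, ((d i).2.2 u j).2)) S

/-- The data stored when the seed is `ω`. Numbers are reduced modulo `N`, which loses nothing when
they are below `N`. -/
noncomputable def encodedSketch [NeZero N] (p : P → V → V → ℕ) (c : P → V → V)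
    (b : P → V → V → Fin k) (ω : (P × V × Fin k) × Finset V → V) (i : P) : PieceSketch V k N :=
  (c i, fun u => Fin.ofNat N (weightedDegree (p i) u), fun u j =>
    Prod.map id (Fin.ofNat N) (chargeSample (p i) (b i) (fun u j B => ω ((i, u, j), B)) u j))

theorem decodedEstimate_encodedSketch [NeZero N] {p : P → V → V → ℕ} {W : ℕ}
    (hp : ∀ i u v, p i u v ≤ W) (hN : 2 * Fintype.card V * W < N) (c : P → V → V)
    (b : P → V → V → Fin k) (S : Finset V) (ω : (P × V × Fin k) × Finset V → V) :
    decodedEstimate S (encodedSketch (N := N) p c b ω) = sketchEstimate p c b S ω := by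
  have hdegree : ∀ i u, weightedDegree (p i) u < N := by
    intro i u
    have := sum_le_card_nsmul univ (p i u) W fun v _ => hp i u v
    rw [card_univ, smul_eq_mul] at this
    unfold weightedDegree
    nlinarith
  have hcharge : ∀ i (B : Finset V) u v, #B * charge (p i) u v < N := by
    intro i B u v
    calc #B * charge (p i) u v ≤ Fintype.card V * (2 * W) :=
          Nat.mul_le_mul B.card_le_univ ((charge_le _ u v).trans (by grw [hp i u v]))
      _ = 2 * Fintype.card V * W := by ring
      _ < N := hN
  simp only [decodedEstimate, encodedSketch, sketchEstimate, chargeSample, Prod.map, id,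
    Fin.val_ofNat, Nat.mod_eq_of_lt (hdegree _ _), Nat.mod_eq_of_lt (hcharge _ _ _ _)]
  rfl

theorem exists_cut_sketch (hV : 2 ≤ Fintype.card V) {W t k : ℕ} (hW : 0 < W)
    (ht : Fintype.card V ^ 2 * W < 2 ^ t) (hk : 0 < k) {δ : ℝ} (hδ : 0 < δ) :
    ∃ (K : ℕ) (ρ : Fin K → ℝ)
      (ske : (V → V → ℕ) → Fin K → Fin (4 * Fintype.card V * k * t ^ 3) → Bool)
      (est : Finset V → (Fin (4 * Fintype.card V * k * t ^ 3) → Bool) → Fin K → ℝ),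
      (∀ r, 0 ≤ ρ r) ∧ ∑ r, ρ r = 1 ∧
      ∀ w : V → V → ℕ, (∀ u v, w u v = w v u) ∧ (∀ u v, w u v ≤ W) → ∀ S : Finset V,
        1 - (32 * t / (k * δ)) ^ 2 ≤
          ∑ r with |est S (ske w r) r - cutWeight w S| ≤ δ * cutWeight w S, ρ r := by
  have : Nonempty V := Fintype.card_pos_iff.mp (by omega)
  let : MeasurableSpace V := ⊤
  refine exists_bit_sketch_of_card_le (D := Fin t × Fin t → PieceSketch V k (2 ^ t))
    (μ := seedLaw ((Fin t × Fin t) × V × Fin k) V) (est := decodedEstimate)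
    (good := fun w S x => |x - cutWeight w S| ≤ δ * cutWeight w S)
    (card_pieceSketch_family_le hk (by nlinarith)) fun w ⟨hw, hwW⟩ => ?_
  have hvol : weightedVol w univ ≤ Fintype.card V ^ 2 * W :=
    calc weightedVol w univ ≤ ∑ _u : V, ∑ _v : V, W :=
          sum_le_sum fun u _ => sum_le_sum fun v _ => hwW u v
      _ = _ := by simp [sq, mul_assoc]
  obtain ⟨p, c, b, hp, hconc⟩ := exists_sketchEstimate_concentrated hk hδ hw (hvol.trans_lt ht)
  refine ⟨encodedSketch p c b, fun S => ?_⟩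
  simp only [decodedEstimate_encodedSketch (fun i u v => (hp i u v).trans (hwW u v))
    (lt_of_le_of_lt (by rw [sq]; gcongr) ht) c b S]
  exact hconc S

end Sketch

theorem exists_dyadic_scale {n : ℕ} (hn : 1 ≤ Real.log n) (d : ℕ) :
    ∃ t : ℕ, 1 ≤ t ∧ n ^ d < 2 ^ t ∧ (t : ℝ) ≤ (2 * d + 1) * Real.log n := by
  refine ⟨Nat.log 2 (n ^ d) + 1, Nat.le_add_left 1 _, Nat.lt_pow_succ_log_self one_lt_two _, ?_⟩
  have hlog : (Nat.log 2 (n ^ d) : ℝ) ≤ d * Real.log n / Real.log 2 := by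
    simpa [Real.logb] using Real.natLog_le_logb (n ^ d) 2
  have htwo : d * Real.log n / Real.log 2 ≤ 2 * d * Real.log n := by
    rw [div_le_iff₀ (Real.log_pos one_lt_two)]
    nlinarith [Real.log_two_gt_d9, mul_nonneg d.cast_nonneg (zero_le_one.trans hn)]
  push_cast
  linarith

theorem sketch_size_le {n a L ε C : ℝ} {t : ℕ} (ht : 1 ≤ t) (hn : 0 ≤ n)
    (hL : 1 ≤ L) (htL : t ≤ a * L) (hε : 0 < ε) (hε1 : ε ≤ 1) (hC : 36 * a ^ 4 ≤ C) (hC4 : 4 ≤ C) :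
    4 * n * ⌈8 * t / ε⌉₊ * t ^ 3 ≤ C * n * L ^ C / ε := by
  have hk : (⌈8 * t / ε⌉₊ : ℝ) ≤ 9 * t / ε := by
    have ht' : (1 : ℝ) ≤ t := by exact_mod_cast ht
    calc (⌈8 * t / ε⌉₊ : ℝ) ≤ 8 * t / ε + 1 := (Nat.ceil_lt_add_one (by positivity)).le
      _ ≤ 8 * t / ε + t / ε := by gcongr; exact (one_le_div hε).mpr (hε1.trans ht')
      _ = 9 * t / ε := by ring
  calc 4 * n * ⌈8 * t / ε⌉₊ * t ^ 3 ≤ 4 * n * (9 * t / ε) * t ^ 3 := by gcongr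
    _ = 36 * n * t ^ 4 / ε := by ring
    _ ≤ 36 * n * (a * L) ^ 4 / ε := by gcongr
    _ = 36 * a ^ 4 * n * L ^ (4 : ℝ) / ε := by
      rw [mul_pow, ← Real.rpow_natCast L 4, Nat.cast_ofNat]
      ring
    _ ≤ C * n * L ^ C / ε := by gcongr

theorem sampling_error_sq_le {t : ℕ} (ht : 1 ≤ t) {p ε C : ℝ} (hp : p < 1) (hε : 0 < ε)
    (hC : 16 / (1 - p) ≤ C) (hC1 : 1 ≤ C) :
    (32 * t / (⌈8 * t / ε⌉₊ * (C * ε))) ^ 2 ≤ 1 - p := by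
  have hC0 : 0 < C := zero_lt_one.trans_le hC1
  have hk : 8 * t ≤ ⌈8 * t / ε⌉₊ * ε := (div_le_iff₀ hε).mp (Nat.le_ceil _)
  have : (0 : ℝ) < t := by exact_mod_cast ht
  calc (32 * t / (⌈8 * t / ε⌉₊ * (C * ε))) ^ 2 = (32 * t / (C * (⌈8 * t / ε⌉₊ * ε))) ^ 2 := by
        rw [mul_left_comm]
    _ ≤ (32 * t / (C * (8 * t))) ^ 2 := by gcongr
    _ = 16 / C / C := by field_simp; norm_num
    _ ≤ 16 / C := div_le_self (by positivity) hC1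
    _ ≤ 1 - p := (div_le_comm₀ (sub_pos.mpr hp) hC0).mp hC

theorem stmt_5_general (d : ℕ) {p : ℝ} (hp : p < 1) :
    ∃ C : ℝ, 0 < C ∧
      ∀ n : ℕ, 3 ≤ n → ∀ ε : ℝ, 0 < ε → ε ≤ 1 →
      ∃ (m K : ℕ) (ρ : Fin K → ℝ)
        (ske : (Fin n → Fin n → ℕ) → Fin K → (Fin m → Bool))
        (est : Finset (Fin n) → (Fin m → Bool) → Fin K → ℝ),
        (∀ r, 0 ≤ ρ r) ∧ (∑ r, ρ r) = 1 ∧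
        (m : ℝ) ≤ C * n * Real.log n ^ C / ε ∧
        ∀ w : Fin n → Fin n → ℕ, (∀ u v, w u v = w v u) → (∀ u v, w u v ≤ n ^ d) →
          ∀ S : Finset (Fin n),
            p ≤ ∑ r with (1 - C * ε) * cutWn w S ≤ est S (ske w r) r ∧
              est S (ske w r) r ≤ (1 + C * ε) * cutWn w S, ρ r := by
  have hp' : 0 < 16 / (1 - p) := div_pos (by norm_num) (sub_pos.mpr hp)
  set a : ℝ := 2 * (d + 2 : ℕ) + 1 with ha
  have ha1 : 1 ≤ a ^ 4 := one_le_pow₀ (by rw [ha]; linarith [(d + 2).cast_nonneg (α := ℝ)])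
  refine ⟨36 * a ^ 4 + 16 / (1 - p), by positivity, fun n hn ε hε hε1 => ?_⟩
  set C : ℝ := 36 * a ^ 4 + 16 / (1 - p)
  have hlog : 1 ≤ Real.log n := by
    rw [Real.le_log_iff_exp_le (by positivity)]
    exact Real.exp_one_lt_three.le.trans (by exact_mod_cast hn)
  obtain ⟨t, ht, hnt, htlog⟩ := exists_dyadic_scale hlog (d + 2)
  have hk : 0 < ⌈8 * t / ε⌉₊ := Nat.ceil_pos.mpr (by positivity)
  obtain ⟨K, ρ, ske, est, hρ, hρ1, hest⟩ := exists_cut_sketch (V := Fin n) (W := n ^ d) (t := t)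
    (by rw [Fintype.card_fin]; omega) (by positivity)
    (by rwa [Fintype.card_fin, ← pow_add, add_comm]) hk (mul_pos (by positivity : 0 < C) hε)
  refine ⟨_, K, ρ, ske, est, hρ, hρ1, ?_, fun w hw hwd S => ?_⟩
  · rw [Fintype.card_fin]
    push_cast
    exact sketch_size_le ht n.cast_nonneg hlog htlog hε hε1 (by linarith) (by linarith)
  · have herror := sampling_error_sq_le ht hp hε (C := C) (by linarith) (by linarith)
    refine (by linarith : p ≤ _).trans ((hest w ⟨hw, hwd⟩ S).trans_eq ?_)
    refine Finset.sum_congr (Finset.filter_congr fun r _ => ?_) fun _ _ => rfl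
    rw [cutWn_eq_cutWeight, abs_sub_le_iff]
    constructor <;> rintro ⟨h₁, h₂⟩ <;> constructor <;> linarith

theorem stmt_5 :
    ∃ C : ℝ, 0 < C ∧
      ∀ n : ℕ, 2 ≤ n → ∀ ε : ℝ, 1 / (n : ℝ) ≤ ε → ε ≤ 1 / 30 →
      ∃ (m K : ℕ) (ρ : Fin K → ℝ)
        (ske : (Fin n → Fin n → ℕ) → Fin K → (Fin m → Bool))
        (est : Finset (Fin n) → (Fin m → Bool) → Fin K → ℝ),
        (∀ r, 0 ≤ ρ r) ∧ (∑ r, ρ r) = 1 ∧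
        (m : ℝ) ≤ C * n * Real.log n ^ C / ε ∧
        ∀ w : Fin n → Fin n → ℕ,
          (∀ u v, w u v = w v u) → (∀ u, w u u = 0) →
          (∀ u v, w u v ≠ 0 → 1 ≤ w u v ∧ w u v ≤ n ^ 5) →
          ∀ S : Finset (Fin n),
            (7 : ℝ) / 9 ≤
              ∑ r ∈ Finset.univ.filter (fun r : Fin K =>
                (1 - C * ε) * cutWn w S ≤ est S (ske w r) r ∧
                  est S (ske w r) r ≤ (1 + C * ε) * cutWn w S), ρ r := by
  obtain ⟨C, hC, hsketch⟩ := stmt_5_general 5 (p := 7 / 9) (by norm_num)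
  refine ⟨C, hC, fun n hn ε hnε hε => ?_⟩
  have hn0 : (0 : ℝ) < n := by positivity
  have hn30 : (30 : ℝ) ≤ n := (one_div_le_one_div hn0 (by norm_num)).mp (hnε.trans hε)
  obtain ⟨m, K, ρ, ske, est, hρ, hρ1, hm, hest⟩ := hsketch n
    (by exact_mod_cast (by linarith : (3 : ℝ) ≤ n)) ε ((one_div_pos.mpr hn0).trans_le hnε)
    (by linarith)
  refine ⟨m, K, ρ, ske, est, hρ, hρ1, hm, fun w hw _ hwn => hest w hw fun u v => ?_⟩
  rcases eq_or_ne (w u v) 0 with hzero | hne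
  exacts [hzero ▸ Nat.zero_le _, (hwn u v hne).2]
end

section
/- There exists an absolute constant C > 0 such that for every integer n ≥ 2, every ε ∈ (1/n, 1/30), and every real W ≥ 4, there exists a randomized sketching scheme of size at most C·n·ε⁻¹·(log n)^C·log log W bits for the class of weighted graphs on n vertices with all edge weights in the range [1, W], with the following 'for each' guarantee: for every such graph G and every subset S of its vertices, with probability at least 1 − 1/n over the random seed, the estimate produced from the sketch lies in the interval [(1−Cε)·w(S,S̄), (1+Cε)·w(S,S̄)]. -/
open scoped Classical

/-- Weight of the cut `(S, S̄)`. -/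
noncomputable def cutW {n : ℕ} (w : Fin n → Fin n → ℝ) (S : Finset (Fin n)) : ℝ :=
  ∑ p ∈ Finset.univ.filter (fun p : Fin n × Fin n => p.1 ∈ S ∧ p.2 ∉ S), w p.1 p.2

/-!
*Expanders.* In a multigraph, remove edges carrying more than a `1 / s` fraction of the degree of an
endpoint, and split clusters along sparse cuts until none is left. Two potentials, `∑ H(deg u)` with
`H` the harmonic numbers and `∑ deg u * log (vol (cluster of u))`, show that only few heavy edges
are removed and that the splittings lose at most half of the volume, so logarithmically many rounds
write the graph as few stored heavy edges plus expander pieces. In a piece, the degrees determine a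
set `Y`, a minority in every cluster, with the same cut as `S`. Its cut is
`∑ u ∈ Y, (deg u - w(u, Y))`, and `w(u, Y)` is estimated from `s` random neighbours of `u`. As no
edge is heavy, the variance is at most `(vol Y / s) ^ 2`, which expansion bounds by a multiple of
`(w(S, S̄) / s) ^ 2`. So `s ≈ ε⁻¹`, and not `ε⁻²`, samples suffice; a median boosts the probability.

*Weights.* The components of the edges of weight at least `n ^ k` form a refining sequence of
partitions in `k`, recorded by a forest in `O(n (log n + log log W))` bits. Take `k` to be the last
level at which a forest edge is cut by `S`: no component of level `k` is cut, while some edge of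
weight at least `n ^ (k - 1)` is. Hence the weights between components of level `k`, which are less
than `n ^ k`, can be rounded to multiples of `n ^ (k - 4)`. A vertex occurs in the rounded graph of
level `k` only if components merged near it during the last four levels, so that the sketches of all
levels together have only `O(n)` nontrivial vertices.
-/

namespace CutSketch

open Finset
open scoped BigOperators

section UniformAverage

variable {ι κ β Ω : Type*} [Fintype ι] [DecidableEq ι] [Fintype β] [Fintype Ω]

lemma expect_apply_mul (i : ι) (φ : β → ℝ) (ψ : ({j // j ≠ i} → β) → ℝ) :
    𝔼 ω : ι → β, φ (ω i) * ψ (fun j ↦ ω j) = (𝔼 r, φ r) * 𝔼 τ, ψ τ := by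
  rw [expect_mul_expect, ← expect_product', univ_product_univ]
  exact Fintype.expect_equiv (Equiv.funSplitAt i β) _ _ fun ω ↦ rfl

lemma expect_apply [Nonempty β] (i : ι) (φ : β → ℝ) :
    𝔼 ω : ι → β, φ (ω i) = 𝔼 r, φ r := by
  simpa [expect_const univ_nonempty] using expect_apply_mul i φ fun _ ↦ 1

lemma expect_apply_mul_apply_eq_zero {i j : ι} (hij : i ≠ j) {φ : β → ℝ} (hφ : 𝔼 r, φ r = 0)
    (ψ : β → ℝ) : 𝔼 ω : ι → β, φ (ω i) * ψ (ω j) = 0 := by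
  simpa [hφ] using expect_apply_mul i φ fun τ ↦ ψ (τ ⟨j, hij.symm⟩)

lemma expect_sum_sq_of_centered [Nonempty β] {h : ι → β → ℝ} (hh : ∀ i, 𝔼 r, h i r = 0) :
    𝔼 ω : ι → β, (∑ i, h i (ω i)) ^ 2 = ∑ i, 𝔼 r, h i r ^ 2 := by
  have h_diag : ∀ i j, 𝔼 ω : ι → β, h i (ω i) * h j (ω j) =
      if i = j then 𝔼 r, h i r ^ 2 else 0 := by
    intro i j
    split_ifs with hij
    · subst hij
      simpa only [sq] using expect_apply i fun r ↦ h i r * h i r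
    · exact expect_apply_mul_apply_eq_zero hij (hh i) (h j)
  simp only [sq, sum_mul_sum, expect_sum_comm, h_diag, sum_ite_eq, mem_univ, if_true]

lemma expect_sq_add_le {X Y : Ω → ℝ} {a b : ℝ} (ha : 0 ≤ a) (hb : 0 ≤ b)
    (hX : 𝔼 ω, X ω ^ 2 ≤ a ^ 2) (hY : 𝔼 ω, Y ω ^ 2 ≤ b ^ 2) :
    𝔼 ω, (X ω + Y ω) ^ 2 ≤ (a + b) ^ 2 := by
  have h_cross : 𝔼 ω, X ω * Y ω ≤ a * b := by
    refine le_of_sq_le_sq ?_ (mul_nonneg ha hb)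
    calc (𝔼 ω, X ω * Y ω) ^ 2 ≤ (𝔼 ω, X ω ^ 2) * 𝔼 ω, Y ω ^ 2 := expect_mul_sq_le_sq_mul_sq _ _ _
      _ ≤ a ^ 2 * b ^ 2 := by gcongr
      _ = (a * b) ^ 2 := by ring
  calc 𝔼 ω, (X ω + Y ω) ^ 2 = 𝔼 ω, X ω ^ 2 + 2 * 𝔼 ω, X ω * Y ω + 𝔼 ω, Y ω ^ 2 := by
        rw [mul_expect, ← expect_add_distrib, ← expect_add_distrib]
        exact expect_congr rfl fun ω _ ↦ by ring
    _ ≤ (a + b) ^ 2 := by linarith [add_sq a b]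

lemma expect_sq_sum_le (s : Finset κ) {X : κ → Ω → ℝ} {a : κ → ℝ} (ha : ∀ j ∈ s, 0 ≤ a j)
    (hX : ∀ j ∈ s, 𝔼 ω, X j ω ^ 2 ≤ a j ^ 2) :
    𝔼 ω, (∑ j ∈ s, X j ω) ^ 2 ≤ (∑ j ∈ s, a j) ^ 2 := by
  induction s using Finset.cons_induction with
  | empty => simp
  | cons j s hj ih =>
    simp only [sum_cons]
    rw [forall_mem_cons] at ha hX
    exact expect_sq_add_le ha.1 (sum_nonneg ha.2) hX.1 (ih ha.2 hX.2)

lemma sq_mul_card_filter_lt_abs_le {X : Ω → ℝ} {σ : ℝ} (c : ℕ) (hσ : 0 ≤ σ)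
    (hX : 𝔼 ω, X ω ^ 2 ≤ σ ^ 2) : c ^ 2 * #{ω | c * σ < |X ω|} ≤ Fintype.card Ω := by
  have h_sum : ∑ ω, X ω ^ 2 ≤ Fintype.card Ω * σ ^ 2 := by
    rw [← Fintype.card_mul_expect]
    gcongr
  rcases hσ.eq_or_lt with rfl | hσ
  · have h_zero : ∀ ω, X ω = 0 := fun ω ↦ by
      have := (single_le_sum (fun ω _ ↦ sq_nonneg (X ω)) (mem_univ ω)).trans h_sum
      simpa using this.antisymm (by simpa using sq_nonneg (X ω))
    simp [h_zero]
  · have h_markov : (#{ω | c * σ < |X ω|} : ℝ) * (c * σ) ^ 2 ≤ Fintype.card Ω * σ ^ 2 := by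
      rw [← nsmul_eq_mul]
      refine (card_nsmul_le_sum _ (fun ω ↦ X ω ^ 2) _ fun ω hω ↦ ?_).trans <|
        (sum_le_sum_of_subset_of_nonneg (subset_univ _) fun _ _ _ ↦ sq_nonneg _).trans h_sum
      rw [← sq_abs (X ω)]
      have := (mem_filter.mp hω).2
      gcongr
    have : (c ^ 2 * #{ω | c * σ < |X ω|} : ℝ) ≤ Fintype.card Ω :=
      le_of_mul_le_mul_right (by linarith [mul_pow (c : ℝ) σ 2]) (pow_pos hσ 2)
    exact_mod_cast this

end UniformAverage

section Amplification

variable {ι Ω : Type*} [Fintype ι] [DecidableEq ι] [Fintype Ω] [DecidableEq Ω]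

lemma card_filter_forall_mem_mul_pow_le {c : ℕ} {B : Finset Ω}
    (hB : (2 * c) ^ 2 * #B ≤ Fintype.card Ω) {Q : Finset ι} (hQ : Fintype.card ι ≤ 2 * #Q)
    (hc : 0 < c) :
    #{ω : ι → Ω | ∀ τ ∈ Q, ω τ ∈ B} * (2 * c) ^ Fintype.card ι ≤
      Fintype.card Ω ^ Fintype.card ι := by
  have h_pi : ({ω : ι → Ω | ∀ τ ∈ Q, ω τ ∈ B} : Finset (ι → Ω)) =
      Fintype.piFinset fun τ ↦ if τ ∈ Q then B else univ := by
    ext ω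
    simp only [mem_filter, mem_univ, true_and, Fintype.mem_piFinset]
    exact forall_congr' fun τ ↦ by split_ifs <;> simp [*]
  have h_card : #(Fintype.piFinset fun τ ↦ if τ ∈ Q then B else univ) =
      #B ^ #Q * Fintype.card Ω ^ #Qᶜ := by
    simp_rw [Fintype.card_piFinset, apply_ite card, prod_ite, prod_const, card_univ,
      filter_mem_eq_inter, univ_inter, ← compl_filter, filter_mem_eq_inter, univ_inter]
  calc _ ≤ #B ^ #Q * Fintype.card Ω ^ #Qᶜ * (2 * c) ^ (2 * #Q) := by
        rw [h_pi, h_card]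
        gcongr
        lia
    _ = ((2 * c) ^ 2 * #B) ^ #Q * Fintype.card Ω ^ #Qᶜ := by rw [mul_pow, pow_mul]; ring
    _ ≤ Fintype.card Ω ^ #Q * Fintype.card Ω ^ #Qᶜ := by gcongr
    _ = Fintype.card Ω ^ Fintype.card ι := by rw [← pow_add, card_add_card_compl]

lemma card_filter_half_mem_mul_pow_le {c : ℕ} {B : Finset Ω}
    (hB : (2 * c) ^ 2 * #B ≤ Fintype.card Ω) (hc : 0 < c) :
    #{ω : ι → Ω | Fintype.card ι ≤ 2 * #{τ | ω τ ∈ B}} * c ^ Fintype.card ι ≤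
      Fintype.card Ω ^ Fintype.card ι := by
  have h_cover : ({ω : ι → Ω | Fintype.card ι ≤ 2 * #{τ | ω τ ∈ B}} : Finset (ι → Ω)) ⊆
      ({Q : Finset ι | Fintype.card ι ≤ 2 * #Q} : Finset (Finset ι)).biUnion
        fun Q ↦ {ω | ∀ τ ∈ Q, ω τ ∈ B} := by
    intro ω hω
    simp only [mem_biUnion, mem_filter, mem_univ, true_and] at hω ⊢
    exact ⟨univ.filter fun τ ↦ ω τ ∈ B, hω, fun τ hτ ↦ by simpa using hτ⟩
  refine Nat.le_of_mul_le_mul_left ?_ (pow_pos zero_lt_two (Fintype.card ι))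
  calc _ = #{ω : ι → Ω | Fintype.card ι ≤ 2 * #{τ | ω τ ∈ B}} * (2 * c) ^ Fintype.card ι := by
        rw [mul_pow]; ring
    _ ≤ (∑ Q : Finset ι with Fintype.card ι ≤ 2 * #Q, #{ω : ι → Ω | ∀ τ ∈ Q, ω τ ∈ B}) *
        (2 * c) ^ Fintype.card ι := by
        gcongr
        exact (card_le_card h_cover).trans card_biUnion_le
    _ ≤ #{Q : Finset ι | Fintype.card ι ≤ 2 * #Q} * Fintype.card Ω ^ Fintype.card ι := by
        rw [sum_mul, ← smul_eq_mul]
        exact sum_le_card_nsmul _ _ _ fun Q hQ ↦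
          card_filter_forall_mem_mul_pow_le hB (mem_filter.mp hQ).2 hc
    _ ≤ 2 ^ Fintype.card ι * Fintype.card Ω ^ Fintype.card ι := by
        gcongr
        exact (card_le_univ _).trans_eq Fintype.card_finset

end Amplification

section Median

variable {ι : Type*} [Fintype ι]

/-- The (upper) median of a finite family of reals, used to boost the success probability of an
estimator. -/
noncomputable def median (y : ι → ℝ) : ℝ :=
  sInf {x | Fintype.card ι < 2 * #{τ | y τ ≤ x}}

lemma median_mem_Icc {y : ι → ℝ} {a b : ℝ}
    (h : 2 * #{τ | y τ ∉ Set.Icc a b} < Fintype.card ι) : median y ∈ Set.Icc a b := by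
  have hb : b ∈ {x | Fintype.card ι < 2 * #{τ | y τ ≤ x}} := by
    have h_sub : #{τ | ¬ y τ ≤ b} ≤ #{τ | y τ ∉ Set.Icc a b} :=
      card_le_card <| monotone_filter_right _ fun τ _ hτ hmem ↦ hτ hmem.2
    have := card_filter_add_card_filter_not (s := univ) fun τ ↦ y τ ≤ b
    rw [card_univ] at this
    exact Set.mem_ofPred.mpr (by lia)
  have ha : a ∈ lowerBounds {x | Fintype.card ι < 2 * #{τ | y τ ≤ x}} := by
    intro x hx
    by_contra! hxa
    have h_sub : #{τ | y τ ≤ x} ≤ #{τ | y τ ∉ Set.Icc a b} :=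
      card_le_card <| monotone_filter_right _ fun τ _ hτ hmem ↦ (hτ.trans_lt hxa).not_ge hmem.1
    exact absurd (Set.mem_ofPred.mp hx) (by lia)
  exact ⟨le_csInf ⟨b, hb⟩ ha, csInf_le ⟨a, ha⟩ hb⟩

lemma card_filter_lt_abs_median_sub_mul_two_pow_le [DecidableEq ι] {Ω : Type*}
    [Fintype Ω] {X : Ω → ℝ} {q σ : ℝ} (hσ : 0 ≤ σ) (hX : 𝔼 ω, (X ω - q) ^ 2 ≤ σ ^ 2) :
    #{ω : ι → Ω | 4 * σ < |median (fun τ ↦ X (ω τ)) - q|} * 2 ^ Fintype.card ι ≤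
      Fintype.card Ω ^ Fintype.card ι := by
  classical
  have h_bad := sq_mul_card_filter_lt_abs_le 4 hσ hX
  push_cast at h_bad
  set B : Finset Ω := {ω | 4 * σ < |X ω - q|} with hB
  refine le_trans (Nat.mul_le_mul_right _ (card_le_card fun ω ↦ ?_))
    (card_filter_half_mem_mul_pow_le (c := 2) (B := B) (by exact_mod_cast h_bad) two_pos)
  simp only [mem_filter, mem_univ, true_and]
  contrapose!
  intro h_half
  have h_median : median (fun τ ↦ X (ω τ)) ∈ Set.Icc (q - 4 * σ) (q + 4 * σ) := by
    refine median_mem_Icc (lt_of_le_of_lt ?_ h_half)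
    refine Nat.mul_le_mul_left _ (card_le_card fun τ ↦ ?_)
    simp only [hB, mem_filter, mem_univ, true_and]
    contrapose!
    exact fun h ↦ Set.mem_Icc_iff_abs_le.mp (abs_sub_comm q _ ▸ h)
  rw [abs_sub_comm]
  exact Set.mem_Icc_iff_abs_le.mpr h_median

end Median

section WeightedGraph

variable {V M : Type*} [Fintype V]

/-- The total weight `w(A, B)` of the ordered pairs in `A × B`. -/
def crossWeight [AddCommMonoid M] (w : V → V → M) (A B : Finset V) : M :=
  ∑ u ∈ A, ∑ v ∈ B, w u v

/-- The weight of the cut `(S, Sᶜ)` of the weighted graph `w`. -/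
def cutWeight [AddCommMonoid M] [DecidableEq V] (w : V → V → M) (S : Finset V) : M :=
  crossWeight w S Sᶜ

/-- The degree of a vertex of the multigraph with multiplicities `g`. -/
def deg (g : V → V → ℕ) (u : V) : ℕ := ∑ v, g u v

/-- The volume of a vertex set, i.e. the sum of its degrees; `vol g univ` is the total multiplicity,
each edge being counted in both directions. -/
def vol (g : V → V → ℕ) (A : Finset V) : ℕ := ∑ u ∈ A, deg g u

/-- The number of ordered pairs of adjacent vertices. -/
def supportCard (g : V → V → ℕ) : ℕ := #{p : V × V | g p.1 p.2 ≠ 0}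

lemma cutWeight_add [AddCommMonoid M] [DecidableEq V] (g h : V → V → M) (S : Finset V) :
    cutWeight (g + h) S = cutWeight g S + cutWeight h S := by
  simp only [cutWeight, crossWeight, Pi.add_apply, sum_add_distrib]

lemma cutWeight_sum [AddCommMonoid M] [DecidableEq V] {ι : Type*} (s : Finset ι)
    (g : ι → V → V → M) (S : Finset V) :
    cutWeight (∑ j ∈ s, g j) S = ∑ j ∈ s, cutWeight (g j) S := by
  simp only [cutWeight, crossWeight, Finset.sum_apply]
  rw [sum_congr rfl fun u _ ↦ sum_comm, sum_comm]

lemma vol_univ_add (g h : V → V → ℕ) : vol (g + h) univ = vol g univ + vol h univ := by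
  simp only [vol, deg, Pi.add_apply, sum_add_distrib]

lemma deg_mono {g h : V → V → ℕ} (hgh : g ≤ h) : deg g ≤ deg h :=
  fun u ↦ sum_le_sum fun v _ ↦ hgh u v

lemma vol_le_vol {g h : V → V → ℕ} (hgh : g ≤ h) {A B : Finset V} (hAB : A ⊆ B) :
    vol g A ≤ vol h B :=
  (sum_le_sum fun u _ ↦ deg_mono hgh u).trans (sum_le_sum_of_subset hAB)

lemma deg_le_vol (g : V → V → ℕ) {A : Finset V} {u : V} (hu : u ∈ A) : deg g u ≤ vol g A :=
  single_le_sum (fun _ _ ↦ Nat.zero_le _) hu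

lemma supportCard_add_le (g h : V → V → ℕ) :
    supportCard (g + h) ≤ supportCard g + supportCard h := by
  classical
  refine (card_le_card fun p hp ↦ ?_).trans (card_union_le _ _)
  simp only [mem_filter, mem_univ, true_and, mem_union, Pi.add_apply] at hp ⊢
  lia

variable [DecidableEq V]

lemma two_mul_cutWeight {g : V → V → ℕ} (hg : ∀ u v, g u v = g v u) (S : Finset V) :
    2 * cutWeight g S = ∑ u, ∑ v, if u ∈ S ↔ v ∈ S then 0 else g u v := by
  have h_swap : crossWeight g Sᶜ S = cutWeight g S := by
    rw [crossWeight, sum_comm]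
    exact sum_congr rfl fun u _ ↦ sum_congr rfl fun v _ ↦ hg v u
  have h_inside : ∀ u ∈ S, (∑ v, if u ∈ S ↔ v ∈ S then 0 else g u v) = ∑ v ∈ Sᶜ, g u v := by
    intro u hu
    rw [← sum_add_sum_compl S]
    simp +contextual [hu, sum_congr, mem_compl]
  have h_outside : ∀ u ∈ Sᶜ, (∑ v, if u ∈ S ↔ v ∈ S then 0 else g u v) = ∑ v ∈ S, g u v := by
    intro u hu
    rw [← sum_add_sum_compl S]
    simp +contextual [mem_compl.mp hu, sum_congr, mem_compl]
  rw [← sum_add_sum_compl S, sum_congr rfl h_inside, sum_congr rfl h_outside]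
  change _ = cutWeight g S + crossWeight g Sᶜ S
  rw [h_swap, two_mul]

lemma cutWeight_congr {g : V → V → ℕ} (hg : ∀ u v, g u v = g v u) {S Y : Finset V}
    (hSY : ∀ u v, g u v ≠ 0 → ((u ∈ S ↔ v ∈ S) ↔ (u ∈ Y ↔ v ∈ Y))) :
    cutWeight g S = cutWeight g Y := by
  refine Nat.eq_of_mul_eq_mul_left zero_lt_two ?_
  rw [two_mul_cutWeight hg, two_mul_cutWeight hg]
  refine sum_congr rfl fun u _ ↦ sum_congr rfl fun v _ ↦ ?_
  by_cases huv : g u v = 0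
  · simp [huv]
  · simp only [hSY u v huv]

end WeightedGraph

section Harmonic

lemma harmonic_mono : Monotone harmonic := fun _ _ hmn ↦
  sum_le_sum_of_subset_of_nonneg (range_mono hmn) fun _ _ _ ↦ by positivity

lemma sum_harmonic_deg_le {V : Type*} [Fintype V] {g : V → V → ℕ} {D : ℕ} {H : ℚ}
    (hD : vol g univ ≤ D) (hH : harmonic D ≤ H) :
    ∑ u, harmonic (deg g u) ≤ #{u | deg g u ≠ 0} * H := by
  calc ∑ u, harmonic (deg g u) = ∑ u with deg g u ≠ 0, harmonic (deg g u) := by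
        refine (sum_filter_of_ne (p := (deg g · ≠ 0)) fun u _ hu h0 ↦ hu ?_).symm
        rw [h0, harmonic_zero]
    _ ≤ #{u | deg g u ≠ 0} * H := by
        rw [← nsmul_eq_mul]
        exact sum_le_card_nsmul _ _ _ fun u _ ↦
          (harmonic_mono ((deg_le_vol g (mem_univ u)).trans hD)).trans hH

lemma harmonic_add_div_le (m x : ℕ) : harmonic m + x / (m + x) ≤ harmonic (m + x) := by
  have h_terms : ∀ i ∈ range x, ((m + x : ℚ))⁻¹ ≤ ((m + i + 1 : ℕ) : ℚ)⁻¹ := by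
    intro i hi
    rw [mem_range] at hi
    refine inv_anti₀ (by positivity) ?_
    exact_mod_cast (by lia : m + i + 1 ≤ m + x)
  rw [harmonic, harmonic, sum_range_add, div_eq_mul_inv, ← nsmul_eq_mul]
  gcongr
  simpa only [sum_const, card_range] using sum_le_sum h_terms

lemma mul_harmonic_add_one_le {s m x : ℕ} (hx : m + x < s * x) :
    s * harmonic m + 1 ≤ s * harmonic (m + x) := by
  have h_pos : (0 : ℚ) < m + x := by
    have : 0 < m + x := by by_contra! h; simp_all
    exact_mod_cast this
  have h_one : (1 : ℚ) ≤ s * (x / (m + x)) := by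
    rw [← mul_div_assoc, one_le_div h_pos]
    exact_mod_cast hx.le
  linarith [mul_le_mul_of_nonneg_left (harmonic_add_div_le m x) (Nat.cast_nonneg (α := ℚ) s)]

lemma log_natCast_mono : Monotone fun m : ℕ ↦ Real.log m := fun m n hmn ↦ by
  rcases m.eq_zero_or_pos with rfl | hm
  · simpa using Real.log_natCast_nonneg n
  · exact Real.log_le_log (by exact_mod_cast hm) (by exact_mod_cast hmn)

end Harmonic

section ExpanderDecomposition

variable {V : Type*} [Fintype V] [DecidableEq V]

/-- A disjoint union of expanders without heavy edges: every edge stays within a cluster (a fibre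
of `lab`), no edge carries more than a `1 / s` fraction of the degree of an endpoint, and a set
that is a minority in every cluster has volume at most `F` times its cut. -/
structure IsExpanderPiece (s F : ℕ) (lab : V → V) (g : V → V → ℕ) : Prop where
  symm : ∀ u v, g u v = g v u
  lab_eq : ∀ u v, g u v ≠ 0 → lab u = lab v
  light : ∀ u v, s * g u v ≤ deg g v
  expands : ∀ Y : Finset V, (∀ c, 2 * vol g {u ∈ Y | lab u = c} ≤ vol g {u | lab u = c}) →
    vol g Y ≤ F * cutWeight g Y

/-- The potential of a clustering `lab` of `g`, which drops by `log 2` per unit of volume on the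
smaller side whenever clusters are split. -/
noncomputable def clusterPotential (g : V → V → ℕ) (lab : V → V) : ℝ :=
  ∑ u, deg g u * Real.log (vol g {v | lab v = lab u})

lemma clusterPotential_mono {g h : V → V → ℕ} (hgh : g ≤ h) (lab : V → V) :
    clusterPotential g lab ≤ clusterPotential h lab :=
  sum_le_sum fun u _ ↦ mul_le_mul (by exact_mod_cast deg_mono hgh u)
    (log_natCast_mono (vol_le_vol hgh subset_rfl)) (Real.log_natCast_nonneg _) (by positivity)

lemma clusterPotential_nonneg (g : V → V → ℕ) (lab : V → V) : 0 ≤ clusterPotential g lab :=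
  sum_nonneg fun _ _ ↦ mul_nonneg (by positivity) (Real.log_natCast_nonneg _)

lemma clusterPotential_const (g : V → V → ℕ) (c : V) :
    clusterPotential g (fun _ ↦ c) = vol g univ * Real.log (vol g univ) := by
  simp only [clusterPotential, filter_true, ← sum_mul]
  simp only [vol, Nat.cast_sum]

omit [Fintype V] [DecidableEq V] in
lemma exists_label_split (lab : V → V) (Y : Finset V) :
    ∃ lab' : V → V, ∀ u v, lab' u = lab' v ↔ lab u = lab v ∧ (u ∈ Y ↔ v ∈ Y) := by
  rcases isEmpty_or_nonempty V with hV | hV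
  · exact ⟨lab, fun u ↦ isEmptyElim u⟩
  let f : V → V × Prop := fun u ↦ (lab u, u ∈ Y)
  have h_section : ∀ u, f (Function.invFun f (f u)) = f u := fun u ↦ Function.invFun_eq ⟨u, rfl⟩
  refine ⟨fun u ↦ Function.invFun f (f u), fun u v ↦ ⟨fun huv ↦ ?_, fun huv ↦ ?_⟩⟩
  · have : f u = f v := (h_section u).symm.trans ((congrArg f huv).trans (h_section v))
    simpa [f] using this
  · have : f u = f v := Prod.ext huv.1 (propext huv.2)
    simp only [this]

/-- Splitting every cluster along `Y` at least halves the cluster volume seen from a vertex of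
`Y`. -/
lemma clusterPotential_split_le {g g' : V → V → ℕ} (hg' : g' ≤ g) {lab lab' : V → V}
    {Y : Finset V} (hlab' : ∀ u v, lab' u = lab' v ↔ lab u = lab v ∧ (u ∈ Y ↔ v ∈ Y))
    (hY : ∀ c, 2 * vol g {u ∈ Y | lab u = c} ≤ vol g {u | lab u = c}) :
    clusterPotential g' lab' + vol g Y * Real.log 2 ≤ clusterPotential g lab := by
  have h_fibre : ∀ u, vol g' {v | lab' v = lab' u} ≤ vol g {v | lab v = lab u} := fun u ↦
    vol_le_vol hg' <| monotone_filter_right _ fun v _ hv ↦ ((hlab' v u).mp hv).1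
  have h_half : ∀ u ∈ Y, 2 * vol g' {v | lab' v = lab' u} ≤ vol g {v | lab v = lab u} := by
    intro u hu
    refine le_trans ?_ (hY (lab u))
    gcongr
    refine vol_le_vol hg' fun v hv ↦ ?_
    simp only [mem_filter, mem_univ, true_and, hlab'] at hv ⊢
    exact ⟨hv.2.mpr hu, hv.1⟩
  have h_two : ∀ u ∈ Y, deg g u ≠ 0 → 2 ≤ vol g {v | lab v = lab u} := by
    intro u hu hd
    have : deg g u ≤ vol g {v ∈ Y | lab v = lab u} := deg_le_vol g (by simpa using hu)
    have := hY (lab u)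
    lia
  have h_log : ∀ u, deg g u ≠ 0 → Real.log (vol g' {v | lab' v = lab' u}) +
      (if u ∈ Y then Real.log 2 else 0) ≤ Real.log (vol g {v | lab v = lab u}) := by
    intro u hd
    split_ifs with hu
    · rcases Nat.eq_zero_or_pos (vol g' {v | lab' v = lab' u}) with h0 | hpos
      · simpa [h0] using log_natCast_mono (h_two u hu hd)
      · rw [add_comm, ← Real.log_mul two_ne_zero (by positivity)]
        exact_mod_cast log_natCast_mono (h_half u hu)
    · simpa using log_natCast_mono (h_fibre u)
  have h_vol : vol g Y * Real.log 2 = ∑ u, deg g u * if u ∈ Y then Real.log 2 else 0 := by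
    simp only [mul_ite, mul_zero, sum_ite_mem, univ_inter, vol, Nat.cast_sum, sum_mul]
  rw [h_vol, clusterPotential, ← sum_add_distrib]
  refine sum_le_sum fun u _ ↦ ?_
  rcases eq_or_ne (deg g u) 0 with hd | hd
  · simp [hd, Nat.le_zero.mp ((deg_mono hg' u).trans_eq hd)]
  · calc _ ≤ deg g u * Real.log (vol g' {v | lab' v = lab' u}) +
          deg g u * (if u ∈ Y then Real.log 2 else 0) := by
          gcongr
          exact deg_mono hg' u
      _ = deg g u * (Real.log (vol g' {v | lab' v = lab' u}) +
          if u ∈ Y then Real.log 2 else 0) := by ring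
      _ ≤ deg g u * Real.log (vol g {v | lab v = lab u}) := by
          gcongr
          exact h_log u hd

/-- One round of the decomposition of a clustered graph `g`, into few heavy edges `h`, a piece `g'`
and the edges `l` lost by splitting clusters along sparse cuts. -/
structure IsDecompositionRound (s F : ℕ) (lab : V → V) (g : V → V → ℕ) (lab' : V → V)
    (h g' l : V → V → ℕ) : Prop where
  eq_add : g = h + g' + l
  symm : ∀ u v, l u v = l v u
  piece : IsExpanderPiece s F lab' g'
  heavy_le : (supportCard h : ℚ) ≤ 2 * (s * ∑ u, harmonic (deg g u))
  lost_le : F * Real.log 2 * vol l univ ≤ 2 * clusterPotential g lab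

lemma IsDecompositionRound.of_piece {s F : ℕ} {lab : V → V} {g : V → V → ℕ}
    (hg : IsExpanderPiece s F lab g) : IsDecompositionRound s F lab g lab 0 g 0 where
  eq_add := by simp
  symm _ _ := rfl
  piece := hg
  heavy_le := by
    have : (supportCard (0 : V → V → ℕ) : ℚ) = 0 := by simp [supportCard]
    rw [this]
    have : 0 ≤ ∑ u, harmonic (deg g u) := sum_nonneg fun u _ ↦ by
      simpa using harmonic_mono (Nat.zero_le (deg g u))
    positivity
  lost_le := by simpa [vol, deg] using clusterPotential_nonneg g lab

omit [DecidableEq V] in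
lemma exists_heavy_edge_removal {s : ℕ} {g : V → V → ℕ} (hg : ∀ u v, g u v = g v u) {a b : V}
    (hab : deg g b < s * g a b) :
    ∃ h g' : V → V → ℕ, g = h + g' ∧ (∀ u v, g' u v = g' v u) ∧ supportCard h ≤ 2 ∧ g' a b < g a b ∧
      s * ∑ u, harmonic (deg g' u) + 1 ≤ s * ∑ u, harmonic (deg g u) := by
  classical
  let P : V → V → Prop := fun u v ↦ u = a ∧ v = b ∨ u = b ∧ v = a
  let h : V → V → ℕ := fun u v ↦ if P u v then g u v else 0
  let g' : V → V → ℕ := fun u v ↦ if P u v then 0 else g u v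
  have h_add : g = h + g' := by
    ext u v
    by_cases huv : P u v <;> simp [h, g', huv]
  have h_pos : 0 < g a b := by
    by_contra! h0
    simp [Nat.le_zero.mp h0] at hab
  have h_le : g' ≤ g := by rw [h_add]; exact le_add_self
  have h_drop : s * harmonic (deg g' b) + 1 ≤ s * harmonic (deg g b) := by
    have h_deg : deg g b = deg g' b + deg h b := by
      rw [h_add, add_comm h]
      exact sum_add_distrib
    have h_edge : g a b ≤ deg h b := by
      refine le_trans ?_ (single_le_sum (fun _ _ ↦ Nat.zero_le _) (mem_univ a))
      simp [h, P, hg b a]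
    rw [h_deg] at hab ⊢
    exact mul_harmonic_add_one_le (hab.trans_le (Nat.mul_le_mul_left s h_edge))
  refine ⟨h, g', h_add, fun u v ↦ ?_, ?_, by simpa [g', P] using h_pos, ?_⟩
  · have : P u v ↔ P v u := by simp only [P]; tauto
    simp only [g', this, hg u v]
  · refine (card_le_card (t := {(a, b), (b, a)}) fun p hp ↦ ?_).trans card_le_two
    simp only [h, P, mem_filter, ne_eq, ite_eq_right_iff] at hp
    simp only [mem_insert, mem_singleton, Prod.ext_iff]
    tauto
  · rw [← add_sum_erase _ _ (mem_univ b), ← add_sum_erase _ _ (mem_univ b), mul_add, mul_add]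
    have : ∑ u ∈ univ.erase b, harmonic (deg g' u) ≤ ∑ u ∈ univ.erase b, harmonic (deg g u) :=
      sum_le_sum fun u _ ↦ harmonic_mono (deg_mono h_le u)
    linarith [mul_le_mul_of_nonneg_left this (Nat.cast_nonneg (α := ℚ) s)]

lemma exists_separated_pair {g : V → V → ℕ} {lab : V → V} {Y : Finset V}
    (hY : ∀ c, 2 * vol g {u ∈ Y | lab u = c} ≤ vol g {u | lab u = c}) (hpos : 0 < vol g Y) :
    ∃ u v, lab u = lab v ∧ ¬ (u ∈ Y ↔ v ∈ Y) := by
  by_contra! h_same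
  obtain ⟨u, hu, hdu⟩ : ∃ u ∈ Y, deg g u ≠ 0 := by
    by_contra! h0
    simp [vol, sum_eq_zero h0] at hpos
  have h_eq : Y.filter (lab · = lab u) = univ.filter (lab · = lab u) := by
    ext v
    simpa using fun huv ↦ (h_same v u huv).mpr hu
  have h_pos : deg g u ≤ vol g {v | lab v = lab u} := deg_le_vol g (by simp)
  have := hY (lab u)
  rw [h_eq] at this
  lia

lemma exists_sparse_cut_removal {F : ℕ} {g : V → V → ℕ} (hg : ∀ u v, g u v = g v u) {lab : V → V}
    (hlab : ∀ u v, g u v ≠ 0 → lab u = lab v) {Y : Finset V}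
    (hY : ∀ c, 2 * vol g {u ∈ Y | lab u = c} ≤ vol g {u | lab u = c})
    (hsparse : F * cutWeight g Y < vol g Y) :
    ∃ (lab' : V → V) (g' l : V → V → ℕ), g = g' + l ∧ (∀ u v, g' u v = g' v u) ∧
      (∀ u v, l u v = l v u) ∧ (∀ u v, g' u v ≠ 0 → lab' u = lab' v) ∧
      #{p : V × V | lab' p.1 = lab' p.2} < #{p : V × V | lab p.1 = lab p.2} ∧
      F * Real.log 2 * vol l univ + 2 * clusterPotential g' lab' ≤ 2 * clusterPotential g lab := by
  obtain ⟨lab', hlab'⟩ := exists_label_split lab Y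
  let g' : V → V → ℕ := fun u v ↦ if u ∈ Y ↔ v ∈ Y then g u v else 0
  let l : V → V → ℕ := fun u v ↦ if u ∈ Y ↔ v ∈ Y then 0 else g u v
  have h_add : g = g' + l := by
    ext u v
    by_cases huv : u ∈ Y ↔ v ∈ Y <;> simp [l, g', huv]
  have h_le : g' ≤ g := by rw [h_add]; exact le_self_add
  have h_lost : vol l univ = 2 * cutWeight g Y := (two_mul_cutWeight hg Y).symm
  refine ⟨lab', g', l, h_add, fun u v ↦ ?_, fun u v ↦ ?_, fun u v huv ↦ ?_, card_lt_card ?_, ?_⟩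
  · simp only [g', hg u v, iff_comm]
  · simp only [l, hg u v, iff_comm]
  · simp only [g', ne_eq, ite_eq_right_iff, not_forall] at huv
    exact (hlab' u v).mpr ⟨hlab u v huv.2, huv.1⟩
  · obtain ⟨u, v, huv, huvY⟩ := exists_separated_pair hY (hsparse.trans_le' (Nat.zero_le _))
    refine (ssubset_iff_of_subset <| monotone_filter_right _ fun p _ hp ↦
      ((hlab' _ _).mp hp).1).mpr ⟨(u, v), by simpa using huv, ?_⟩
    simp only [mem_filter, mem_univ, true_and, hlab' u v]
    exact fun huv' ↦ huvY huv'.2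
  · have h_cut : (F * cutWeight g Y : ℝ) ≤ vol g Y := by exact_mod_cast hsparse.le
    have h_split := clusterPotential_split_le h_le hlab' hY
    rw [h_lost]
    push_cast
    nlinarith [Real.log_pos one_lt_two]

omit [DecidableEq V] in
lemma vol_univ_lt_vol_univ {g g' : V → V → ℕ} (hg : g' ≤ g) {a b : V} (hab : g' a b < g a b) :
    vol g' univ < vol g univ :=
  sum_lt_sum (fun u _ ↦ deg_mono hg u)
    ⟨a, mem_univ a, sum_lt_sum (fun v _ ↦ hg a v) ⟨b, mem_univ b, hab⟩⟩

lemma exists_decomposition_round (s F : ℕ) {g : V → V → ℕ} (hg : ∀ u v, g u v = g v u)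
    {lab : V → V} (hlab : ∀ u v, g u v ≠ 0 → lab u = lab v) :
    ∃ lab' h g' l, IsDecompositionRound s F lab g lab' h g' l := by
  by_cases hlight : ∀ u v, s * g u v ≤ deg g v
  swap
  · push Not at hlight
    obtain ⟨a, b, hab⟩ := hlight
    obtain ⟨h₁, g₁, h_add, h_symm, h_card, h_lt, h_harm⟩ := exists_heavy_edge_removal hg hab
    have h_le : g₁ ≤ g := by rw [h_add]; exact le_add_self
    have := vol_univ_lt_vol_univ h_le h_lt
    obtain ⟨lab', h, g', l, hr⟩ := exists_decomposition_round s F h_symm (lab := lab)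
      fun u v huv ↦ hlab u v (Nat.pos_of_ne_zero huv |>.trans_le (h_le u v)).ne'
    refine ⟨lab', h₁ + h, g', l, by rw [h_add, hr.eq_add]; abel, hr.symm, hr.piece, ?_, ?_⟩
    · have : (supportCard (h₁ + h) : ℚ) ≤ 2 + supportCard h := by
        exact_mod_cast (supportCard_add_le h₁ h).trans (Nat.add_le_add_right h_card _)
      linarith [hr.heavy_le]
    · linarith [hr.lost_le, clusterPotential_mono h_le lab]
  by_cases hexp : ∀ Y : Finset V, (∀ c, 2 * vol g {u ∈ Y | lab u = c} ≤ vol g {u | lab u = c}) →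
      vol g Y ≤ F * cutWeight g Y
  · exact ⟨lab, 0, g, 0, .of_piece ⟨hg, hlab, hlight, hexp⟩⟩
  · push Not at hexp
    obtain ⟨Y, hY, hsparse⟩ := hexp
    obtain ⟨lab₁, g₁, l₁, h_add, h_symm, h_symm_lost, h_lab, _, h_pot⟩ :=
      exists_sparse_cut_removal hg hlab hY hsparse
    have h_le : g₁ ≤ g := by rw [h_add]; exact le_self_add
    have : vol g₁ univ ≤ vol g univ := vol_le_vol h_le subset_rfl
    obtain ⟨lab', h, g', l, hr⟩ := exists_decomposition_round s F h_symm h_lab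
    refine ⟨lab', h, g', l₁ + l, by rw [h_add, hr.eq_add]; abel,
      fun u v ↦ congrArg₂ (· + ·) (h_symm_lost u v) (hr.symm u v), hr.piece,
      hr.heavy_le.trans ?_, ?_⟩
    · gcongr
      exact harmonic_mono (deg_mono h_le _)
    · rw [vol_univ_add]
      push_cast
      linarith [hr.lost_le]
termination_by vol g univ + #{p : V × V | lab p.1 = lab p.2}
decreasing_by all_goals lia

lemma exists_halving_round [Nonempty V] {s F D : ℕ} (hF : 0 < F)
    (hFD : 4 * Real.log D ≤ F * Real.log 2) {g : V → V → ℕ} (hg : ∀ u v, g u v = g v u)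
    (hD : vol g univ ≤ D) :
    ∃ (lab' : V → V) (h g' l : V → V → ℕ), g = h + g' + l ∧ (∀ u v, l u v = l v u) ∧
      IsExpanderPiece s F lab' g' ∧
      (supportCard h : ℚ) ≤ 2 * (s * ∑ u, harmonic (deg g u)) ∧ 2 * vol l univ ≤ vol g univ := by
  obtain ⟨c⟩ := ‹Nonempty V›
  obtain ⟨lab', h, g', l, hr⟩ :=
    exists_decomposition_round s F hg (lab := fun _ ↦ c) fun _ _ _ ↦ rfl
  refine ⟨lab', h, g', l, hr.eq_add, hr.symm, hr.piece, hr.heavy_le, ?_⟩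
  have h_lost := hr.lost_le
  rw [clusterPotential_const] at h_lost
  have h_log : Real.log (vol g univ) ≤ Real.log D := log_natCast_mono hD
  have h_pos : 0 < F * Real.log 2 := by positivity
  have : (2 * vol l univ : ℝ) ≤ vol g univ := by
    refine le_of_mul_le_mul_left ?_ h_pos
    nlinarith [Nat.cast_nonneg (α := ℝ) (vol g univ)]
  exact_mod_cast this

lemma exists_expander_decomposition [Nonempty V] {s F D : ℕ} (hF : 0 < F)
    (hFD : 4 * Real.log D ≤ F * Real.log 2) (T : ℕ) {g : V → V → ℕ} (hg : ∀ u v, g u v = g v u)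
    (hD : vol g univ ≤ D) (hT : vol g univ < 2 ^ T) :
    ∃ (lab : Fin T → V → V) (p : Fin T → V → V → ℕ) (h : V → V → ℕ), g = h + ∑ j, p j ∧
      (∀ j, IsExpanderPiece s F (lab j) (p j)) ∧
      (supportCard h : ℚ) ≤ T * (2 * (s * ∑ u, harmonic (deg g u))) := by
  induction T generalizing g with
  | zero =>
    refine ⟨Fin.elim0, Fin.elim0, 0, ?_, fun j ↦ j.elim0, by simp [supportCard]⟩
    have : vol g univ = 0 := by simpa using hT
    simp only [vol, deg, sum_eq_zero_iff, mem_univ, true_imp_iff] at this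
    ext u v
    simp [this]
  | succ T ih =>
    obtain ⟨lab₀, h₀, p₀, l, h_add, h_symm, h_piece, h_heavy, h_half⟩ :=
      exists_halving_round (s := s) hF hFD hg hD
    have h_le : l ≤ g := by rw [h_add]; exact le_add_self
    obtain ⟨lab, p, h, h_add', h_pieces, h_heavy'⟩ :=
      ih h_symm (by lia) (by rw [pow_succ] at hT; lia)
    refine ⟨Fin.cons lab₀ lab, Fin.cons p₀ p, h₀ + h, ?_, ?_, ?_⟩
    · rw [Fin.sum_univ_succ]
      simp only [Fin.cons_zero, Fin.cons_succ]
      rw [h_add, h_add']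
      abel
    · simpa [Fin.forall_fin_succ] using ⟨h_piece, h_pieces⟩
    · have h_card : (supportCard (h₀ + h) : ℚ) ≤ supportCard h₀ + supportCard h := by
        exact_mod_cast supportCard_add_le h₀ h
      have h_mono : (T : ℚ) * (2 * (s * ∑ u, harmonic (deg l u))) ≤
          T * (2 * (s * ∑ u, harmonic (deg g u))) := by
        gcongr
        exact harmonic_mono (deg_mono h_le _)
      push_cast
      linarith

end ExpanderDecomposition

section NeighborSampling

variable {V R : Type*} [Fintype V]

/-- `G u` turns a uniform seed into a random neighbour of `u`, drawn with probability proportional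
to the multiplicities in `g`. -/
def IsNeighborSampler [Fintype R] (g : V → V → ℕ) (G : V → R → V) : Prop :=
  ∀ u (φ : V → ℝ), deg g u * 𝔼 r, φ (G u r) = ∑ v, g u v * φ v

/-- `D!` is a common multiple of all degrees up to `D`, so that one seed space serves all
vertices. -/
lemma exists_neighborSampler (z : V) {D : ℕ} {g : V → V → ℕ} (hD : ∀ u, deg g u ≤ D) :
    ∃ G : V → Fin D.factorial → V, IsNeighborSampler g G ∧ ∀ u, deg g u = 0 → ∀ r, G u r = z := by
  have h_vertex : ∀ u, ∃ G : Fin D.factorial → V, (∀ φ : V → ℝ,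
      deg g u * 𝔼 r, φ (G r) = ∑ v, g u v * φ v) ∧ (deg g u = 0 → ∀ r, G r = z) := by
    intro u
    rcases Nat.eq_zero_or_pos (deg g u) with h0 | hpos
    · have : ∀ v, g u v = 0 := fun v ↦ sum_eq_zero_iff.mp h0 v (mem_univ v)
      exact ⟨fun _ ↦ z, fun φ ↦ by simp [h0, this], fun _ _ ↦ rfl⟩
    · obtain ⟨q, hq⟩ := Nat.dvd_factorial hpos (hD u)
      have h_card : Fintype.card (Fin D.factorial) = Fintype.card (Σ v, Fin (g u v * q)) := by
        simp [hq, deg, sum_mul]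
      have hq0 : (q : ℝ) ≠ 0 := by
        rintro h0
        simp_all [D.factorial_ne_zero]
      let e := Fintype.equivOfCardEq h_card
      refine ⟨fun r ↦ (e r).1, fun φ ↦ ?_, fun h0 ↦ absurd h0 hpos.ne'⟩
      rw [Fintype.expect_equiv e _ (fun x ↦ φ x.1) fun _ ↦ rfl, Fintype.expect_eq_sum_div_card,
        Fintype.sum_sigma, ← h_card, Fintype.card_fin, hq]
      simp only [sum_const, card_univ, Fintype.card_fin, nsmul_eq_mul, Nat.cast_mul]
      have h_scale : ∑ v, (g u v * q : ℝ) * φ v = q * ∑ v, g u v * φ v := by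
        rw [mul_sum]
        exact sum_congr rfl fun v _ ↦ by ring
      have : (deg g u : ℝ) ≠ 0 := by positivity
      change deg g u * ((∑ v, (g u v * q : ℝ) * φ v) / (deg g u * q)) = _
      rw [h_scale]
      field_simp
  choose G hG using h_vertex
  exact ⟨G, fun u ↦ (hG u).1, fun u ↦ (hG u).2⟩

variable [DecidableEq V]

/-- The centred contribution of a sampled neighbour `x` of `u` to the estimate of the number of
edges from `u` to `Y`. -/
noncomputable def deviation (g : V → V → ℕ) (Y : Finset V) (u x : V) : ℝ :=
  ∑ v ∈ Y, (g u v : ℝ) - deg g u * if x ∈ Y then 1 else 0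

variable [Fintype R]

lemma IsNeighborSampler.expect_mem {g : V → V → ℕ} {G : V → R → V} (hG : IsNeighborSampler g G)
    (u : V) (Y : Finset V) :
    deg g u * 𝔼 r, (if G u r ∈ Y then (1 : ℝ) else 0) = ∑ v ∈ Y, (g u v : ℝ) := by
  simpa using hG u fun v ↦ if v ∈ Y then 1 else 0

lemma IsNeighborSampler.expect_deviation [Nonempty R] {g : V → V → ℕ} {G : V → R → V}
    (hG : IsNeighborSampler g G) (u : V) (Y : Finset V) :
    𝔼 r, deviation g Y u (G u r) = 0 := by
  simp only [deviation]
  rw [expect_sub_distrib, ← mul_expect, hG.expect_mem, Fintype.expect_const, sub_self]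

lemma IsNeighborSampler.expect_deviation_sq_le [Nonempty R] {g : V → V → ℕ} {G : V → R → V}
    (hG : IsNeighborSampler g G) (u : V) (Y : Finset V) :
    𝔼 r, deviation g Y u (G u r) ^ 2 ≤
      deg g u * ∑ v ∈ Y, (g u v : ℝ) := by
  set a := ∑ v ∈ Y, (g u v : ℝ) with ha
  have h_expand : ∀ r, deviation g Y u (G u r) ^ 2 =
      a ^ 2 + (deg g u - 2 * a) * (deg g u * if G u r ∈ Y then 1 else 0) := by
    intro r
    rw [deviation]
    split_ifs <;> ring
  simp_rw [h_expand]
  rw [expect_add_distrib, Fintype.expect_const, ← mul_expect, ← mul_expect, hG.expect_mem, ← ha]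
  nlinarith [sq_nonneg a]

end NeighborSampling

section PieceEstimate

variable {V R : Type*} [Fintype V] [DecidableEq V]

/-- The vertex set that has, in every cluster, the same boundary as `S`, but is a minority with
respect to the degrees `d`. It only depends on the clustering and on the degrees. -/
def minoritySide (lab : V → V) (d : V → ℕ) (S : Finset V) : Finset V :=
  {u | u ∈ S ↔ ∑ v ∈ S with lab v = lab u, d v ≤ ∑ v ∈ Sᶜ with lab v = lab u, d v}

/-- The estimate of a cut of an expander piece with degrees `d`, from `s` sampled neighbours
`X u` of each vertex `u`. -/
noncomputable def pieceEstimate {s : ℕ} (lab : V → V) (d : V → ℕ) (X : V → Fin s → V)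
    (S : Finset V) : ℝ :=
  ∑ u ∈ minoritySide lab d S, d u * 𝔼 i, if X u i ∈ minoritySide lab d S then 0 else 1

variable {s F : ℕ} {lab : V → V} {g : V → V → ℕ}

lemma IsExpanderPiece.cutWeight_minoritySide (hg : IsExpanderPiece s F lab g) (d : V → ℕ)
    (S : Finset V) : cutWeight g (minoritySide lab d S) = cutWeight g S := by
  refine cutWeight_congr hg.symm fun u v huv ↦ ?_
  simp only [minoritySide, mem_filter, mem_univ, true_and, hg.lab_eq u v huv]
  tauto

lemma two_mul_vol_minoritySide_le (lab : V → V) (g : V → V → ℕ) (S : Finset V) (c : V) :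
    2 * vol g {u ∈ minoritySide lab (deg g) S | lab u = c} ≤ vol g {u | lab u = c} := by
  set a := ∑ v ∈ S with lab v = c, deg g v with ha
  set b := ∑ v ∈ Sᶜ with lab v = c, deg g v with hb
  have h_total : vol g {u | lab u = c} = a + b := by
    rw [ha, hb, vol, sum_filter, sum_filter, sum_filter, sum_add_sum_compl]
  have h_minority : vol g {u ∈ minoritySide lab (deg g) S | lab u = c} = min a b := by
    have h_filter : (minoritySide lab (deg g) S).filter (lab · = c) =
        (if a ≤ b then S else Sᶜ).filter (lab · = c) := by
      ext u
      by_cases huc : lab u = c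
      · have : u ∈ minoritySide lab (deg g) S ↔ (u ∈ S ↔ a ≤ b) := by
          simp [minoritySide, huc, ha, hb]
        by_cases hab : a ≤ b <;> simp [huc, hab, this]
      · simp [huc]
    rw [h_filter, vol, min_def, apply_ite (filter _)]
    split_ifs <;> rfl
  rw [h_total, h_minority]
  lia

lemma IsExpanderPiece.vol_minoritySide_le (hg : IsExpanderPiece s F lab g) (S : Finset V) :
    vol g (minoritySide lab (deg g) S) ≤ F * cutWeight g S := by
  rw [← hg.cutWeight_minoritySide (deg g) S]
  exact hg.expands _ (two_mul_vol_minoritySide_le lab g S)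

lemma IsExpanderPiece.relabel (hg : IsExpanderPiece s F lab g) {lab' : V → V}
    (hlab : ∀ u, deg g u ≠ 0 → lab' u = lab u) : IsExpanderPiece s F lab' g where
  symm := hg.symm
  lab_eq u v huv := by
    have h_deg : ∀ u v, g u v ≠ 0 → deg g u ≠ 0 := fun u v huv h0 ↦
      huv (sum_eq_zero_iff.mp h0 v (mem_univ v))
    rw [hlab u (h_deg u v huv), hlab v (h_deg v u (by rwa [hg.symm])), hg.lab_eq u v huv]
  light := hg.light
  expands Y hY := by
    have h_vol : ∀ (A : Finset V) c, vol g {u ∈ A | lab' u = c} = vol g {u ∈ A | lab u = c} := by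
      intro A c
      simp only [vol, sum_filter]
      refine sum_congr rfl fun u _ ↦ ?_
      by_cases hu : deg g u = 0
      · simp [hu]
      · rw [hlab u hu]
    exact hg.expands Y fun c ↦ by simpa only [h_vol] using hY c

variable [Fintype R]

lemma pieceEstimate_sub_cutWeight [NeZero s] (X : V → Fin s → V) (S : Finset V)
    (hg : IsExpanderPiece s F lab g) :
    pieceEstimate lab (deg g) X S - (cutWeight g S : ℕ) =
      ∑ p : V × Fin s, if p.1 ∈ minoritySide lab (deg g) S then
        deviation g (minoritySide lab (deg g) S) p.1 (X p.1 p.2) / s else 0 := by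
  rw [← hg.cutWeight_minoritySide (deg g) S, pieceEstimate]
  set Y := minoritySide lab (deg g) S
  have h_cut : ((cutWeight g Y : ℕ) : ℝ) = ∑ u ∈ Y, (deg g u - ∑ v ∈ Y, (g u v : ℝ)) := by
    simp only [cutWeight, crossWeight, deg]
    push_cast
    refine sum_congr rfl fun u _ ↦ ?_
    rw [eq_sub_iff_add_eq', sum_add_sum_compl]
  rw [h_cut, ← sum_sub_distrib, Fintype.sum_prod_type]
  simp only [deviation, sum_ite_irrel, sum_const_zero, sum_ite_mem, univ_inter]
  refine sum_congr rfl fun u _ ↦ ?_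
  have h_compl : 𝔼 i, (if X u i ∈ Y then (0 : ℝ) else 1) =
      1 - 𝔼 i, if X u i ∈ Y then (1 : ℝ) else 0 := by
    rw [eq_sub_iff_add_eq, ← expect_add_distrib, ← Fintype.expect_one (ι := Fin s)]
    exact expect_congr rfl fun i _ ↦ by split_ifs <;> simp
  rw [h_compl, Fintype.expect_eq_sum_div_card, Fintype.card_fin, ← sum_div, sum_sub_distrib,
    ← mul_sum, sum_const, card_univ, Fintype.card_fin, nsmul_eq_mul]
  have : (s : ℝ) ≠ 0 := NeZero.ne _
  field_simp
  ring

lemma IsExpanderPiece.sum_mem_le [NeZero s] (hg : IsExpanderPiece s F lab g) (u : V)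
    (Y : Finset V) : ∑ v ∈ Y, (g u v : ℝ) ≤ vol g Y / s := by
  rw [le_div_iff₀ (Nat.cast_pos.mpr (NeZero.pos s)), sum_mul, vol, Nat.cast_sum]
  refine sum_le_sum fun v _ ↦ ?_
  rw [mul_comm]
  exact_mod_cast hg.light u v

lemma IsExpanderPiece.expect_pieceEstimate_sub_sq_le [NeZero s] [Nonempty R]
    (hg : IsExpanderPiece s F lab g) {G : V → R → V} (hG : IsNeighborSampler g G) (S : Finset V) :
    𝔼 ω : V × Fin s → R, (pieceEstimate lab (deg g) (fun u i ↦ G u (ω (u, i))) S -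
      (cutWeight g S : ℕ)) ^ 2 ≤ (F * (cutWeight g S : ℕ) / s) ^ 2 := by
  simp_rw [pieceEstimate_sub_cutWeight _ S hg]
  have h_vol : ((vol g (minoritySide lab (deg g) S) : ℕ) : ℝ) ≤ F * (cutWeight g S : ℕ) := by
    exact_mod_cast hg.vol_minoritySide_le S
  set Y := minoritySide lab (deg g) S
  let h : V × Fin s → R → ℝ := fun p r ↦
    if p.1 ∈ Y then deviation g Y p.1 (G p.1 r) / s else 0
  have h_centered : ∀ p, 𝔼 r, h p r = 0 := by
    intro p
    by_cases hp : p.1 ∈ Y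
    · simp only [h, hp, if_true, ← expect_div, hG.expect_deviation, zero_div]
    · simp [h, hp]
  let b : V → ℝ := fun u ↦ deg g u * (vol g Y / s) / s ^ 2
  have h_var : ∀ p, 𝔼 r, h p r ^ 2 ≤ if p.1 ∈ Y then b p.1 else 0 := by
    intro p
    by_cases hp : p.1 ∈ Y
    · simp only [h, hp, if_true, div_pow, ← expect_div]
      refine div_le_div_of_nonneg_right ((hG.expect_deviation_sq_le p.1 Y).trans ?_) (by positivity)
      gcongr
      exact hg.sum_mem_le p.1 Y
    · simp [h, hp]
  calc _ = ∑ p, 𝔼 r, h p r ^ 2 := expect_sum_sq_of_centered h_centered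
    _ ≤ ∑ p : V × Fin s, if p.1 ∈ Y then b p.1 else 0 :=
        sum_le_sum fun p _ ↦ h_var p
    _ = (vol g Y / s) ^ 2 := by
        rw [Fintype.sum_prod_type]
        simp only [b, sum_const, card_univ, Fintype.card_fin, nsmul_eq_mul, ← mul_sum, sum_ite_mem,
          univ_inter, ← sum_div, ← sum_mul]
        rw [← Nat.cast_sum, ← vol]
        have : (s : ℝ) ≠ 0 := NeZero.ne _
        field_simp
    _ ≤ _ := by gcongr

end PieceEstimate

section WindowSketch

variable {V : Type*} [Fintype V] [DecidableEq V] {s F T D : ℕ}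

/-- What is stored at a vertex for each of `T` expander pieces: its cluster, its degree, and `s`
sampled neighbours. -/
abbrev VertexSketch (V : Type*) (s T D : ℕ) : Type _ :=
  Fin T → V × Fin (D + 1) × (Fin s → V)

/-- The sketch of a vertex that is isolated in all pieces, the vertex `z` serving as junk. -/
def VertexSketch.trivial (s T D : ℕ) (z : V) : VertexSketch V s T D :=
  fun _ ↦ (z, 0, fun _ ↦ z)

/-- The cut estimate computed from the sketches `A u` of the vertices and the explicitly stored
multiplicities `h`. -/
noncomputable def windowEstimate (A : V → VertexSketch V s T D) (h : V → V → Fin (D + 1))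
    (S : Finset V) : ℝ :=
  (cutWeight (fun u v ↦ (h u v : ℕ)) S : ℕ) +
    ∑ j, pieceEstimate (fun u ↦ (A u j).1) (fun u ↦ (A u j).2.1) (fun u ↦ (A u j).2.2) S

lemma expect_sum_pieceEstimate_sub_sq_le {R ι : Type*} [Fintype R] [Nonempty R] [Fintype ι]
    [NeZero s] {lab : ι → V → V} {p : ι → V → V → ℕ} {G : ι → V → R → V}
    (hp : ∀ j, IsExpanderPiece s F (lab j) (p j)) (hG : ∀ j, IsNeighborSampler (p j) (G j))
    (S : Finset V) :
    𝔼 ω : V × Fin s → R, (∑ j, pieceEstimate (lab j) (deg (p j)) (fun u i ↦ G j u (ω (u, i))) S -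
      (cutWeight (∑ j, p j) S : ℕ)) ^ 2 ≤ (F * (cutWeight (∑ j, p j) S : ℕ) / s) ^ 2 := by
  have h_sum := expect_sq_sum_le univ (fun _ _ ↦ by positivity) fun j _ ↦
    (hp j).expect_pieceEstimate_sub_sq_le (hG j) S
  rw [cutWeight_sum]
  push_cast
  simpa only [sum_sub_distrib, mul_sum, sum_div] using h_sum

lemma exists_windowSketch [NeZero s] (z : V) (hF : 0 < F)
    (hFD : 4 * Real.log D ≤ F * Real.log 2) {g : V → V → ℕ} (hg : ∀ u v, g u v = g v u)
    (hD : vol g univ ≤ D) (hT : vol g univ < 2 ^ T) :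
    ∃ (A : (V × Fin s → Fin D.factorial) → V → VertexSketch V s T D) (h : V → V → Fin (D + 1)),
      (∀ ω u, deg g u = 0 → A ω u = .trivial s T D z) ∧
      (#{p : V × V | h p.1 p.2 ≠ 0} : ℚ) ≤ T * (2 * (s * ∑ u, harmonic (deg g u))) ∧
      ∀ S, 𝔼 ω, (windowEstimate (A ω) h S - (cutWeight g S : ℕ)) ^ 2 ≤
        (F * (cutWeight g S : ℕ) / s) ^ 2 := by
  have : Nonempty V := ⟨z⟩
  have : Nonempty (Fin D.factorial) := ⟨⟨0, D.factorial_pos⟩⟩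
  obtain ⟨lab₀, p, h, rfl, hp₀, h_support⟩ := exists_expander_decomposition hF hFD T hg hD hT
  set g := h + ∑ j, p j
  have hpg : ∀ j, p j ≤ g := fun j ↦
    (single_le_sum (f := p) (fun _ _ ↦ Pi.le_def.mpr fun _ ↦ Pi.le_def.mpr fun _ ↦ Nat.zero_le _)
      (mem_univ j)).trans (Pi.le_def.mpr fun _ ↦ Pi.le_def.mpr fun _ ↦ Nat.le_add_left _ _)
  have h_deg : ∀ u, deg g u ≤ D := fun u ↦ (deg_le_vol g (mem_univ u)).trans hD
  have hpD : ∀ j u, deg (p j) u ≤ D := fun j u ↦ (deg_mono (hpg j) u).trans (h_deg u)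
  have hhD : ∀ u v, h u v < D + 1 := fun u v ↦ Nat.lt_succ_of_le <|
    (Nat.le_add_right _ _).trans ((single_le_sum (f := g u) (fun _ _ ↦ Nat.zero_le _)
      (mem_univ v)).trans (h_deg u))
  let lab : Fin T → V → V := fun j u ↦ if deg g u = 0 then z else lab₀ j u
  have hp : ∀ j, IsExpanderPiece s F (lab j) (p j) := fun j ↦ (hp₀ j).relabel fun u hu ↦
    if_neg fun h0 ↦ hu (Nat.eq_zero_of_le_zero ((deg_mono (hpg j) u).trans_eq h0))
  choose G hG hGz using fun j ↦ exists_neighborSampler z (hpD j)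
  refine ⟨fun ω u j ↦ (lab j u, ⟨deg (p j) u, Nat.lt_succ_of_le (hpD j u)⟩,
    fun i ↦ G j u (ω (u, i))), fun u v ↦ ⟨h u v, hhD u v⟩, fun ω u hu ↦ ?_, ?_, fun S ↦ ?_⟩
  · have hpu : ∀ j, deg (p j) u = 0 := fun j ↦
      Nat.eq_zero_of_le_zero (hu ▸ deg_mono (hpg j) u)
    ext1 j
    simp [VertexSketch.trivial, lab, hu, hpu, hGz]
  · simpa only [supportCard, ne_eq, Fin.mk_eq_zero] using h_support
  · have h_cut : cutWeight g S = cutWeight h S + cutWeight (∑ j, p j) S := cutWeight_add _ _ _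
    simp only [windowEstimate, h_cut, Nat.cast_add, add_sub_add_left_eq_sub]
    refine (expect_sum_pieceEstimate_sub_sq_le hp hG S).trans ?_
    gcongr
    simp

end WindowSketch

section Hierarchy

variable {V : Type*} [Fintype V] [LinearOrder V]

/-- The representative of the class of `u`, namely its least element. -/
noncomputable def rep (r : Setoid V) (u : V) : V :=
  ({v | r u v} : Finset V).min' ⟨u, by simp⟩

lemma rel_rep (r : Setoid V) (u : V) : r u (rep r u) :=
  (mem_filter.mp (min'_mem ({v | r u v} : Finset V) _)).2

lemma rep_le {r : Setoid V} {u v : V} (huv : r u v) : rep r u ≤ v :=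
  min'_le _ _ (by simpa using huv)

lemma rep_eq_rep_iff {r : Setoid V} {u v : V} : rep r u = rep r v ↔ r u v :=
  ⟨fun h ↦ r.trans (rel_rep r u) (h ▸ r.symm (rel_rep r v)), fun huv ↦ le_antisymm
    (rep_le (r.trans huv (rel_rep r v))) (rep_le (r.trans (r.symm huv) (rel_rep r u)))⟩

lemma rep_rep_of_le {r s : Setoid V} (hrs : r ≤ s) (u : V) : rep s (rep r u) = rep s u :=
  rep_eq_rep_iff.mpr (hrs (r.symm (rel_rep r u)))

lemma rep_rep (r : Setoid V) (u : V) : rep r (rep r u) = rep r u := rep_rep_of_le le_rfl u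

lemma rep_bot (u : V) : rep ⊥ u = u := (rel_rep ⊥ u).symm

/-- The first partition of a refining sequence in which `a` represents its class. -/
noncomputable def birth (r : ℕ → Setoid V) (a : V) : ℕ := sInf {k | rep (r k) a = a}

/-- The representative of `a` in the last partition before `a` becomes a representative. -/
noncomputable def parent (r : ℕ → Setoid V) (a : V) : V := rep (r (birth r a - 1)) a

variable {r : ℕ → Setoid V} {K : ℕ}

lemma birth_le_iff (hr : Antitone r) (hK : r K = ⊥) {a : V} {k : ℕ} :
    birth r a ≤ k ↔ rep (r k) a = a := by
  refine ⟨fun hk ↦ ?_, fun h ↦ Nat.sInf_le h⟩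
  have h_birth : rep (r (birth r a)) a = a :=
    Nat.sInf_mem (s := {k | rep (r k) a = a}) ⟨K, by simp [hK, rep_bot]⟩
  refine le_antisymm (rep_le ((r k).refl a)) ?_
  calc a = rep (r (birth r a)) (rep (r k) a) := by rw [rep_rep_of_le (hr hk), h_birth]
    _ ≤ rep (r k) a := rep_le ((r _).refl _)

lemma birth_le (hr : Antitone r) (hK : r K = ⊥) (a : V) : birth r a ≤ K :=
  (birth_le_iff hr hK).mpr (hK ▸ rep_bot a)

lemma parent_lt {a : V} (ha : 0 < birth r a) : parent r a < a := by
  refine lt_of_le_of_ne (rep_le ((r _).refl a)) fun h ↦ ?_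
  exact Nat.notMem_of_lt_sInf (Nat.sub_one_lt_of_lt ha) h

lemma rep_parent (hr : Antitone r) {a : V} {k : ℕ} (hk : k < birth r a) :
    rep (r k) (parent r a) = rep (r k) a :=
  rep_rep_of_le (hr (Nat.le_sub_one_of_lt hk)) a

/-- For a forest with levels `d` and parents `p`, the last level at which a vertex is separated
from its parent by `S`. -/
def splitLevel (d : V → ℕ) (p : V → V) (S : Finset V) : ℕ :=
  ({a | ¬(a ∈ S ↔ p a ∈ S)} : Finset V).sup d

lemma rep_splitLevel_mem_iff (hr : Antitone r) (hK : r K = ⊥) (S : Finset V) (u : V) :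
    rep (r (splitLevel (birth r) (parent r) S)) u ∈ S ↔ u ∈ S := by
  induction u using WellFoundedLT.induction with
  | ind u ih =>
    rcases le_or_gt (birth r u) (splitLevel (birth r) (parent r) S) with hu | hu
    · rw [(birth_le_iff hr hK).mp hu]
    · have h_parent : u ∈ S ↔ parent r u ∈ S := by
        by_contra h
        exact hu.not_ge (le_sup (f := birth r) (by simpa using h))
      rw [← rep_parent hr hu, ih _ (parent_lt (Nat.zero_lt_of_lt hu)), h_parent]

lemma splitLevel_le (hr : Antitone r) (hK : r K = ⊥) (S : Finset V) :
    splitLevel (birth r) (parent r) S ≤ K :=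
  Finset.sup_le fun a _ ↦ birth_le hr hK a

omit [Fintype V] [LinearOrder V] in
lemma exists_rel_separated_of_eqvGen {ρ : V → V → Prop} {S : Finset V} {u v : V}
    (huv : Relation.EqvGen ρ u v) (hS : ¬(u ∈ S ↔ v ∈ S)) :
    ∃ x y, ρ x y ∧ ¬(x ∈ S ↔ y ∈ S) := by
  contrapose! hS
  induction huv with
  | rel x y hxy => exact hS x y hxy
  | refl => rfl
  | symm _ _ _ ih => exact ih.symm
  | trans _ _ _ _ _ ih₁ ih₂ => exact ih₁.trans ih₂

lemma exists_separated_of_splitLevel_pos {S : Finset V}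
    (hS : 0 < splitLevel (birth r) (parent r) S) :
    ∃ u v, r (splitLevel (birth r) (parent r) S - 1) u v ∧ ¬(u ∈ S ↔ v ∈ S) := by
  have h_nonempty : ({a | ¬(a ∈ S ↔ parent r a ∈ S)} : Finset V).Nonempty := by
    rw [nonempty_iff_ne_empty]
    rintro h_empty
    simp [splitLevel, h_empty] at hS
  obtain ⟨a, ha, h_sup⟩ := exists_mem_eq_sup _ h_nonempty (birth r)
  refine ⟨a, parent r a, ?_, (mem_filter.mp ha).2⟩
  rw [splitLevel, h_sup]
  exact rel_rep _ a

/-- The representatives that were born during the last `c` levels. -/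
noncomputable def recentlyBorn (r : ℕ → Setoid V) (c k : ℕ) : Finset V :=
  {a | birth r a ≤ k ∧ k < birth r a + c}

lemma sum_card_recentlyBorn_le (r : ℕ → Setoid V) (c K : ℕ) :
    ∑ k ∈ range K, #(recentlyBorn r c k) ≤ c * Fintype.card V := by
  calc ∑ k ∈ range K, #(recentlyBorn r c k)
      = ∑ a, #{k ∈ range K | birth r a ≤ k ∧ k < birth r a + c} := by
        simp only [recentlyBorn, card_filter]
        exact sum_comm
    _ ≤ ∑ a : V, #(Ico (birth r a) (birth r a + c)) := by
        gcongr with a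
        exact fun k hk ↦ mem_Ico.mpr (mem_filter.mp hk).2
    _ = c * Fintype.card V := by simp [mul_comm]

end Hierarchy

section Contraction

variable {V : Type*} [Fintype V] [DecidableEq V]

/-- The multigraph obtained from `g` by moving every vertex `u` to `f u`. -/
def contract (f : V → V) (g : V → V → ℕ) (a b : V) : ℕ :=
  ∑ u with f u = a, ∑ v with f v = b, g u v

lemma contract_comm {g : V → V → ℕ} (hg : ∀ u v, g u v = g v u) (f : V → V) (a b : V) :
    contract f g a b = contract f g b a := by
  rw [contract, sum_comm]
  exact sum_congr rfl fun v _ ↦ sum_congr rfl fun u _ ↦ hg u v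

lemma crossWeight_contract (f : V → V) (g : V → V → ℕ) (A B : Finset V) :
    crossWeight (contract f g) A B = crossWeight g {u | f u ∈ A} {v | f v ∈ B} := by
  simp only [crossWeight, contract]
  rw [← sum_fiberwise_eq_sum_filter]
  refine sum_congr rfl fun a _ ↦ ?_
  rw [sum_comm]
  exact sum_congr rfl fun u _ ↦ sum_fiberwise_eq_sum_filter _ _ _ _

lemma exists_of_deg_contract_ne_zero {f : V → V} {g : V → V → ℕ} {a : V}
    (ha : deg (contract f g) a ≠ 0) : ∃ u v, f u = a ∧ g u v ≠ 0 := by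
  obtain ⟨b, -, hb⟩ := exists_ne_zero_of_sum_ne_zero ha
  obtain ⟨u, hu, hub⟩ := exists_ne_zero_of_sum_ne_zero hb
  obtain ⟨v, -, hv⟩ := exists_ne_zero_of_sum_ne_zero hub
  exact ⟨u, v, (mem_filter.mp hu).2, hv⟩

end Contraction

section Quantization

variable {V : Type*} {w : V → V → ℝ} {b k K : ℕ}

/-- The partition of the vertices into the connected components of the graph of edges of weight at
least `b ^ k`. -/
def scale (w : V → V → ℝ) (b k : ℕ) : Setoid V :=
  Relation.EqvGen.setoid fun u v ↦ (b : ℝ) ^ k ≤ w u v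

lemma scale_of_pow_le {u v : V} (huv : (b : ℝ) ^ k ≤ w u v) : scale w b k u v :=
  Relation.EqvGen.rel u v huv

lemma scale_antitone (hb : 1 ≤ b) : Antitone (scale w b) := fun k l hkl u v huv ↦
  Relation.EqvGen.mono (fun _ _ h ↦
    (pow_le_pow_right₀ (by exact_mod_cast hb) hkl).trans h) u v huv

lemma scale_eq_bot (hK : ∀ u v, w u v < (b : ℝ) ^ K) : scale w b K = ⊥ := by
  refine le_bot_iff.mp fun u v huv ↦ ?_
  induction huv with
  | rel x y hxy => exact absurd hxy (hK x y).not_ge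
  | refl => rfl
  | symm _ _ _ ih => exact ih.symm
  | trans _ _ _ _ _ ih₁ ih₂ => exact ih₁.trans ih₂

/-- The resolution `b ^ (k - 4)` at which the weights of level `k` are stored. -/
noncomputable def levelUnit (b k : ℕ) : ℝ := (b : ℝ) ^ k / (b : ℝ) ^ 4

lemma levelUnit_pos (hb : 1 ≤ b) (k : ℕ) : 0 < levelUnit b k := by
  have : (0 : ℝ) < b := by exact_mod_cast hb
  exact div_pos (by positivity) (by positivity)

/-- The weights between the components of level `k`, in multiples of the resolution. They are at
most `b ^ 4`, as edges between components have weight less than `b ^ k`. -/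
noncomputable def levelWeight (w : V → V → ℝ) (b k : ℕ) (u v : V) : ℕ :=
  if scale w b k u v then 0 else ⌊w u v / levelUnit b k⌋₊

lemma levelWeight_comm (hw : ∀ u v, w u v = w v u) (u v : V) :
    levelWeight w b k u v = levelWeight w b k v u := by
  simp only [levelWeight, hw u v, (scale w b k).comm' (x := u)]

lemma levelWeight_le (hb : 1 ≤ b) (u v : V) : levelWeight w b k u v ≤ b ^ 4 := by
  rw [levelWeight]
  split_ifs with h
  · exact Nat.zero_le _
  · have : (0 : ℝ) < b := by exact_mod_cast hb
    refine Nat.floor_le_of_le ((div_le_iff₀ (levelUnit_pos hb k)).mpr ?_)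
    rw [levelUnit, Nat.cast_pow, mul_div_cancel₀ _ (by positivity)]
    exact (lt_of_not_ge fun h_le ↦ h (scale_of_pow_le h_le)).le

lemma scale_sub_of_levelWeight_ne_zero (hb : 1 ≤ b) (hw : ∀ u v, w u v ≠ 0 → 1 ≤ w u v) {u v : V}
    (huv : levelWeight w b k u v ≠ 0) : scale w b (k - 4) u v ∧ ¬scale w b k u v := by
  rw [levelWeight, ne_eq, ite_eq_left_iff, Classical.not_imp, Nat.floor_eq_zero, not_lt,
    one_le_div (levelUnit_pos hb k)] at huv
  obtain ⟨h_scale, h_unit⟩ := huv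
  refine ⟨scale_of_pow_le ?_, h_scale⟩
  rcases le_total 4 k with hk | hk
  · have hb0 : (b : ℝ) ≠ 0 := by positivity
    rwa [pow_sub₀ _ hb0 hk, ← div_eq_mul_inv]
  · rw [Nat.sub_eq_zero_of_le hk, pow_zero]
    exact hw u v ((levelUnit_pos hb k).trans_le h_unit).ne'

variable [Fintype V]

lemma cutWeight_nonneg [DecidableEq V] (hw : ∀ u v, 0 ≤ w u v) (S : Finset V) :
    0 ≤ cutWeight w S :=
  sum_nonneg fun u _ ↦ sum_nonneg fun v _ ↦ hw u v

lemma le_cutWeight [DecidableEq V] (hsymm : ∀ u v, w u v = w v u) (hw : ∀ u v, 0 ≤ w u v)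
    {S : Finset V} {u v : V} (huv : ¬(u ∈ S ↔ v ∈ S)) : w u v ≤ cutWeight w S := by
  have h_le : ∀ {u v}, u ∈ S → v ∉ S → w u v ≤ cutWeight w S := fun {u v} hu hv ↦
    (single_le_sum (f := w u) (fun v _ ↦ hw u v) (mem_compl.mpr hv)).trans
      (single_le_sum (f := fun u ↦ ∑ v ∈ Sᶜ, w u v) (fun u _ ↦ sum_nonneg fun v _ ↦ hw u v) hu)
  by_cases hu : u ∈ S
  · exact h_le hu (by tauto)
  · exact hsymm u v ▸ h_le (by tauto) hu

lemma mul_cutWeight_floor_le [DecidableEq V] (hw : ∀ u v, 0 ≤ w u v) {c : ℝ} (hc : 0 < c)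
    (S : Finset V) : c * (cutWeight (fun u v ↦ ⌊w u v / c⌋₊) S : ℕ) ≤ cutWeight w S := by
  simp only [cutWeight, crossWeight, Nat.cast_sum, mul_sum]
  gcongr with u _ v _
  rw [← le_div_iff₀' hc]
  exact Nat.floor_le (div_nonneg (hw u v) hc.le)

lemma cutWeight_le_mul_cutWeight_floor_add [DecidableEq V] {c : ℝ} (hc : 0 < c) (S : Finset V) :
    cutWeight w S ≤
      c * (cutWeight (fun u v ↦ ⌊w u v / c⌋₊) S : ℕ) + Fintype.card V ^ 2 * c := by
  have h_floor : ∀ u v, w u v ≤ c * ⌊w u v / c⌋₊ + c := by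
    intro u v
    have := (div_le_iff₀ hc).mp (Nat.lt_floor_add_one (w u v / c)).le
    linarith
  calc cutWeight w S ≤ ∑ u ∈ S, ∑ v ∈ Sᶜ, (c * ⌊w u v / c⌋₊ + c) :=
        sum_le_sum fun u _ ↦ sum_le_sum fun v _ ↦ h_floor u v
    _ = c * (cutWeight (fun u v ↦ ⌊w u v / c⌋₊) S : ℕ) + #S * #Sᶜ * c := by
        simp [cutWeight, crossWeight, sum_add_distrib, mul_sum, mul_assoc]
    _ ≤ _ := by
        rw [sq]
        gcongr <;> exact card_le_univ _

variable [LinearOrder V]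

/-- The quantized multigraph on the components of level `k`, each component being represented by
its least vertex. -/
noncomputable def levelGraph (w : V → V → ℝ) (b k : ℕ) : V → V → ℕ :=
  contract (rep (scale w b k)) (levelWeight w b k)

/-- The level whose components determine the cut of `S` up to a small error. -/
noncomputable def cutLevel (w : V → V → ℝ) (b : ℕ) (S : Finset V) : ℕ :=
  splitLevel (birth (scale w b)) (parent (scale w b)) S

lemma vol_levelGraph_le (hb : 1 ≤ b) :
    vol (levelGraph w b k) univ ≤ Fintype.card V ^ 2 * b ^ 4 := by
  calc vol (levelGraph w b k) univ = crossWeight (levelWeight w b k) univ univ := by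
        change crossWeight (levelGraph w b k) univ univ = _
        simp [levelGraph, crossWeight_contract]
    _ ≤ ∑ _u : V, ∑ _v : V, b ^ 4 :=
        sum_le_sum fun u _ ↦ sum_le_sum fun v _ ↦ levelWeight_le hb u v
    _ = Fintype.card V ^ 2 * b ^ 4 := by simp [sq, mul_assoc]

lemma deg_levelGraph_eq_zero (hb : 1 ≤ b) (hK : ∀ u v, w u v < (b : ℝ) ^ K)
    (hw : ∀ u v, w u v ≠ 0 → 1 ≤ w u v) {a : V}
    (ha : a ∉ recentlyBorn (scale w b) 4 k ∪
      (recentlyBorn (scale w b) 4 k).image (rep (scale w b (k - 4)))) :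
    deg (levelGraph w b k) a = 0 := by
  have h_anti : Antitone (scale w b) := scale_antitone hb
  have h_bot : scale w b K = ⊥ := scale_eq_bot hK
  have h_born : ∀ u, rep (scale w b k) u ∈ recentlyBorn (scale w b) 4 k ∨
      rep (scale w b (k - 4)) (rep (scale w b k) u) = rep (scale w b k) u := by
    intro u
    have h_le := (birth_le_iff h_anti h_bot).mpr (rep_rep (scale w b k) u)
    rw [← birth_le_iff h_anti h_bot]
    simp only [recentlyBorn, mem_filter, mem_univ, true_and]
    lia
  contrapose! ha
  obtain ⟨u, v, rfl, huv⟩ := exists_of_deg_contract_ne_zero ha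
  obtain ⟨h_coarse, h_fine⟩ := scale_sub_of_levelWeight_ne_zero hb hw huv
  rw [mem_union, mem_image]
  refine (h_born u).imp_right fun hu ↦ ⟨rep (scale w b k) v, ?_, ?_⟩
  all_goals
    have h_rep : rep (scale w b (k - 4)) (rep (scale w b k) v) = rep (scale w b k) u := by
      rw [← hu, rep_rep_of_le (h_anti (Nat.sub_le k 4)), rep_rep_of_le (h_anti (Nat.sub_le k 4)),
        rep_eq_rep_iff]
      exact (scale w b _).symm h_coarse
  · refine (h_born v).resolve_right fun hv ↦ h_fine ?_
    rw [← rep_eq_rep_iff, ← hv, h_rep]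
  · exact h_rep

lemma sum_card_deg_levelGraph_ne_zero_le (hb : 1 ≤ b) (hK : ∀ u v, w u v < (b : ℝ) ^ K)
    (hw : ∀ u v, w u v ≠ 0 → 1 ≤ w u v) (L : ℕ) :
    ∑ k ∈ range L, #{a | deg (levelGraph w b k) a ≠ 0} ≤ 8 * Fintype.card V := by
  have h_le : ∀ k, #{a | deg (levelGraph w b k) a ≠ 0} ≤ 2 * #(recentlyBorn (scale w b) 4 k) := by
    intro k
    rw [two_mul]
    refine (card_le_card fun a ha ↦ ?_).trans ((card_union_le _ _).trans
      (Nat.add_le_add_left (card_image_le (f := rep (scale w b (k - 4)))) _))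
    by_contra h
    exact (mem_filter.mp ha).2 (deg_levelGraph_eq_zero hb hK hw h)
  calc ∑ k ∈ range L, #{a | deg (levelGraph w b k) a ≠ 0}
      ≤ ∑ k ∈ range L, 2 * #(recentlyBorn (scale w b) 4 k) := sum_le_sum fun k _ ↦ h_le k
    _ = 2 * ∑ k ∈ range L, #(recentlyBorn (scale w b) 4 k) := (mul_sum _ _ _).symm
    _ ≤ 2 * (4 * Fintype.card V) := Nat.mul_le_mul_left _ (sum_card_recentlyBorn_le _ _ _)
    _ = 8 * Fintype.card V := by ring

lemma pow_cutLevel_sub_one_le (hsymm : ∀ u v, w u v = w v u) (hw : ∀ u v, 0 ≤ w u v)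
    {S : Finset V} (hS : 0 < cutLevel w b S) : (b : ℝ) ^ (cutLevel w b S - 1) ≤ cutWeight w S := by
  obtain ⟨u, v, huv, h_split⟩ := exists_separated_of_splitLevel_pos hS
  obtain ⟨x, y, hxy, h_sep⟩ := exists_rel_separated_of_eqvGen huv h_split
  exact hxy.trans (le_cutWeight hsymm hw h_sep)

lemma rep_cutLevel_mem_iff (hb : 1 ≤ b) (hK : ∀ u v, w u v < (b : ℝ) ^ K) (S : Finset V)
    (u : V) : rep (scale w b (cutLevel w b S)) u ∈ S ↔ u ∈ S :=
  rep_splitLevel_mem_iff (scale_antitone hb) (scale_eq_bot hK) S u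

lemma cutLevel_le (hb : 1 ≤ b) (hK : ∀ u v, w u v < (b : ℝ) ^ K) (S : Finset V) :
    cutLevel w b S ≤ K :=
  splitLevel_le (scale_antitone hb) (scale_eq_bot hK) S

lemma mem_iff_of_scale_cutLevel (hb : 1 ≤ b) (hK : ∀ u v, w u v < (b : ℝ) ^ K) {S : Finset V}
    {u v : V} (huv : scale w b (cutLevel w b S) u v) : u ∈ S ↔ v ∈ S := by
  rw [← rep_cutLevel_mem_iff hb hK S u, ← rep_cutLevel_mem_iff hb hK S v, rep_eq_rep_iff.mpr huv]

lemma cutWeight_eq_zero_of_cutLevel_eq_zero (hb : 1 ≤ b) (hK : ∀ u v, w u v < (b : ℝ) ^ K)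
    (hw : ∀ u v, w u v ≠ 0 → 1 ≤ w u v) {S : Finset V} (hS : cutLevel w b S = 0) :
    cutWeight w S = 0 := by
  refine sum_eq_zero fun u hu ↦ sum_eq_zero fun v hv ↦ ?_
  by_contra huv
  refine mem_compl.mp hv ((mem_iff_of_scale_cutLevel hb hK ?_).mp hu)
  rw [hS]
  exact scale_of_pow_le (by simpa using hw u v huv)

lemma cutWeight_levelGraph_cutLevel (hb : 1 ≤ b) (hK : ∀ u v, w u v < (b : ℝ) ^ K)
    (S : Finset V) : cutWeight (levelGraph w b (cutLevel w b S)) S =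
      cutWeight (fun u v ↦ ⌊w u v / levelUnit b (cutLevel w b S)⌋₊) S := by
  rw [cutWeight, levelGraph, crossWeight_contract]
  simp only [mem_compl, rep_cutLevel_mem_iff hb hK, ← compl_filter, filter_univ_mem]
  refine sum_congr rfl fun u hu ↦ sum_congr rfl fun v hv ↦ if_neg fun huv ↦ ?_
  exact mem_compl.mp hv ((mem_iff_of_scale_cutLevel hb hK huv).mp hu)

lemma levelUnit_mul_cutWeight_le (hb : 1 ≤ b) (hK : ∀ u v, w u v < (b : ℝ) ^ K)
    (hw : ∀ u v, 0 ≤ w u v) (S : Finset V) :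
    levelUnit b (cutLevel w b S) * (cutWeight (levelGraph w b (cutLevel w b S)) S : ℕ) ≤
      cutWeight w S := by
  rw [cutWeight_levelGraph_cutLevel hb hK]
  exact mul_cutWeight_floor_le hw (levelUnit_pos hb _) S

lemma cutWeight_sub_levelUnit_mul_le (hb : 1 ≤ b) (hV : Fintype.card V ≤ b)
    (hK : ∀ u v, w u v < (b : ℝ) ^ K) (hsymm : ∀ u v, w u v = w v u) (hw : ∀ u v, 0 ≤ w u v)
    {S : Finset V} (hS : 0 < cutLevel w b S) :
    cutWeight w S -
      levelUnit b (cutLevel w b S) * (cutWeight (levelGraph w b (cutLevel w b S)) S : ℕ) ≤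
      1 / b * cutWeight w S := by
  have : (0 : ℝ) < b := by exact_mod_cast hb
  have h_pow : (b : ℝ) ^ cutLevel w b S = b ^ (cutLevel w b S - 1) * b := by
    rw [← pow_succ, Nat.sub_add_cancel hS]
  rw [cutWeight_levelGraph_cutLevel hb hK, sub_le_iff_le_add']
  refine (cutWeight_le_mul_cutWeight_floor_add (levelUnit_pos hb (cutLevel w b S)) S).trans ?_
  gcongr _ + ?_
  calc (Fintype.card V : ℝ) ^ 2 * levelUnit b (cutLevel w b S)
      ≤ (b : ℝ) ^ 2 * levelUnit b (cutLevel w b S) := by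
        have := (levelUnit_pos hb (cutLevel w b S)).le
        gcongr
    _ = 1 / b * (b : ℝ) ^ (cutLevel w b S - 1) := by
        rw [levelUnit, h_pow]
        field_simp
    _ ≤ 1 / b * cutWeight w S := by
        gcongr
        exact pow_cutLevel_sub_one_le hsymm hw hS

end Quantization

section Encoding

lemma card_filter_card_ne_le {I X : Type*} [Fintype I] [DecidableEq I] [Fintype X]
    [DecidableEq X] [Nonempty I] (x₀ : X) (L : ℕ) :
    #{f : I → X | #{i | f i ≠ x₀} ≤ L} ≤ (Fintype.card I * Fintype.card X) ^ L := by
  have h_surj : Set.SurjOn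
      (fun c : Fin L → I × X ↦ Function.extend (fun k ↦ (c k).1) (fun k ↦ (c k).2) fun _ ↦ x₀)
      (univ : Finset (Fin L → I × X)) ({f : I → X | #{i | f i ≠ x₀} ≤ L} : Finset (I → X)) := by
    intro f hf
    obtain ⟨e⟩ : Nonempty ({i // f i ≠ x₀} ↪ Fin L) := Function.Embedding.nonempty_of_card_le <| by
      simpa [Fintype.card_subtype] using hf
    set g : Fin L → I := Function.extend e Subtype.val fun _ ↦ Classical.arbitrary I
    refine ⟨fun k ↦ (g k, f (g k)), mem_coe.mpr (mem_univ _), funext fun i ↦ ?_⟩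
    by_cases hi : ∃ k, g k = i
    · obtain ⟨k, rfl⟩ := hi
      exact Function.FactorsThrough.extend_apply (fun _ _ h ↦ congrArg f h) _ k
    · refine (Function.extend_apply' _ _ _ hi).trans ?_
      by_contra h_ne
      exact hi ⟨e ⟨i, Ne.symm h_ne⟩, e.injective.extend_apply _ _ _⟩
  simpa using card_le_card_of_surjOn _ h_surj

lemma exists_leftInvOn_of_card_le {M : Type*} [Nonempty M] {𝓜 : Finset M} {m : ℕ}
    (h𝓜 : #𝓜 ≤ 2 ^ m) :
    ∃ (enc : M → Fin m → Bool) (dec : (Fin m → Bool) → M), Set.LeftInvOn dec enc 𝓜 := by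
  obtain ⟨e⟩ : Nonempty (𝓜 ↪ (Fin m → Bool)) :=
    Function.Embedding.nonempty_of_card_le (by simpa using h𝓜)
  set enc : M → Fin m → Bool := Function.extend Subtype.val e fun _ ↦ default with h_enc
  refine ⟨enc, Function.invFunOn enc 𝓜, ?_⟩
  refine Set.InjOn.leftInvOn_invFunOn fun σ hσ τ hτ hστ ↦ ?_
  lift σ to 𝓜 using hσ
  lift τ to 𝓜 using hτ
  simpa only [h_enc, Subtype.val_injective.extend_apply, e.injective.eq_iff, Subtype.ext_iff]
    using hστ

lemma one_sub_one_div_le_card_filter_div {Ω : Type*} [Fintype Ω] [Nonempty Ω] {p : Ω → Prop}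
    {N : ℕ} (hN : 0 < N) (hp : #{ω | ¬ p ω} * N ≤ Fintype.card Ω) :
    1 - 1 / (N : ℝ) ≤ #{ω | p ω} / (Fintype.card Ω : ℝ) := by
  have h_card : (0 : ℝ) < Fintype.card Ω := by exact_mod_cast Fintype.card_pos
  have h_add : (#{ω | p ω} : ℝ) + #{ω | ¬ p ω} = Fintype.card Ω := by
    exact_mod_cast card_filter_add_card_filter_not (s := univ) p
  have h_bad : (#{ω | ¬ p ω} : ℝ) / Fintype.card Ω ≤ 1 / N := by
    rw [div_le_div_iff₀ h_card (by exact_mod_cast hN), one_mul]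
    exact_mod_cast hp
  have : (#{ω | p ω} : ℝ) / Fintype.card Ω = 1 - #{ω | ¬ p ω} / Fintype.card Ω := by
    rw [eq_sub_iff_add_eq, ← add_div, h_add, div_self h_card.ne']
  linarith

lemma exists_bool_scheme {Inp Query M Ω : Type*} [Fintype Ω] [Nonempty Ω] [Nonempty M]
    {𝓜 : Finset M} {m N : ℕ} (h𝓜 : #𝓜 ≤ 2 ^ m) (hN : 0 < N) (out : Query → M → ℝ)
    {good : Inp → Query → ℝ → Prop} {P : Inp → Prop}
    (h_sketch : ∀ w, P w → ∃ sk : Ω → M, (∀ ω, sk ω ∈ 𝓜) ∧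
      ∀ q, #{ω | ¬ good w q (out q (sk ω))} * N ≤ Fintype.card Ω) :
    ∃ (K : ℕ) (ρ : Fin K → ℝ) (ske : Inp → Fin K → Fin m → Bool)
      (est : Query → (Fin m → Bool) → Fin K → ℝ), (∀ r, 0 ≤ ρ r) ∧ ∑ r, ρ r = 1 ∧
      ∀ w, P w → ∀ q, 1 - 1 / (N : ℝ) ≤ ∑ r with good w q (est q (ske w r) r), ρ r := by
  obtain ⟨enc, dec, h_dec⟩ := exists_leftInvOn_of_card_le h𝓜
  choose! sk h_mem h_good using h_sketch
  let e := (Fintype.equivFin Ω).symm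
  refine ⟨Fintype.card Ω, fun _ ↦ 1 / Fintype.card Ω, fun w r ↦ enc (sk w (e r)),
    fun q c _ ↦ out q (dec c), fun _ ↦ by positivity, by simp, fun w hw q ↦ ?_⟩
  have h_card : #{r | good w q (out q (dec (enc (sk w (e r)))))} =
      #{ω | good w q (out q (sk w ω))} := by
    refine card_bijective e e.bijective fun r ↦ ?_
    rw [mem_filter_univ, mem_filter_univ, h_dec (h_mem w hw _)]
  rw [sum_const, h_card, nsmul_eq_mul, mul_one_div]
  exact one_sub_one_div_le_card_filter_div hN (h_good w hw q)

end Encoding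

section GraphSketch

variable {V Ω : Type*} [Fintype V] [LinearOrder V] {s T D K t b : ℕ} {w : V → V → ℝ}

/-- The sketch of a weighted graph: the forest of components, given by the level and the parent of
every vertex, and for every level, `t` independent sketches of all vertices and the multiplicities
of the edges that are stored explicitly. -/
abbrev GraphSketch (V : Type*) (s T D K t : ℕ) : Type _ :=
  (V → Fin (K + 1) × V) × (Fin (K + 1) × V → Fin t → VertexSketch V s T D) ×
    (Fin (K + 1) × V × V → Fin (D + 1))

/-- The sketches that can be written down by listing at most `L₁` nontrivial vertex sketches and at
most `L₂` explicitly stored edges. -/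
noncomputable def sparseSketches (s T D K t : ℕ) (z : V) (L₁ L₂ : ℕ) :
    Finset (GraphSketch V s T D K t) :=
  univ ×ˢ ({A | #{i | A i ≠ fun _ ↦ .trivial s T D z} ≤ L₁} : Finset _) ×ˢ
    ({h | #{i | h i ≠ 0} ≤ L₂} : Finset _)

lemma card_sparseSketches_le {l k d : ℕ} (z : V) (hV : Fintype.card V ≤ 2 ^ l) (hK : K + 1 ≤ 2 ^ k)
    (hD : D + 1 ≤ 2 ^ d) (L₁ L₂ : ℕ) :
    #(sparseSketches s T D K t z L₁ L₂) ≤ 2 ^ (Fintype.card V * (k + l) +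
      (L₁ * (k + l + t * (T * (l + (d + s * l)))) + L₂ * (k + (l + l) + d))) := by
  have : Nonempty V := ⟨z⟩
  have h_vertex : Fintype.card (Fin t → VertexSketch V s T D) ≤
      2 ^ (t * (T * (l + (d + s * l)))) := by
    simp only [Fintype.card_fun, Fintype.card_prod, Fintype.card_fin]
    calc ((Fintype.card V * ((D + 1) * Fintype.card V ^ s)) ^ T) ^ t
        ≤ ((2 ^ l * (2 ^ d * (2 ^ l) ^ s)) ^ T) ^ t := by gcongr
      _ = 2 ^ (t * (T * (l + (d + s * l)))) := by ring
  have h_forest : Fintype.card (V → Fin (K + 1) × V) ≤ 2 ^ (Fintype.card V * (k + l)) := by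
    rw [Fintype.card_fun, Fintype.card_prod, Fintype.card_fin, mul_comm _ (k + l), pow_mul, pow_add]
    exact Nat.pow_le_pow_left (Nat.mul_le_mul hK hV) _
  rw [sparseSketches, card_product, card_product, card_univ, pow_add, pow_add]
  refine Nat.mul_le_mul h_forest (Nat.mul_le_mul ?_ ?_)
  · refine (card_filter_card_ne_le _ _).trans ?_
    rw [Fintype.card_prod, Fintype.card_fin, mul_comm L₁, pow_mul, pow_add, pow_add]
    exact Nat.pow_le_pow_left (Nat.mul_le_mul (Nat.mul_le_mul hK hV) h_vertex) _
  · refine (card_filter_card_ne_le _ _).trans ?_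
    rw [Fintype.card_prod, Fintype.card_prod, Fintype.card_fin, Fintype.card_fin, mul_comm L₂,
      pow_mul, pow_add, pow_add, pow_add]
    exact Nat.pow_le_pow_left (Nat.mul_le_mul (Nat.mul_le_mul hK (Nat.mul_le_mul hV hV)) hD) _

/-- The level of a graph sketch at which the cut of `S` is estimated. -/
def storedLevel (σ : GraphSketch V s T D K t) (S : Finset V) : ℕ :=
  splitLevel (fun a ↦ ((σ.1 a).1 : ℕ)) (fun a ↦ (σ.1 a).2) S

/-- The estimate of the cut weight of `S` computed from a graph sketch: the median of the estimates
at the stored level, in the unit of that level. If that level is `0`, then `S` is a union of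
connected components. -/
noncomputable def graphEstimate (b : ℕ) (S : Finset V) (σ : GraphSketch V s T D K t) : ℝ :=
  let k := Fin.ofNat (K + 1) (storedLevel σ S)
  if storedLevel σ S = 0 then 0 else levelUnit b (storedLevel σ S) *
    median fun τ ↦ windowEstimate (fun u ↦ σ.2.1 (k, u) τ) (fun u v ↦ σ.2.2 (k, u, v)) S

/-- The graph sketch assembled from the sketches `A k` and `h k` of the level graphs of `w`. -/
noncomputable def assemble (w : V → V → ℝ) (b : ℕ)
    (A : Fin (K + 1) → Ω → V → VertexSketch V s T D) (h : Fin (K + 1) → V → V → Fin (D + 1))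
    (ω : Fin t → Ω) : GraphSketch V s T D K t :=
  (fun a ↦ (Fin.ofNat (K + 1) (birth (scale w b) a), parent (scale w b) a),
    fun i τ ↦ A i.1 (ω τ) i.2, fun i ↦ h i.1 i.2.1 i.2.2)

variable {A : Fin (K + 1) → Ω → V → VertexSketch V s T D} {h : Fin (K + 1) → V → V → Fin (D + 1)}

lemma storedLevel_assemble (hb : 1 ≤ b) (hK : ∀ u v, w u v < (b : ℝ) ^ K) (ω : Fin t → Ω)
    (S : Finset V) : storedLevel (assemble w b A h ω) S = cutLevel w b S := by
  have h_birth : ∀ a, birth (scale w b) a % (K + 1) = birth (scale w b) a := fun a ↦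
    Nat.mod_eq_of_lt (Nat.lt_succ_of_le (birth_le (scale_antitone hb) (scale_eq_bot hK) a))
  simp only [storedLevel, cutLevel, assemble, Fin.val_ofNat, h_birth]

lemma sum_card_deg_ne_zero_le (hb : 1 ≤ b) (hK : ∀ u v, w u v < (b : ℝ) ^ K)
    (hw : ∀ u v, w u v ≠ 0 → 1 ≤ w u v) :
    ∑ k : Fin (K + 1), #{u | deg (levelGraph w b k) u ≠ 0} ≤ 8 * Fintype.card V := by
  rw [Fin.sum_univ_eq_sum_range fun k ↦ #{u | deg (levelGraph w b k) u ≠ 0}]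
  exact sum_card_deg_levelGraph_ne_zero_le hb hK hw _

lemma assemble_mem_sparseSketches {z : V} {H : ℕ} (hb : 1 ≤ b) (hK : ∀ u v, w u v < (b : ℝ) ^ K)
    (hw : ∀ u v, w u v ≠ 0 → 1 ≤ w u v) (hD : Fintype.card V ^ 2 * b ^ 4 ≤ D) (hH : harmonic D ≤ H)
    (hA : ∀ (k : Fin (K + 1)) ω u, deg (levelGraph w b k) u = 0 → A k ω u = .trivial s T D z)
    (hh : ∀ k : Fin (K + 1), (#{p : V × V | h k p.1 p.2 ≠ 0} : ℚ) ≤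
      T * (2 * (s * ∑ u, harmonic (deg (levelGraph w b k) u)))) (ω : Fin t → Ω) :
    assemble w b A h ω ∈ sparseSketches s T D K t z (8 * Fintype.card V)
      (T * (2 * (s * (8 * Fintype.card V * H)))) := by
  have h_sum := sum_card_deg_ne_zero_le hb hK hw
  simp only [sparseSketches, mem_product, mem_filter_univ, mem_univ, true_and]
  constructor
  · refine le_trans ?_ h_sum
    simp only [card_filter, Fintype.sum_prod_type]
    refine sum_le_sum fun k _ ↦ ?_
    simp only [← card_filter]
    gcongr with u
    exact fun hu ↦ funext fun τ ↦ hA k (ω τ) u hu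
  · rw [← Nat.cast_le (α := ℚ), card_filter, Fintype.sum_prod_type]
    simp only [← card_filter, Nat.cast_sum]
    calc ∑ k, (#{p : V × V | h k p.1 p.2 ≠ 0} : ℚ)
        ≤ ∑ k : Fin (K + 1), T * (2 * (s * (#{u | deg (levelGraph w b k) u ≠ 0} * (H : ℚ)))) := by
          refine sum_le_sum fun k _ ↦ (hh k).trans ?_
          gcongr
          exact sum_harmonic_deg_le ((vol_levelGraph_le hb).trans hD) hH
      _ = T * (2 * (s * ((∑ k : Fin (K + 1), #{u | deg (levelGraph w b k) u ≠ 0} : ℕ) * H))) := by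
          simp only [← mul_sum, ← sum_mul, Nat.cast_sum]
      _ ≤ (T * (2 * (s * (8 * Fintype.card V * H))) : ℕ) := by
          exact_mod_cast (by gcongr :
            T * (2 * (s * ((∑ k : Fin (K + 1), #{u | deg (levelGraph w b k) u ≠ 0}) * H))) ≤
              T * (2 * (s * (8 * Fintype.card V * H))))

lemma abs_levelUnit_mul_sub_cutWeight_le (hb : 1 ≤ b) (hV : Fintype.card V ≤ b)
    (hK : ∀ u v, w u v < (b : ℝ) ^ K) (hsymm : ∀ u v, w u v = w v u) (hw : ∀ u v, 0 ≤ w u v)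
    {S : Finset V} (hS : 0 < cutLevel w b S) {δ x : ℝ} (hδ : 0 ≤ δ)
    (hx : |x - (cutWeight (levelGraph w b (cutLevel w b S)) S : ℕ)| ≤
      δ * (cutWeight (levelGraph w b (cutLevel w b S)) S : ℕ)) :
    |levelUnit b (cutLevel w b S) * x - cutWeight w S| ≤ (1 / b + δ) * cutWeight w S := by
  set c := levelUnit b (cutLevel w b S)
  set q : ℝ := ((cutWeight (levelGraph w b (cutLevel w b S)) S : ℕ) : ℝ)
  have hc : 0 < c := levelUnit_pos hb _
  have h_low : c * q ≤ cutWeight w S := levelUnit_mul_cutWeight_le hb hK hw S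
  have h_high : cutWeight w S - c * q ≤ 1 / b * cutWeight w S :=
    cutWeight_sub_levelUnit_mul_le hb hV hK hsymm hw hS
  calc |c * x - cutWeight w S| = |(c * q - cutWeight w S) + c * (x - q)| := by ring_nf
    _ ≤ |c * q - cutWeight w S| + c * |x - q| := by
        rw [← abs_of_pos hc, ← abs_mul, abs_of_pos hc]
        exact abs_add_le _ _
    _ ≤ 1 / b * cutWeight w S + δ * cutWeight w S := by
        rw [abs_sub_comm, abs_of_nonneg (sub_nonneg.mpr h_low)]
        refine add_le_add h_high ((mul_le_mul_of_nonneg_left hx hc.le).trans ?_)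
        rw [mul_left_comm]
        gcongr
    _ = (1 / b + δ) * cutWeight w S := (add_mul _ _ _).symm

lemma card_filter_lt_abs_graphEstimate_assemble_sub_mul_le [Fintype Ω] {F : ℕ} (hb : 1 ≤ b)
    (hV : Fintype.card V ≤ b) (hK : ∀ u v, w u v < (b : ℝ) ^ K) (hsymm : ∀ u v, w u v = w v u)
    (hw₀ : ∀ u v, 0 ≤ w u v) (hw : ∀ u v, w u v ≠ 0 → 1 ≤ w u v) (S : Finset V)
    (hAh : ∀ k : Fin (K + 1),
      𝔼 ω, (windowEstimate (A k ω) (h k) S - (cutWeight (levelGraph w b k) S : ℕ)) ^ 2 ≤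
        (F * (cutWeight (levelGraph w b k) S : ℕ) / s) ^ 2) :
    #{ω : Fin t → Ω | (1 / b + 4 * F / s) * cutWeight w S <
      |graphEstimate b S (assemble w b A h ω) - cutWeight w S|} * 2 ^ t ≤ Fintype.card Ω ^ t := by
  rcases (cutLevel w b S).eq_zero_or_pos with h0 | hpos
  · have h_zero := cutWeight_eq_zero_of_cutLevel_eq_zero hb hK hw h0
    simp [graphEstimate, storedLevel_assemble hb hK, h0, h_zero]
  · have h_median := card_filter_lt_abs_median_sub_mul_two_pow_le (ι := Fin t) (by positivity)
      (hAh (Fin.ofNat (K + 1) (cutLevel w b S)))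
    rw [Fintype.card_fin, Fin.val_ofNat, Nat.mod_eq_of_lt
      (Order.lt_add_one_iff.mpr (cutLevel_le hb hK S))] at h_median
    refine (Nat.mul_le_mul_right _ (card_le_card fun ω ↦ ?_)).trans h_median
    simp only [mem_filter_univ, graphEstimate, storedLevel_assemble hb hK, hpos.ne', if_false]
    contrapose!
    intro h_le
    refine abs_levelUnit_mul_sub_cutWeight_le hb hV hK hsymm hw₀ hpos (by positivity)
      (h_le.trans_eq (by ring))

theorem exists_graphSketch {F H : ℕ} [NeZero s] (z : V) (hF : 0 < F)
    (hFD : 4 * Real.log D ≤ F * Real.log 2) (hb : 1 ≤ b) (hV : Fintype.card V ≤ b)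
    (hD : Fintype.card V ^ 2 * b ^ 4 ≤ D) (hT : Fintype.card V ^ 2 * b ^ 4 < 2 ^ T)
    (hH : harmonic D ≤ H) (hK : ∀ u v, w u v < (b : ℝ) ^ K) (hsymm : ∀ u v, w u v = w v u)
    (hw₀ : ∀ u v, 0 ≤ w u v) (hw : ∀ u v, w u v ≠ 0 → 1 ≤ w u v) :
    ∃ sk : (Fin t → V × Fin s → Fin D.factorial) → GraphSketch V s T D K t,
      (∀ ω, sk ω ∈ sparseSketches s T D K t z (8 * Fintype.card V)
        (T * (2 * (s * (8 * Fintype.card V * H))))) ∧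
      ∀ S, #{ω | (1 / b + 4 * F / s) * cutWeight w S < |graphEstimate b S (sk ω) - cutWeight w S|} *
        2 ^ t ≤ Fintype.card (V × Fin s → Fin D.factorial) ^ t := by
  choose A h h_trivial h_support h_est using fun k : Fin (K + 1) ↦
    exists_windowSketch (s := s) z hF hFD
      (contract_comm (levelWeight_comm hsymm) (rep (scale w b k)))
      ((vol_levelGraph_le hb).trans hD) ((vol_levelGraph_le hb).trans_lt hT)
  exact ⟨assemble w b A h, assemble_mem_sparseSketches hb hK hw hD hH h_trivial h_support,
    fun S ↦ card_filter_lt_abs_graphEstimate_assemble_sub_mul_le hb hV hK hsymm hw₀ hw S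
      fun k ↦ h_est k S⟩

end GraphSketch

section Parameters

variable {n l s K k : ℕ} {ε W : ℝ}

lemma log_le_mul_log_two (hn : n ≤ 2 ^ l) : Real.log n ≤ l * Real.log 2 := by
  have h_log : Real.log n ≤ Real.log (2 ^ l : ℕ) := log_natCast_mono hn
  rwa [Nat.cast_pow, Real.log_pow, Nat.cast_ofNat] at h_log

lemma harmonic_pow_six_le (hl : 0 < l) (hn : n ≤ 2 ^ l) :
    harmonic (n ^ 6) ≤ (7 * l : ℕ) := by
  have hl' : (1 : ℝ) ≤ l := by exact_mod_cast hl
  have h_log : Real.log n ≤ l :=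
    (log_le_mul_log_two hn).trans (mul_le_of_le_one_right (by positivity)
      (by linarith [Real.log_two_lt_d9]))
  rw [← Rat.cast_le (K := ℝ)]
  calc (harmonic (n ^ 6) : ℝ) ≤ 1 + Real.log (n ^ 6 : ℕ) := harmonic_le_one_add_log _
    _ = 1 + 6 * Real.log n := by simp
    _ ≤ 7 * l := by linarith
    _ = ((7 * l : ℕ) : ℚ) := by push_cast; rfl

lemma exists_graphSketch_of_lt_two_pow [NeZero s] (hn : n < 2 ^ l) (z : Fin n)
    (hε : 1 / n ≤ ε) (hs : 96 * l ≤ ε * s) {w : Fin n → Fin n → ℝ}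
    (hK : ∀ u v, w u v < (n : ℝ) ^ K) (hsymm : ∀ u v, w u v = w v u) (hw₀ : ∀ u v, 0 ≤ w u v)
    (hw : ∀ u v, w u v ≠ 0 → 1 ≤ w u v) :
    ∃ sk : (Fin l → Fin n × Fin s → Fin (n ^ 6).factorial) →
        GraphSketch (Fin n) s (6 * l) (n ^ 6) K l,
      (∀ ω, sk ω ∈ sparseSketches s (6 * l) (n ^ 6) K l z (8 * n)
        (6 * l * (2 * (s * (8 * n * (7 * l)))))) ∧
      ∀ S, #{ω | ¬ |graphEstimate n S (sk ω) - cutWeight w S| ≤ 2 * ε * cutWeight w S} * n ≤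
        Fintype.card (Fin l → Fin n × Fin s → Fin (n ^ 6).factorial) := by
  have hl : 0 < l := Nat.pos_of_ne_zero fun h ↦ by have := z.pos; simp_all
  have hF : 4 * Real.log (n ^ 6 : ℕ) ≤ (24 * l : ℕ) * Real.log 2 := by
    push_cast [Real.log_pow]
    linarith [log_le_mul_log_two hn.le]
  have hT : n ^ 2 * n ^ 4 < 2 ^ (6 * l) := by
    rw [← pow_add, mul_comm, pow_mul]
    exact Nat.pow_lt_pow_left hn (by norm_num)
  obtain ⟨sk, h_mem, h_est⟩ := exists_graphSketch (V := Fin n) (s := s) (t := l) z (by lia) hF z.pos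
    (Fintype.card_fin n).le (by rw [Fintype.card_fin, ← pow_add]) (by rwa [Fintype.card_fin])
    (harmonic_pow_six_le hl hn.le) hK hsymm hw₀ hw
  simp only [Fintype.card_fin] at h_mem
  refine ⟨sk, h_mem, fun S ↦ ?_⟩
  have h_error : 1 / n + 4 * (24 * l : ℕ) / s ≤ 2 * ε := by
    have : 4 * ((24 * l : ℕ) : ℝ) / s ≤ ε := by
      rw [div_le_iff₀ (by exact_mod_cast NeZero.pos s)]
      push_cast
      linarith
    linarith
  rw [Fintype.card_fun, Fintype.card_fin]
  refine (Nat.mul_le_mul (card_le_card ?_) hn.le).trans (h_est S)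
  refine monotone_filter_right _ fun ω _ hω ↦ (not_le.mp hω).trans_le' ?_
  exact mul_le_mul_of_nonneg_right h_error (cutWeight_nonneg hw₀ S)

lemma encodingLength_le (hs : 0 < s) (hl : 0 < l) :
    n * (k + l) + (8 * n * (k + l + l * (6 * l * (l + (6 * l + s * l)))) +
      6 * l * (2 * (s * (8 * n * (7 * l)))) * (k + (l + l) + 6 * l)) ≤
    6000 * n * s * l ^ 3 * (k + 1) := by
  set X := s * l ^ 3 * (k + 1) with hX
  have h_index : k + l ≤ X := by
    calc k + l ≤ 1 * l * (k + 1) := by nlinarith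
      _ ≤ X := by rw [hX]; gcongr; exacts [hs, Nat.le_self_pow (by norm_num) l]
  have h_vertex : l * (6 * l * (l + (6 * l + s * l))) ≤ 48 * X := by
    calc l * (6 * l * (l + (6 * l + s * l))) = (42 * 1 + 6 * s) * l ^ 3 * 1 := by ring
      _ ≤ (42 * s + 6 * s) * l ^ 3 * (k + 1) := by gcongr <;> lia
      _ = 48 * X := by rw [hX]; ring
  have h_edge : k + (l + l) + 6 * l ≤ 8 * l * (k + 1) := by nlinarith
  calc _ ≤ n * X + (8 * n * (X + 48 * X) +
          6 * l * (2 * (s * (8 * n * (7 * l)))) * (8 * l * (k + 1))) := by gcongr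
    _ = 5769 * (n * X) := by rw [hX]; ring
    _ ≤ 6000 * (n * X) := by gcongr; norm_num
    _ = 6000 * n * s * l ^ 3 * (k + 1) := by rw [hX]; ring

lemma nonneg_of_ne_zero_imp_one_le {V : Type*} {w : V → V → ℝ} (hw : ∀ u v, w u v ≠ 0 → 1 ≤ w u v)
    (u v : V) : 0 ≤ w u v := by
  by_cases h : w u v = 0
  exacts [h.ge, zero_le_one.trans (hw u v h)]

theorem exists_cutScheme (hs₀ : 0 < s) (hn₀ : 0 < n) (hn : n < 2 ^ l) (hWK : W < (n : ℝ) ^ K)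
    (hK : K + 1 ≤ 2 ^ k) (hε : 1 / n ≤ ε) (hs : 96 * l ≤ ε * s) :
    ∃ (N : ℕ) (ρ : Fin N → ℝ)
      (ske : (Fin n → Fin n → ℝ) → Fin N → Fin (6000 * n * s * l ^ 3 * (k + 1)) → Bool)
      (est : Finset (Fin n) → (Fin (6000 * n * s * l ^ 3 * (k + 1)) → Bool) → Fin N → ℝ),
      (∀ r, 0 ≤ ρ r) ∧ ∑ r, ρ r = 1 ∧ ∀ w : Fin n → Fin n → ℝ,
        ((∀ u v, w u v = w v u) ∧ ∀ u v, w u v ≠ 0 → 1 ≤ w u v ∧ w u v ≤ W) →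
        ∀ S, 1 - 1 / (n : ℝ) ≤
          ∑ r with |est S (ske w r) r - cutWeight w S| ≤ 2 * ε * cutWeight w S, ρ r := by
  have hl : 0 < l := Nat.pos_of_ne_zero (by rintro rfl; simp at hn; lia)
  have : NeZero s := ⟨hs₀.ne'⟩
  have : Nonempty (Fin (n ^ 6).factorial) := ⟨⟨0, Nat.factorial_pos _⟩⟩
  let z : Fin n := ⟨0, hn₀⟩
  have : Nonempty (GraphSketch (Fin n) s (6 * l) (n ^ 6) K l) :=
    ⟨fun _ ↦ (0, z), fun _ _ ↦ .trivial _ _ _ z, 0⟩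
  have hD : n ^ 6 + 1 ≤ 2 ^ (6 * l) := by
    rw [mul_comm, pow_mul]
    exact Nat.pow_lt_pow_left hn (by norm_num)
  refine exists_bool_scheme ?_ hn₀ (graphEstimate n)
    (good := fun w S x ↦ |x - cutWeight w S| ≤ 2 * ε * cutWeight w S) fun w ⟨hsymm, hw⟩ ↦ by
      have hw₀ : ∀ u v, 0 ≤ w u v := nonneg_of_ne_zero_imp_one_le fun u v h ↦ (hw u v h).1
      refine exists_graphSketch_of_lt_two_pow (K := K) hn z hε hs (fun u v ↦ ?_) hsymm hw₀
        fun u v h ↦ (hw u v h).1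
      by_cases h : w u v = 0
      exacts [h.trans_lt (by positivity), (hw u v h).2.trans_lt hWK]
  refine (card_sparseSketches_le z (by rw [Fintype.card_fin]; exact hn.le) hK hD _ _).trans
    (Nat.pow_le_pow_right two_pos ?_)
  rw [Fintype.card_fin]
  exact encodingLength_le hs₀ hl

end Parameters

section Bounds

variable {n : ℕ} {ε W : ℝ}

lemma cutW_eq_cutWeight (w : Fin n → Fin n → ℝ) (S : Finset (Fin n)) :
    cutW w S = cutWeight w S := by
  have h_filter : ({p | p.1 ∈ S ∧ p.2 ∉ S} : Finset (Fin n × Fin n)) = S ×ˢ Sᶜ := by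
    ext
    simp
  rw [cutW, cutWeight, crossWeight, h_filter, sum_product]

lemma two_le_log (hn : 31 ≤ n) : 2 ≤ Real.log n := by
  have h_log : Real.log (2 ^ 4 : ℕ) ≤ Real.log n := log_natCast_mono (by lia)
  rw [Nat.cast_pow, Real.log_pow] at h_log
  push_cast at h_log
  linarith [Real.log_two_gt_d9]

lemma natLog_mul_log_le_log {b : ℕ} {x : ℝ} (hx : 1 ≤ x) :
    Nat.log b ⌊x⌋₊ * Real.log b ≤ Real.log x := by
  rcases b.eq_zero_or_pos with rfl | hb
  · simpa using Real.log_nonneg hx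
  have h_floor : ⌊x⌋₊ ≠ 0 := (Nat.floor_pos.mpr hx).ne'
  rw [← Real.log_pow]
  refine Real.log_le_log (by positivity) ?_
  calc ((b : ℝ) ^ Nat.log b ⌊x⌋₊) ≤ ⌊x⌋₊ := by exact_mod_cast Nat.pow_log_le_self b h_floor
    _ ≤ x := Nat.floor_le (by linarith)

lemma exists_lt_two_pow_and_le_log (hn : 31 ≤ n) :
    ∃ l : ℕ, 0 < l ∧ n < 2 ^ l ∧ l ≤ 2 * Real.log n := by
  refine ⟨Nat.log 2 n + 1, Nat.succ_pos _, Nat.lt_pow_succ_log_self one_lt_two n, ?_⟩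
  have h_log := natLog_mul_log_le_log (b := 2) (x := n) (by exact_mod_cast (by lia : 1 ≤ n))
  rw [Nat.floor_natCast] at h_log
  push_cast at h_log ⊢
  nlinarith [two_le_log hn, Real.log_two_gt_d9]

lemma log_and_log_log_ge (hW : 4 ≤ W) :
    1.38 ≤ Real.log W ∧ 0.27 ≤ Real.log (Real.log W) := by
  have h_log : 1.38 ≤ Real.log W := by
    calc 1.38 ≤ 2 * Real.log 2 := by linarith [Real.log_two_gt_d9]
      _ = Real.log (2 ^ 2) := by rw [Real.log_pow]; norm_num
      _ ≤ Real.log W := Real.log_le_log (by norm_num) (by linarith)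
  refine ⟨h_log, ?_⟩
  calc (0.27 : ℝ) ≤ 1 - 1.38⁻¹ := by norm_num
    _ ≤ 1 - (Real.log W)⁻¹ := by gcongr
    _ ≤ Real.log (Real.log W) := Real.one_sub_inv_le_log_of_pos (by linarith)

lemma exists_pow_gt_and_le_log_log (hn : 31 ≤ n) (hW : 4 ≤ W) :
    ∃ K k : ℕ, W < (n : ℝ) ^ K ∧ K + 1 ≤ 2 ^ k ∧ k + 1 ≤ 20 * Real.log (Real.log W) := by
  obtain ⟨h_log, h_loglog⟩ := log_and_log_log_ge hW
  set K := Nat.log n ⌊W⌋₊ + 1 with hK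
  refine ⟨K, Nat.log 2 (K + 1) + 1, ?_, (Nat.lt_pow_succ_log_self one_lt_two _).le, ?_⟩
  · exact_mod_cast (Nat.floor_lt (by linarith)).mp
      (Nat.lt_pow_succ_log_self (by lia : 1 < n) ⌊W⌋₊)
  have h_levels : ((K + 1 : ℕ) : ℝ) ≤ 4 * Real.log W := by
    have h_natLog := natLog_mul_log_le_log (b := n) (x := W) (by linarith)
    rw [hK]
    push_cast
    nlinarith [two_le_log hn]
  have h_bits : Nat.log 2 (K + 1) * Real.log 2 ≤ 2 * Real.log 2 + Real.log (Real.log W) := by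
    calc Nat.log 2 (K + 1) * Real.log 2 ≤ Real.log (K + 1 : ℕ) := by
          have h_natLog := natLog_mul_log_le_log (b := 2) (x := (K + 1 : ℕ)) (by simp)
          rwa [Nat.floor_natCast] at h_natLog
      _ ≤ Real.log (2 ^ 2 * Real.log W) := Real.log_le_log (by positivity) (by linarith)
      _ = 2 * Real.log 2 + Real.log (Real.log W) := by
          rw [Real.log_mul (by norm_num) (by linarith), Real.log_pow, Nat.cast_ofNat]
  push_cast
  nlinarith [Real.log_two_gt_d9, Real.log_two_lt_d9]

lemma exists_sampleCount {l : ℕ} (hl : 0 < l) (hε₀ : 0 < ε) (hε₁ : ε ≤ 1) :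
    ∃ s : ℕ, 0 < s ∧ 96 * l ≤ ε * s ∧ s ≤ 97 * l * ε⁻¹ := by
  have hl' : (1 : ℝ) ≤ l := by exact_mod_cast hl
  refine ⟨⌈96 * l * ε⁻¹⌉₊, Nat.ceil_pos.mpr (by positivity), ?_, ?_⟩
  · calc (96 * l : ℝ) = ε * (96 * l * ε⁻¹) := by field_simp
      _ ≤ ε * ⌈96 * l * ε⁻¹⌉₊ := by gcongr; exact Nat.le_ceil _
  · have h_one : 1 ≤ l * ε⁻¹ := one_le_mul_of_one_le_of_one_le hl' ((one_le_inv₀ hε₀).mpr hε₁)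
    linarith [Nat.ceil_lt_add_one (a := 96 * l * ε⁻¹) (by positivity)]

lemma sketchSize_le {l s k : ℕ} {x L : ℝ} (hx : 1 ≤ x) (hL : 0 ≤ L) (hε : 0 < ε) (hl : l ≤ 2 * x)
    (hs : s ≤ 97 * l * ε⁻¹) (hk : k + 1 ≤ 20 * L) :
    ((6000 * n * s * l ^ 3 * (k + 1) : ℕ) : ℝ) ≤
      10 ^ 9 * n * ε⁻¹ * x ^ (10 ^ 9 : ℝ) * L := by
  have h_pow : x ^ 4 ≤ x ^ (10 ^ 9 : ℝ) := by
    rw [← Real.rpow_natCast]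
    exact Real.rpow_le_rpow_of_exponent_le hx (by norm_num)
  push_cast
  calc (6000 * n * s * l ^ 3 * (k + 1) : ℝ) ≤ 6000 * n * (97 * l * ε⁻¹) * l ^ 3 * (20 * L) := by
        gcongr
    _ = 11640000 * (n * ε⁻¹ * L) * l ^ 4 := by ring
    _ ≤ 11640000 * (n * ε⁻¹ * L) * (2 * x) ^ 4 := by gcongr
    _ = 186240000 * (n * ε⁻¹ * L) * x ^ 4 := by ring
    _ ≤ 10 ^ 9 * (n * ε⁻¹ * L) * x ^ (10 ^ 9 : ℝ) := by gcongr; norm_num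
    _ = 10 ^ 9 * n * ε⁻¹ * x ^ (10 ^ 9 : ℝ) * L := by ring

end Bounds

end CutSketch

theorem stmt_6 :
    ∃ C : ℝ, 0 < C ∧
      ∀ n : ℕ, 2 ≤ n → ∀ ε : ℝ, 1 / (n : ℝ) < ε → ε < 1 / 30 →
      ∀ W : ℝ, 4 ≤ W →
      ∃ (m K : ℕ) (ρ : Fin K → ℝ)
        (ske : (Fin n → Fin n → ℝ) → Fin K → (Fin m → Bool))
        (est : Finset (Fin n) → (Fin m → Bool) → Fin K → ℝ),
        (∀ r, 0 ≤ ρ r) ∧ (∑ r, ρ r) = 1 ∧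
        (m : ℝ) ≤ C * n * ε⁻¹ * Real.log n ^ C * Real.log (Real.log W) ∧
        ∀ w : Fin n → Fin n → ℝ,
          (∀ u v, w u v = w v u) → (∀ u, w u u = 0) →
          (∀ u v, w u v ≠ 0 → 1 ≤ w u v ∧ w u v ≤ W) →
          ∀ S : Finset (Fin n),
            1 - 1 / (n : ℝ) ≤
              ∑ r ∈ Finset.univ.filter (fun r : Fin K =>
                (1 - C * ε) * cutW w S ≤ est S (ske w r) r ∧
                  est S (ske w r) r ≤ (1 + C * ε) * cutW w S), ρ r := by
  refine ⟨10 ^ 9, by norm_num, fun n _ ε hε₁ hε₂ W hW ↦ ?_⟩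
  have hε : 0 < ε := hε₁.trans' (by positivity)
  have hn : 31 ≤ n := by
    have : (30 : ℝ) < n := lt_of_one_div_lt_one_div (by positivity) (hε₁.trans hε₂)
    exact_mod_cast this
  obtain ⟨l, hl₀, hnl, hl⟩ := CutSketch.exists_lt_two_pow_and_le_log hn
  obtain ⟨K, k, hWK, hKk, hk⟩ := CutSketch.exists_pow_gt_and_le_log_log hn hW
  obtain ⟨s, hs₀, hls, hs⟩ := CutSketch.exists_sampleCount hl₀ hε (by linarith)
  obtain ⟨N, ρ, ske, est, hρ₀, hρ₁, h_est⟩ :=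
    CutSketch.exists_cutScheme hs₀ (by lia) hnl hWK hKk hε₁.le hls
  refine ⟨_, N, ρ, ske, est, hρ₀, hρ₁, ?_, fun w hsymm _ hw S ↦ ?_⟩
  · have h_log : 1 ≤ Real.log n := one_le_two.trans (CutSketch.two_le_log hn)
    have h_loglog := (CutSketch.log_and_log_log_ge hW).2
    exact CutSketch.sketchSize_le h_log (by linarith) hε hl hs hk
  refine (h_est w ⟨hsymm, hw⟩ S).trans
    (Finset.sum_le_sum_of_subset_of_nonneg (fun r hr ↦ ?_) fun r _ _ ↦ hρ₀ r)
  have h_cut : 0 ≤ ε * CutSketch.cutWeight w S := mul_nonneg hε.le <|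
    CutSketch.cutWeight_nonneg
      (CutSketch.nonneg_of_ne_zero_imp_one_le fun u v h ↦ (hw u v h).1) S
  simp only [Finset.mem_filter_univ, CutSketch.cutW_eq_cutWeight] at hr ⊢
  constructor <;> linarith [abs_le.mp hr]
end

section
/- There is an absolute constant c > 0 such that the following holds for every integer n ≥ 4 and every ε ∈ [2/n, 1/2]. Suppose (R, ρ, ske, est) is a randomized sketching scheme of size s bits for simple unweighted graphs on n vertices such that for every such graph G and for every subset S of the vertices, with probability at least 9/10 over the seed r drawn from ρ, the value est(S, ske(G,r), r) lies in [(1−ε)·|∂_G(S,S̄)|, (1+ε)·|∂_G(S,S̄)|]. Then s ≥ c·n/ε. -/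
open scoped Classical

/-- Number of edges of `G` with exactly one endpoint in `S`. -/
noncomputable def cutSize {n : ℕ} (G : SimpleGraph (Fin n)) (S : Finset (Fin n)) : ℕ :=
  (Finset.univ.filter (fun p : Fin n × Fin n => p.1 ∈ S ∧ p.2 ∉ S ∧ G.Adj p.1 p.2)).card

/-!
A sketch that approximates every cut reveals each potential edge of the graph. Indeed, the sizes of
the cuts around `{u}`, `{v}` and `{u, v}` determine whether `u` and `v` are adjacent, because
`deg u + deg v - cut {u, v}` is twice the indicator of this. If the graph is a subgraph of a fixed
host graph with degrees at most `k`, estimating the three cuts up to a factor `1 ± ε` gives an error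
of about `4 k ε`, so that `k` can be as large as `1 / (4 ε)`. Packing disjoint cliques gives a host
graph with about `n k` edges, and the sketches of its subgraphs encode arbitrary bit strings indexed
by these edges in such a way that each single bit is decoded with a constant advantage over
guessing.

Such an encoding cannot compress. By Jensen's inequality, an advantage `δ` for each of `N` bits
forces the mean of `exp (δ * correlation)` to be at least `exp (δ ^ 2 * N)`. For a fixed decoded
string, the mean over the uniform bit string is `cosh δ ^ N ≤ exp (δ ^ 2 / 2 * N)`, so there must be
at least `exp (δ ^ 2 / 2 * N)` messages.
-/

open Finset Real

section UnionBound

variable {R κ : Type*} [Fintype R] {ρ : R → ℝ}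

lemma sum_filter_add_sum_filter_le_one_add (hρ : ρ ∈ stdSimplex ℝ R) {P Q T : R → Prop}
    [DecidablePred P] [DecidablePred Q] [DecidablePred T] (hPQT : ∀ r, P r → Q r → T r) :
    ∑ r with P r, ρ r + ∑ r with Q r, ρ r ≤ 1 + ∑ r with T r, ρ r := by
  rw [← sum_union_inter, ← filter_and, ← hρ.2]
  refine add_le_add ?_ ?_ <;> refine sum_le_sum_of_subset_of_nonneg ?_ fun r _ _ ↦ hρ.1 r
  · exact subset_univ _
  · exact monotone_filter_right _ fun r _ hr ↦ hPQT r hr.1 hr.2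

lemma one_sub_card_mul_le_sum_filter (hρ : ρ ∈ stdSimplex ℝ R) (J : Finset κ) {p : ℝ}
    {P : κ → R → Prop} [∀ j, DecidablePred (P j)] (hP : ∀ j ∈ J, p ≤ ∑ r with P j r, ρ r)
    {T : R → Prop} [DecidablePred T] (hPT : ∀ r, (∀ j ∈ J, P j r) → T r) :
    1 - #J * (1 - p) ≤ ∑ r with T r, ρ r := by
  induction J using Finset.induction_on generalizing T with
  | empty => simp [hρ.2, filter_true_of_mem fun r _ ↦ hPT r (by simp)]
  | insert j J hj ih =>
    simp only [forall_mem_insert] at hP hPT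
    have bound_J := ih hP.2 (T := fun r ↦ ∀ j ∈ J, P j r) fun _ ↦ id
    have bound_insert := sum_filter_add_sum_filter_le_one_add hρ (fun r hj hJ ↦ hPT r ⟨hj, hJ⟩)
    rw [card_insert_of_notMem hj, Nat.cast_add_one]
    linarith [hP.1]

end UnionBound

section RandomAccess

variable {ι R W : Type*} [Fintype ι] [Fintype R] [Fintype W] {ρ : R → ℝ} {δ : ℝ}

/-- The correlation of two bit strings read as `±1` vectors: the number of agreements minus the
number of disagreements. -/
noncomputable def correlation (y x : ι → Bool) : ℝ :=
  ∑ i, if y i = x i then 1 else -1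

lemma sum_exp_mul_correlation (t : ℝ) (y : ι → Bool) :
    ∑ x, exp (t * correlation y x) = (2 * cosh t) ^ Fintype.card ι := by
  have sum_bit (b : Bool) : ∑ a, exp (t * if b = a then 1 else -1) = 2 * cosh t := by
    cases b <;> simp [cosh_eq] <;> ring
  calc ∑ x, exp (t * correlation y x)
      = ∑ x : ι → Bool, ∏ i, exp (t * if y i = x i then 1 else -1) := by
        simp only [correlation, mul_sum, exp_sum]
    _ = ∏ i, ∑ a, exp (t * if y i = a then 1 else -1) :=
        (Fintype.prod_sum fun i a ↦ exp (t * if y i = a then 1 else -1)).symm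
    _ = (2 * cosh t) ^ Fintype.card ι := by simp only [sum_bit, prod_const, card_univ]

lemma sum_exp_mul_correlation_le (t : ℝ) (y : ι → Bool) :
    ∑ x, exp (t * correlation y x) ≤ 2 ^ Fintype.card ι * exp (t ^ 2 / 2 * Fintype.card ι) := by
  rw [sum_exp_mul_correlation, mul_pow, mul_comm (t ^ 2 / 2), exp_nat_mul]
  gcongr
  exact cosh_le_exp_half_sq t

lemma sum_exp_mul_correlation_decode_le (t : ℝ) (enc : (ι → Bool) → W) (dec : W → ι → Bool) :
    ∑ x, exp (t * correlation (dec (enc x)) x) ≤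
      Fintype.card W * (2 ^ Fintype.card ι * exp (t ^ 2 / 2 * Fintype.card ι)) := calc
  _ ≤ ∑ x, ∑ w, exp (t * correlation (dec w) x) := by
      gcongr with x
      exact single_le_sum (f := fun w ↦ exp (t * correlation (dec w) x))
        (fun w _ ↦ (exp_pos _).le) (mem_univ (enc x))
  _ = ∑ w, ∑ x, exp (t * correlation (dec w) x) := sum_comm
  _ ≤ ∑ _w : W, 2 ^ Fintype.card ι * exp (t ^ 2 / 2 * Fintype.card ι) := by
      gcongr with w
      exact sum_exp_mul_correlation_le t (dec w)
  _ = _ := by simp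

lemma mul_card_le_sum_mul_correlation (hρ : ρ ∈ stdSimplex ℝ R) {y : R → ι → Bool} {x : ι → Bool}
    (h : ∀ i, (1 + δ) / 2 ≤ ∑ r with y r i = x i, ρ r) :
    δ * Fintype.card ι ≤ ∑ r, ρ r * correlation (y r) x := by
  have bit_mean (i : ι) : δ ≤ ∑ r, ρ r * if y r i = x i then 1 else -1 := by
    have := sum_filter_add_sum_filter_not univ (fun r ↦ y r i = x i) ρ
    simp only [mul_ite, mul_one, mul_neg, sum_ite, sum_neg_distrib]
    linarith [h i, hρ.2]
  calc δ * Fintype.card ι = ∑ _i : ι, δ := by simp [mul_comm]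
    _ ≤ ∑ i, ∑ r, ρ r * if y r i = x i then 1 else -1 := by gcongr with i; exact bit_mean i
    _ = ∑ r, ρ r * correlation (y r) x := by rw [sum_comm]; simp only [correlation, mul_sum]

lemma exp_mul_card_le_sum_mul_exp_correlation (hρ : ρ ∈ stdSimplex ℝ R) (hδ : 0 ≤ δ)
    {y : R → ι → Bool} {x : ι → Bool} (h : ∀ i, (1 + δ) / 2 ≤ ∑ r with y r i = x i, ρ r) :
    exp (δ ^ 2 * Fintype.card ι) ≤ ∑ r, ρ r * exp (δ * correlation (y r) x) := calc
  _ ≤ exp (∑ r, ρ r * (δ * correlation (y r) x)) := by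
      have := mul_le_mul_of_nonneg_left (mul_card_le_sum_mul_correlation hρ h) hδ
      rw [mul_sum] at this
      simpa only [sq, mul_assoc, mul_left_comm δ (ρ _)] using exp_le_exp.2 this
  _ ≤ ∑ r, ρ r * exp (δ * correlation (y r) x) :=
      convexOn_exp.map_sum_le (fun r _ ↦ hρ.1 r) hρ.2 (fun _ _ ↦ Set.mem_univ _)

theorem sq_div_two_mul_card_le_log_card (hρ : ρ ∈ stdSimplex ℝ R) (hδ : 0 ≤ δ)
    {enc : (ι → Bool) → R → W} {dec : W → R → ι → Bool}
    (h : ∀ x i, (1 + δ) / 2 ≤ ∑ r with dec (enc x r) r i = x i, ρ r) :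
    δ ^ 2 / 2 * Fintype.card ι ≤ log (Fintype.card W) := by
  set N := Fintype.card ι
  have moment_bounds : 2 ^ N * exp (δ ^ 2 * N) ≤
      Fintype.card W * (2 ^ N * exp (δ ^ 2 / 2 * N)) := calc
    2 ^ N * exp (δ ^ 2 * N) = ∑ _x : ι → Bool, exp (δ ^ 2 * N) := by simp [N]
    _ ≤ ∑ x, ∑ r, ρ r * exp (δ * correlation (dec (enc x r) r) x) := by
        gcongr with x
        exact exp_mul_card_le_sum_mul_exp_correlation hρ hδ (h x)
    _ = ∑ r, ρ r * ∑ x, exp (δ * correlation (dec (enc x r) r) x) := by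
        simp only [mul_sum]; exact sum_comm
    _ ≤ ∑ r, ρ r * (Fintype.card W * (2 ^ N * exp (δ ^ 2 / 2 * N))) := by
        gcongr with r
        · exact hρ.1 r
        · exact sum_exp_mul_correlation_decode_le δ (enc · r) (dec · r)
    _ = _ := by rw [← sum_mul, hρ.2, one_mul]
  have exp_le_card : exp (δ ^ 2 / 2 * N) ≤ Fintype.card W := by
    refine le_of_mul_le_mul_right (a := 2 ^ N * exp (δ ^ 2 / 2 * N)) ?_ (by positivity)
    rwa [mul_left_comm, ← exp_add, ← add_mul, add_halves]
  exact (le_log_iff_exp_le ((exp_pos _).trans_le exp_le_card)).2 exp_le_card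

end RandomAccess

section Graph

variable {V : Type*} {G H : SimpleGraph V} {u v : V} {k : ℕ}

lemma card_interedges_union_left [DecidableEq V] (G : SimpleGraph V) {S S' : Finset V}
    (h : Disjoint S S') (T : Finset V) :
    #(G.interedges (S ∪ S') T) = #(G.interedges S T) + #(G.interedges S' T) := by
  rw [← card_union_of_disjoint (G.interedges_disjoint_left h T)]
  congr 1
  ext
  simp [SimpleGraph.mem_interedges_iff, or_and_right]

lemma card_interedges_union_right [DecidableEq V] (G : SimpleGraph V) (S : Finset V)
    {T T' : Finset V} (h : Disjoint T T') :
    #(G.interedges S (T ∪ T')) = #(G.interedges S T) + #(G.interedges S T') := by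
  rw [← card_union_of_disjoint (G.interedges_disjoint_right S h)]
  congr 1
  ext
  simp [SimpleGraph.mem_interedges_iff, or_and_right, and_or_left]

lemma card_interedges_comm (G : SimpleGraph V) (S T : Finset V) :
    #(G.interedges S T) = #(G.interedges T S) :=
  have := G.symm
  Rel.card_interedges_comm S T

lemma card_interedges_compl_add_card_interedges_compl [Fintype V] [DecidableEq V]
    (G : SimpleGraph V) {S T : Finset V} (hST : Disjoint S T) :
    #(G.interedges S Sᶜ) + #(G.interedges T Tᶜ) =
      #(G.interedges (S ∪ T) (S ∪ T)ᶜ) + 2 * #(G.interedges S T) := by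
  have compl_left : Sᶜ = T ∪ (S ∪ T)ᶜ := by
    rw [compl_union, union_inter_distrib_left, union_compl, inter_univ,
      union_eq_right.2 (subset_compl_iff_disjoint_left.2 hST)]
  have compl_right : Tᶜ = S ∪ (S ∪ T)ᶜ := by
    rw [compl_union, union_inter_distrib_left, union_compl, univ_inter,
      union_eq_right.2 (subset_compl_iff_disjoint_right.2 hST)]
  rw [compl_left, compl_right,
    card_interedges_union_right G S (disjoint_compl_right.mono_left subset_union_right),
    card_interedges_union_right G T (disjoint_compl_right.mono_left subset_union_left),
    card_interedges_union_left G hST, card_interedges_comm G T S]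
  ring

lemma card_interedges_singleton_compl [Fintype V] [DecidableEq V] (G : SimpleGraph V) (v : V) :
    #(G.interedges {v} {v}ᶜ) = G.degree v := by
  rw [SimpleGraph.interedges_def, singleton_product, filter_map, card_map,
    ← SimpleGraph.card_neighborFinset_eq_degree]
  congr 1
  ext w
  simpa using fun h ↦ G.ne_of_adj h.symm

lemma card_interedges_singleton_singleton (G : SimpleGraph V) (u v : V) :
    #(G.interedges {u} {v}) = if G.Adj u v then 1 else 0 := by
  rw [SimpleGraph.interedges_def, singleton_product_singleton, filter_singleton]
  split_ifs <;> simp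

lemma degree_add_degree_eq [Fintype V] [DecidableEq V] (G : SimpleGraph V) (huv : u ≠ v) :
    G.degree u + G.degree v =
      #(G.interedges {u, v} {u, v}ᶜ) + 2 * if G.Adj u v then 1 else 0 := by
  have := card_interedges_compl_add_card_interedges_compl G (disjoint_singleton.2 huv)
  rwa [card_interedges_singleton_compl, card_interedges_singleton_compl, ← insert_eq,
    card_interedges_singleton_singleton] at this

lemma degree_add_one_le_of_le [Fintype V] (hGH : G ≤ H) (huv : H.Adj u v) :
    G.degree u + 1 ≤ H.degree u + if G.Adj u v then 1 else 0 := by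
  split_ifs with h
  · gcongr
    exact SimpleGraph.degree_le_of_le hGH
  · refine card_lt_card ⟨fun w hw ↦ ?_, fun hsub ↦ h ?_⟩
    · simpa using hGH (by simpa using hw)
    · simpa using hsub (by simpa using huv)

lemma degree_map_le {U : Type*} [Fintype U] {G : SimpleGraph U} (f : U ↪ V)
    (hG : ∀ a, G.degree a ≤ k) (v : V) [Fintype ((G.map f).neighborSet v)] :
    (G.map f).degree v ≤ k := by
  by_cases hv : ∃ a, f a = v
  · obtain ⟨a, rfl⟩ := hv
    refine le_trans (card_le_card (t := (G.neighborFinset a).map f) fun w hw ↦ ?_)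
      ((card_map f).trans_le (hG a))
    simpa using hw
  · refine le_trans (card_eq_zero.2 ?_).le k.zero_le
    ext w
    simp only [SimpleGraph.mem_neighborFinset, SimpleGraph.map_adj, notMem_empty, iff_false]
    rintro ⟨a, -, -, ha, -⟩
    exact hv ⟨a, ha⟩

lemma exists_regular_graph_prod (m k : ℕ) :
    ∃ G : SimpleGraph (Fin m × Fin (k + 1)), ∀ a, G.degree a = k := by
  refine ⟨⊥ □ ⊤, fun a ↦ ?_⟩
  rw [SimpleGraph.degree_boxProd]
  simp

lemma exists_degree_le_and_card_mul_le (V : Type*) [Fintype V] (hk : k + 1 ≤ Fintype.card V) :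
    ∃ H : SimpleGraph V, (∀ v, H.degree v ≤ k) ∧ Fintype.card V * k ≤ 4 * #H.edgeFinset := by
  set m := Fintype.card V / (k + 1)
  obtain ⟨f⟩ : Nonempty (Fin m × Fin (k + 1) ↪ V) :=
    Function.Embedding.nonempty_of_card_le (by simpa using Nat.div_mul_le_self _ _)
  obtain ⟨G, regular⟩ := exists_regular_graph_prod m k
  have handshake : m * (k + 1) * k = 2 * #G.edgeFinset := by
    simpa [regular] using G.sum_degrees_eq_twice_card_edges
  have half_covered : Fintype.card V ≤ 2 * (m * (k + 1)) := calc
    _ ≤ (k + 1) * (m + 1) := (Nat.lt_mul_div_succ _ k.succ_pos).le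
    _ ≤ (k + 1) * (m + m) := by gcongr; exact (Nat.one_le_div_iff k.succ_pos).2 hk
    _ = 2 * (m * (k + 1)) := by ring
  have many_edges : Fintype.card V * k ≤ 4 * #(G.map f).edgeFinset := calc
    _ ≤ 2 * (m * (k + 1)) * k := by gcongr
    _ = 4 * #G.edgeFinset := by linarith
    _ = 4 * #(G.map f).edgeFinset := by rw [SimpleGraph.card_edgeFinset_map f G]
  refine ⟨G.map f, fun v ↦ ?_, ?_⟩
  · convert degree_map_le f (fun a ↦ (regular a).le) v
  · convert many_edges

end Graph

section CutSketch

variable {V R W : Type*} {G H : SimpleGraph V} {ρ : R → ℝ} {ε p : ℝ} {k : ℕ}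

/-- The combination `est {u} + est {v} - est {u, v}` for `e = s(u, v)`. For exact cut sizes it is
`2` if `e` is an edge and `0` otherwise. -/
noncomputable def edgeStatistic (est : Finset V → ℝ) (e : Sym2 V) : ℝ :=
  ∑ u ∈ e.toFinset, est {u} - est e.toFinset

/-- The cuts whose sizes enter `edgeStatistic`. -/
noncomputable def edgeQueries (e : Sym2 V) : Finset (Finset V) :=
  insert e.toFinset (e.toFinset.image fun u ↦ {u})

lemma card_edgeQueries_le (e : Sym2 V) : #(edgeQueries e) ≤ 3 := calc
  _ ≤ #(e.toFinset.image fun u ↦ ({u} : Finset V)) + 1 := card_insert_le ..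
  _ ≤ 2 + 1 := by
    gcongr
    refine card_image_le.trans ?_
    rw [e.card_toFinset]
    split_ifs <;> simp

/-- The subgraph of `H` whose edges are those marked by the bit string `x`. -/
def edgeSubgraph (H : SimpleGraph V) (x : H.edgeSet → Bool) : SimpleGraph V :=
  SimpleGraph.fromEdgeSet (Subtype.val '' {e | x e = true})

lemma edgeSubgraph_le (H : SimpleGraph V) (x : H.edgeSet → Bool) : edgeSubgraph H x ≤ H := by
  rw [edgeSubgraph, SimpleGraph.fromEdgeSet_le]
  rintro _ ⟨⟨e, -, rfl⟩, -⟩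
  exact e.2

lemma mem_edgeSet_edgeSubgraph (x : H.edgeSet → Bool) (e : H.edgeSet) :
    (e : Sym2 V) ∈ (edgeSubgraph H x).edgeSet ↔ x e = true := by
  simp [edgeSubgraph, H.not_isDiag_of_mem_edgeSet e.2]

variable [Fintype V] [Fintype R]

/-- `est S` approximates the size of the cut `(S, Sᶜ)` of `G` up to a factor `1 ± ε`. -/
def ApproximatesCut (G : SimpleGraph V) (ε : ℝ) (est : Finset V → ℝ) (S : Finset V) : Prop :=
  (1 - ε) * #(G.interedges S Sᶜ) ≤ est S ∧ est S ≤ (1 + ε) * #(G.interedges S Sᶜ)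

/-- A randomized cut sketch with messages in `W` and seeds distributed according to `ρ`: for each
graph `G` and each `S`, the value estimated from the sketch of `G` approximates the size of the
cut `(S, Sᶜ)` with probability at least `p`. -/
def IsCutSketch (ρ : R → ℝ) (ε p : ℝ) (ske : SimpleGraph V → R → W)
    (est : Finset V → W → R → ℝ) : Prop :=
  ∀ G S, p ≤ ∑ r with ApproximatesCut G ε (est · (ske G r) r) S, ρ r

lemma abs_edgeStatistic_sub_le {est : Finset V → ℝ} {e : Sym2 V} (hGH : G ≤ H)
    (he : e ∈ H.edgeSet) (hH : ∀ v, H.degree v ≤ k) (hε : 0 ≤ ε)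
    (hest : ∀ S ∈ edgeQueries e, ApproximatesCut G ε est S) :
    |edgeStatistic est e - 2 * if e ∈ G.edgeSet then 1 else 0| ≤
      ε * (4 * k - 4 + 2 * if e ∈ G.edgeSet then 1 else 0) := by
  induction e with | h u v =>
  simp only [SimpleGraph.mem_edgeSet] at he ⊢
  rw [edgeStatistic, Sym2.toFinset_mk_eq, sum_pair he.ne]
  simp only [edgeQueries, Sym2.toFinset_mk_eq, forall_mem_insert, forall_mem_image, ApproximatesCut,
    card_interedges_singleton_compl, mem_singleton, forall_eq] at hest
  obtain ⟨⟨pair_lower, pair_upper⟩, ⟨u_lower, u_upper⟩, v_lower, v_upper⟩ := hest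
  have degree_sum := degree_add_degree_eq G he.ne
  have degree_u := (degree_add_one_le_of_le hGH he).trans (Nat.add_le_add_right (hH u) _)
  have degree_v := (degree_add_one_le_of_le hGH he.symm).trans (Nat.add_le_add_right (hH v) _)
  rw [G.adj_comm v u] at degree_v
  rw [← Nat.cast_inj (R := ℝ)] at degree_sum
  rw [← Nat.cast_le (α := ℝ)] at degree_u degree_v
  push_cast at degree_sum degree_u degree_v
  have total_error : ε * (G.degree u + G.degree v + #(G.interedges {u, v} {u, v}ᶜ)) ≤
      ε * (4 * k - 4 + 2 * if G.Adj u v then 1 else 0) :=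
    mul_le_mul_of_nonneg_left (by linarith) hε
  rw [abs_le]
  constructor <;> linarith

lemma le_edgeStatistic_iff_mem_edgeSet {est : Finset V → ℝ} {e : Sym2 V} (hGH : G ≤ H)
    (he : e ∈ H.edgeSet) (hH : ∀ v, H.degree v ≤ k) (hε : 0 ≤ ε) (hk : ε * (4 * k - 3) < 1)
    (hest : ∀ S ∈ edgeQueries e, ApproximatesCut G ε est S) :
    2 - ε * (4 * k - 2) ≤ edgeStatistic est e ↔ e ∈ G.edgeSet := by
  have error := abs_le.1 (abs_edgeStatistic_sub_le hGH he hH hε hest)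
  split_ifs at error with mem
  · exact iff_of_true (by linarith) mem
  · exact iff_of_false (by linarith) mem

variable [Fintype W] {ske : SimpleGraph V → R → W} {est : Finset V → W → R → ℝ}

theorem IsCutSketch.mul_card_edgeFinset_le_log_card (h : IsCutSketch ρ ε p ske est)
    (hρ : ρ ∈ stdSimplex ℝ R) (hε : 0 ≤ ε) (hp : 5 / 6 ≤ p) (hk : ε * (4 * k - 3) < 1)
    (hH : ∀ v, H.degree v ≤ k) :
    (6 * p - 5) ^ 2 / 2 * #H.edgeFinset ≤ log (Fintype.card W) := by
  rw [← SimpleGraph.card_edgeSet]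
  refine sq_div_two_mul_card_le_log_card hρ (by linarith)
    (enc := fun x ↦ ske (edgeSubgraph H x))
    (dec := fun w r e ↦ decide (2 - ε * (4 * k - 2) ≤ edgeStatistic (est · w r) e)) fun x e ↦ ?_
  set G := edgeSubgraph H x
  have card_queries : (#(edgeQueries (e : Sym2 V)) : ℝ) ≤ 3 := mod_cast card_edgeQueries_le e.1
  refine le_trans ?_ <|
    one_sub_card_mul_le_sum_filter hρ (edgeQueries e.1) (fun S _ ↦ h G S) fun r hr ↦ ?_
  · have p_le_one : p ≤ 1 := (h ⊥ ∅).trans <| hρ.2 ▸ sum_le_univ_sum_of_nonneg hρ.1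
    linarith [mul_le_mul_of_nonneg_right card_queries (sub_nonneg.2 p_le_one)]
  · rw [Bool.eq_iff_iff, decide_eq_true_iff, ← mem_edgeSet_edgeSubgraph]
    exact le_edgeStatistic_iff_mem_edgeSet (edgeSubgraph_le H x) e.2 hH hε hk hr

lemma exists_nat_near_min_inv {n : ℕ} (hn : 2 ≤ n) (hε0 : 0 < ε) (hε1 : ε < 1) :
    ∃ k : ℕ, k + 1 ≤ n ∧ ε * (4 * k - 3) < 1 ∧ min (n : ℝ) ε⁻¹ ≤ 5 * k := by
  set M := min (n : ℝ) ε⁻¹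
  have hM : 1 < M := lt_min (mod_cast hn) ((one_lt_inv₀ hε0).2 hε1)
  have k_pos : (1 : ℝ) ≤ ⌈(M - 1) / 4⌉₊ := mod_cast Nat.ceil_pos.2 (by linarith)
  have k_ge := Nat.le_ceil ((M - 1) / 4)
  have k_lt := Nat.ceil_lt_add_one (a := (M - 1) / 4) (by linarith)
  refine ⟨⌈(M - 1) / 4⌉₊, ?_, ?_, by linarith⟩
  · have : (M - 1) / 4 ≤ (n - 1 : ℕ) := by
      rw [Nat.cast_pred (by omega)]
      linarith [min_le_left (n : ℝ) ε⁻¹]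
    have := Nat.ceil_le.2 this
    omega
  · have : (4 * ⌈(M - 1) / 4⌉₊ - 3 : ℝ) < ε⁻¹ := by linarith [min_le_right (n : ℝ) ε⁻¹]
    simpa [hε0.ne'] using mul_lt_mul_of_pos_left this hε0

theorem stmt_10_general (h : IsCutSketch ρ ε p ske est) (hρ : ρ ∈ stdSimplex ℝ R)
    (hV : 2 ≤ Fintype.card V) (hε0 : 0 < ε) (hε1 : ε < 1) (hp : 5 / 6 ≤ p) :
    (6 * p - 5) ^ 2 / 40 * (Fintype.card V * min (Fintype.card V : ℝ) ε⁻¹) ≤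
      log (Fintype.card W) := by
  obtain ⟨k, k_lt_card, hk, min_le⟩ := exists_nat_near_min_inv hV hε0 hε1
  obtain ⟨H, hH, many_edges⟩ := exists_degree_le_and_card_mul_le V k_lt_card
  rify at many_edges
  calc (6 * p - 5) ^ 2 / 40 * (Fintype.card V * min (Fintype.card V : ℝ) ε⁻¹)
      ≤ (6 * p - 5) ^ 2 / 40 * (Fintype.card V * (5 * k)) := by gcongr
    _ = (6 * p - 5) ^ 2 / 8 * (Fintype.card V * k) := by ring
    _ ≤ (6 * p - 5) ^ 2 / 8 * (4 * #H.edgeFinset) := by gcongr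
    _ = (6 * p - 5) ^ 2 / 2 * #H.edgeFinset := by ring
    _ ≤ log (Fintype.card W) := h.mul_card_edgeFinset_le_log_card hρ hε0.le hp hk hH

lemma approximatesCut_iff_cutSize {n : ℕ} {G : SimpleGraph (Fin n)} {S : Finset (Fin n)}
    {est : Finset (Fin n) → ℝ} :
    ApproximatesCut G ε est S ↔
      (1 - ε) * cutSize G S ≤ est S ∧ est S ≤ (1 + ε) * cutSize G S := by
  have cutSize_eq : cutSize G S = #(G.interedges S Sᶜ) := by
    unfold cutSize
    congr 1
    ext
    simp [SimpleGraph.mem_interedges_iff]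
  rw [ApproximatesCut, cutSize_eq]
  congr!

end CutSketch

theorem stmt_10 :
    ∃ c : ℝ, 0 < c ∧
      ∀ (n : ℕ), 4 ≤ n → ∀ ε : ℝ, 2 / (n : ℝ) ≤ ε → ε ≤ 1 / 2 →
      ∀ (s : ℕ) (R : Type) [Fintype R] (ρ : R → ℝ),
        (∀ r, 0 ≤ ρ r) → (∑ r : R, ρ r) = 1 →
        ∀ (ske : SimpleGraph (Fin n) → R → (Fin s → Bool))
          (est : Finset (Fin n) → (Fin s → Bool) → R → ℝ),
          (∀ G : SimpleGraph (Fin n), ∀ S : Finset (Fin n),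
            (9 : ℝ) / 10 ≤
              ∑ r ∈ Finset.univ.filter (fun r : R =>
                (1 - ε) * (cutSize G S : ℝ) ≤ est S (ske G r) r ∧
                  est S (ske G r) r ≤ (1 + ε) * (cutSize G S : ℝ)), ρ r) →
          c * n / ε ≤ (s : ℝ) := by
  refine ⟨1 / 250, by norm_num, fun n hn ε hε_ge hε_le s R _ ρ hρ_nonneg hρ_sum ske est h ↦ ?_⟩
  have hε : 0 < ε := lt_of_lt_of_le (by positivity) hε_ge
  have inv_le : ε⁻¹ ≤ n := by
    rw [inv_le_comm₀ hε (by positivity), ← one_div]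
    exact le_trans (by gcongr; norm_num) hε_ge
  have sketch : IsCutSketch ρ ε (9 / 10) ske est := fun G S ↦ by
    simpa only [approximatesCut_iff_cutSize] using h G S
  have bound := stmt_10_general sketch ⟨hρ_nonneg, hρ_sum⟩ (by simpa using by omega) hε
    (by linarith) (by norm_num)
  calc 1 / 250 * n / ε = (6 * (9 / 10) - 5) ^ 2 / 40 * (n * ε⁻¹) := by ring
    _ ≤ s * Real.log 2 := by simpa [inv_le] using bound
    _ ≤ s := mul_le_of_le_one_right s.cast_nonneg (by linarith [Real.log_two_lt_d9])
end

section
/- For every finite simple undirected graph G = (V, E) and every real number s > 1, there exists an orientation of the edges of G such that, in the resulting directed graph, every directed edge (u, v) satisfies: the out-degree of u is less than s, or the out-degree of v is at least s − 1. -/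
open scoped Classical

/-- Out-degree of `u` in the orientation `D`. -/
noncomputable def outdeg {V : Type} [Fintype V] (D : V → V → Bool) (u : V) : ℕ :=
  (Finset.univ.filter (fun v => D u v = true)).card

/-! An orientation minimising the sum of the squared out-degrees satisfies
`outdeg u ≤ outdeg v + 1` on every arc `(u, v)`: reversing the arc moves one unit of out-degree
from `u` to `v`, which changes the sum of squares by `2 * (outdeg v + 1 - outdeg u)`. The same
orientation therefore works for all `s`. -/

section SumOfSquares

variable {ι R : Type*} [Fintype ι] [DecidableEq ι]

theorem sum_sq_add_single_sub_single [CommRing R] (f : ι → R) {i j : ι} (hij : i ≠ j) (t : R) :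
    ∑ k, (f k + (Pi.single j t : ι → R) k - (Pi.single i t : ι → R) k) ^ 2 =
      ∑ k, f k ^ 2 + 2 * t * (f j + t - f i) := by
  have expand_sq (k : ι) :
      (f k + (Pi.single j t : ι → R) k - (Pi.single i t : ι → R) k) ^ 2 =
        f k ^ 2 + (if k = j then 2 * t * f j + t ^ 2 else 0) -
          (if k = i then 2 * t * f i - t ^ 2 else 0) := by
    grind
  simp only [expand_sq, Finset.sum_sub_distrib, Finset.sum_add_distrib, Finset.sum_ite_eq',
    Finset.mem_univ, if_true]
  ring

end SumOfSquares

section Orientation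

variable {V : Type*} {G : SimpleGraph V} {D : V → V → Bool}

/-- `D` is an orientation of `G`, where `D u v = true` encodes that the edge `{u, v}` is directed
from `u` to `v`. -/
def IsOrientation (G : SimpleGraph V) (D : V → V → Bool) : Prop :=
  ∀ u v, (G.Adj u v ↔ (D u v = true ∨ D v u = true)) ∧ ¬ (D u v = true ∧ D v u = true)

theorem exists_isOrientation (G : SimpleGraph V) : ∃ D, IsOrientation G D := by
  refine ⟨fun u v ↦ decide (G.Adj u v ∧ WellOrderingRel u v), fun u v ↦ ?_⟩
  simp only [decide_eq_true_eq]
  refine ⟨⟨fun huv ↦ ?_, ?_⟩, fun h ↦ asymm h.1.2 h.2.2⟩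
  · exact (trichotomous_of WellOrderingRel u v).imp (⟨huv, ·⟩)
      (·.elim (absurd · huv.ne) (⟨huv.symm, ·⟩))
  · rintro (h | h)
    exacts [h.1, h.1.symm]

theorem IsOrientation.ne (hD : IsOrientation G D) {u v : V} (huv : D u v = true) : u ≠ v :=
  ((hD u v).1.2 (.inl huv)).ne

/-- The orientation obtained from `D` by reversing the edge between `u` and `v`, whichever its
direction. -/
noncomputable def reverseEdge (D : V → V → Bool) (u v : V) : V → V → Bool :=
  fun a b ↦ if s(a, b) = s(u, v) then D b a else D a b

theorem isOrientation_reverseEdge (hD : IsOrientation G D) (u v : V) :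
    IsOrientation G (reverseEdge D u v) := by
  intro a b
  simp only [reverseEdge, Sym2.eq_swap (a := b)]
  split_ifs
  · rw [G.adj_comm]
    exact hD b a
  · exact hD a b

end Orientation

section OutDegree

variable {V : Type} [Fintype V] {G : SimpleGraph V} {D : V → V → Bool}

theorem outdeg_eq_sum_ite (D : V → V → Bool) (u : V) :
    (outdeg D u : ℤ) = ∑ v, if D u v = true then 1 else 0 :=
  (Finset.sum_boole _ _).symm

theorem outdeg_reverseEdge {u v : V} (huv : D u v = true) (hvu : ¬ D v u = true) (x : V) :
    (outdeg (reverseEdge D u v) x : ℤ) =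
      outdeg D x + (Pi.single v 1 : V → ℤ) x - (Pi.single u 1 : V → ℤ) x := by
  have arc_indicator (y : V) : (if reverseEdge D u v x y = true then (1 : ℤ) else 0) =
      (if D x y = true then 1 else 0) + (if y = u then (Pi.single v 1 : V → ℤ) x else 0) -
        (if y = v then (Pi.single u 1 : V → ℤ) x else 0) := by
    have hne : u ≠ v := by
      rintro rfl
      exact hvu huv
    simp only [reverseEdge, Sym2.eq_iff, Pi.single_apply]
    grind
  simp only [outdeg_eq_sum_ite, arc_indicator, Finset.sum_sub_distrib, Finset.sum_add_distrib,
    Finset.sum_ite_eq', Finset.mem_univ, if_true]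

theorem IsOrientation.outdeg_le_outdeg_add_one_of_isMinOn (hD : IsOrientation G D)
    (hmin : IsMinOn (fun D ↦ ∑ x, (outdeg D x : ℤ) ^ 2) {D | IsOrientation G D} D)
    {u v : V} (huv : D u v = true) : outdeg D u ≤ outdeg D v + 1 := by
  have sum_sq_le := hmin (isOrientation_reverseEdge hD u v)
  simp only [Set.mem_ofPred_eq, outdeg_reverseEdge huv fun hvu ↦ (hD u v).2 ⟨huv, hvu⟩,
    sum_sq_add_single_sub_single _ (hD.ne huv)] at sum_sq_le
  lia

theorem stmt_12_general (G : SimpleGraph V) :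
    ∃ D, IsOrientation G D ∧ ∀ u v, D u v = true → outdeg D u ≤ outdeg D v + 1 := by
  obtain ⟨D, hD, hmin⟩ := Set.exists_min_image {D | IsOrientation G D}
    (fun D ↦ ∑ x, (outdeg D x : ℤ) ^ 2) (Set.toFinite _) (exists_isOrientation G)
  exact ⟨D, hD, fun _ _ ↦ hD.outdeg_le_outdeg_add_one_of_isMinOn hmin⟩

end OutDegree

theorem stmt_12 (V : Type) [Fintype V] [DecidableEq V] (G : SimpleGraph V)
    (s : ℝ) (hs : 1 < s) :
    ∃ D : V → V → Bool,
      -- `D` is an orientation of `G`: each edge gets exactly one direction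
      (∀ u v, (G.Adj u v ↔ (D u v = true ∨ D v u = true)) ∧
        ¬ (D u v = true ∧ D v u = true)) ∧
      -- every directed edge (u, v) has outdeg u < s or outdeg v ≥ s - 1
      (∀ u v, D u v = true →
        ((outdeg D u : ℝ) < s ∨ s - 1 ≤ (outdeg D v : ℝ))) := by
  obtain ⟨D, hD, hle⟩ := stmt_12_general G
  refine ⟨D, hD, fun u v huv ↦ (lt_or_ge (outdeg D u : ℝ) s).imp_right fun hsu ↦ ?_⟩
  have hle' : (outdeg D u : ℝ) ≤ outdeg D v + 1 := mod_cast hle u v huv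
  linarith
end
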